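/- arXiv:1611.01741 — 3 statements merged into one kernel-verified Lean document; each statement's English description precedes it below -/
import Mathlib

section
/- There exists an infinite family (T_n)_{n ∈ ℕ} of finite trees of diameter 4 such that for all m ≠ n the right-angled Artin groups G(T_m) and G(T_n) are not commensurable; that is, there are infinitely many commensurability classes among right-angled Artin groups defined by trees of diameter 4. -/
/-!
Let `T_n` be the tree with centre `c` having two neighbours `p_false` and `p_true`, where `p_false`
carries one leaf and `p_true` carries `3 ^ n` leaves. If `G(T_n)` and `G(T_m)` are commensurable,
then `3 ^ n ≤ 2 * 3 ^ m`, so different trees give groups that are not commensurable.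

*Structure of the groups.* The tree is bipartite, with parts `{p_false, p_true}` and the remaining
vertices. Killing one part of a bipartite graph gives a retraction onto the free group on the other
part, and the kernel is free on the conjugates of the killed vertices (`BipData.embed`). From this
one reads off centralizers of vertices (`BipData.centralizer_p`), and shows that the elements whose
centralizer is virtually non-abelian in a strong sense (`Rich`) are, for these trees, exactly the
conjugates of powers of the three vertices that are not leaves (`rich_classification` gives the
inclusion that is used). Richness is inherited by finite-index subgroups, so an isomorphism of
finite-index subgroups maps a power of a conjugate of `c`, `p_false` or `p_true` to another such
power.

*Local comparison.* Let `A` be a finite-index normal subgroup of `G(T_n)`, embedded with finite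
index in `G(T_m)`, and suppose that a power of a conjugate of `v` in `A` becomes a power of a
conjugate of `v'`. Dividing the centralizer of this element in `A` by its intersection with the
powers of the vertex yields finite-index subgroups of the free groups on the links of `v` and of
`v'` that are isomorphic (`Match`). The isomorphism preserves the conjugates of powers of
neighbours that are not leaves, but stretches the exponents. Two invariants are compared. The
Schreier index formula `rank_formula`, obtained here from first rational cohomology, gives
`index * (|link v| - 1) = index' * (|link v'| - 1)`. Weighting each conjugate by its stretch factor
turns a count of conjugates on one side into a count on the other (`Match.count`). Together they
show (`Setup.count`, `linkSum_eq`) that the average stretch factor of the conjugates of `c` adjacent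
to a given conjugate of `p_i` is `d i / d' i'` if this conjugate goes to one of `p_i'`, and
`2 * d i` if it goes to one of the centre; here `d i` is the number of leaves at `p_i`.

*Averaging.* Each conjugate of `c` is adjacent to conjugates of both `p_false` and `p_true`, so
averaging over the finite quotient by `A` gives the same mean stretch factor `S` from either side
(`sum_linkSum`). From `p_false`, which carries a single leaf, one gets `S ≤ 2`; from `p_true` one
gets `S ≥ 3 ^ n / 3 ^ m` (`linkSum_bounds`, `le_of_embed`).
-/

/-- The defining relators of the right-angled Artin group of a simplicial graph:
one commutator for each edge. -/
def raagRels {V : Type} (G : SimpleGraph V) : Set (FreeGroup V) :=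
  {r | ∃ u v : V, G.Adj u v ∧
    r = FreeGroup.of u * FreeGroup.of v * (FreeGroup.of u)⁻¹ * (FreeGroup.of v)⁻¹}

/-- The right-angled Artin group of a simplicial graph. -/
abbrev RAAG {V : Type} (G : SimpleGraph V) : Type := PresentedGroup (raagRels G)

/-- Two groups are (abstractly) commensurable if they have isomorphic
subgroups of finite index. -/
def GroupsCommensurable (G H : Type*) [Group G] [Group H] : Prop :=
  ∃ (A : Subgroup G) (B : Subgroup H),
    A.FiniteIndex ∧ B.FiniteIndex ∧ Nonempty (↥A ≃* ↥B)

namespace TreeRAAG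

/-! ### Free groups: roots, centralizers and free factors -/

section FreeGroupLemmas

variable {α : Type}

theorem commute_of_commute_zpow {u v : FreeGroup α} {n : ℤ} (hn : n ≠ 0)
    (h : Commute u (v ^ n)) : Commute u v := by
  have h1 : (u * v * u⁻¹) ^ n = v ^ n := by
    rw [conj_zpow, h.eq]; group
  have h2 : u * v * u⁻¹ = v := zpow_left_injective hn h1
  exact mul_inv_eq_iff_eq_mul.mp h2

/-- An element of a free group commuting with `v ≠ 1` has a power with non-zero exponent that is a power
of `v`. -/
theorem exists_zpow_eq_of_commute {u v : FreeGroup α} (h : Commute u v) (hv : v ≠ 1) :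
    ∃ a b : ℤ, a ≠ 0 ∧ u ^ a = v ^ b := by
  classical
  -- By the Nielsen–Schreier theorem the subgroup generated by `u` and `v` is free; being
  -- commutative it has rank at most one.
  let H : Subgroup (FreeGroup α) := Subgroup.closure {u, v}
  have hcomm : ∀ x y : H, x * y = y * x := by
    have : IsMulCommutative H := Subgroup.isMulCommutative_closure (by
      rintro x (rfl | rfl) y (rfl | rfl)
      · rfl
      · exact h.eq
      · exact h.eq.symm
      · rfl)
    exact fun x y => this.is_comm.comm x y
  let e := IsFreeGroup.toFreeGroup H
  have hsub : Subsingleton (IsFreeGroup.Generators H) := by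
    refine ⟨fun x y => ?_⟩
    by_contra hxy
    have h1 : FreeGroup.of x * FreeGroup.of y = FreeGroup.of y * FreeGroup.of x := by
      apply e.symm.injective
      rw [map_mul, map_mul]; exact hcomm _ _
    have h2 := congrArg FreeGroup.toWord h1
    simp [FreeGroup.toWord_mul, FreeGroup.toWord_of, hxy, Ne.symm hxy] at h2
  have hcyc : IsCyclic (FreeGroup (IsFreeGroup.Generators H)) := by
    rcases isEmpty_or_nonempty (IsFreeGroup.Generators H) with h0 | ⟨⟨x⟩⟩
    · infer_instance
    · have : Unique (IsFreeGroup.Generators H) := ⟨⟨x⟩, fun y => Subsingleton.elim _ _⟩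
      infer_instance
  obtain ⟨r, hr⟩ := hcyc.exists_generator
  have hu : u ∈ H := Subgroup.subset_closure (by simp)
  have hv' : v ∈ H := Subgroup.subset_closure (by simp)
  obtain ⟨p, hp⟩ := Subgroup.mem_zpowers_iff.mp (hr (e ⟨u, hu⟩))
  obtain ⟨q, hq⟩ := Subgroup.mem_zpowers_iff.mp (hr (e ⟨v, hv'⟩))
  have hq0 : q ≠ 0 := by
    rintro rfl
    rw [zpow_zero] at hq
    have : (⟨v, hv'⟩ : H) = 1 := e.injective (by rw [← hq, map_one])
    exact hv (congrArg Subtype.val this)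
  refine ⟨q, p, hq0, ?_⟩
  have : (⟨u, hu⟩ : H) ^ q = ⟨v, hv'⟩ ^ p := by
    apply e.injective
    rw [map_zpow, map_zpow, ← hp, ← hq, ← zpow_mul, ← zpow_mul, mul_comm]
  exact congrArg Subtype.val this

/-- Commutation is transitive on the non-trivial elements of a free group. -/
theorem commute_trans_of_ne_one {u v w : FreeGroup α} (hw : w ≠ 1) (hu : Commute u w)
    (hv : Commute v w) : Commute u v := by
  obtain ⟨a, b, ha, hab⟩ := exists_zpow_eq_of_commute hu hw
  have : Commute v (u ^ a) := hab ▸ hv.zpow_right b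
  exact (commute_of_commute_zpow ha this).symm

/-- The free factor of `FreeGroup α` generated by a set `T` of letters. -/
def factor (T : Set α) : Subgroup (FreeGroup α) := Subgroup.closure (FreeGroup.of '' T)

open Classical in
/-- The retraction of `FreeGroup α` onto the free factor `factor T`, killing all letters
outside `T`. -/
noncomputable def retr (T : Set α) : FreeGroup α →* FreeGroup α :=
  FreeGroup.lift fun a => if a ∈ T then FreeGroup.of a else 1

theorem of_mem_factor {T : Set α} {a : α} (h : a ∈ T) : FreeGroup.of a ∈ factor T :=
  Subgroup.subset_closure ⟨a, h, rfl⟩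

theorem factor_mono {A B : Set α} (h : A ⊆ B) : factor A ≤ factor B :=
  Subgroup.closure_mono (Set.image_mono h)

theorem retr_mem (T : Set α) (x : FreeGroup α) : retr T x ∈ factor T := by
  induction x using FreeGroup.induction_on with
  | C1 => simp
  | of a =>
    simp only [retr, FreeGroup.lift_apply_of]
    split_ifs with h
    · exact of_mem_factor h
    · exact one_mem _
  | inv_of a h => rw [map_inv]; exact inv_mem h
  | mul x y hx hy => rw [map_mul]; exact mul_mem hx hy

theorem retr_of_mem {T : Set α} {x : FreeGroup α} (h : x ∈ factor T) : retr T x = x := by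
  induction h using Subgroup.closure_induction with
  | mem y hy => obtain ⟨a, ha, rfl⟩ := hy; simp [retr, ha]
  | one => simp
  | mul x y _ _ hx hy => rw [map_mul, hx, hy]
  | inv x _ hx => rw [map_inv, hx]

theorem mem_factor_iff {T : Set α} {x : FreeGroup α} : x ∈ factor T ↔ retr T x = x :=
  ⟨retr_of_mem, fun h => h ▸ retr_mem T x⟩

theorem retr_mem_inter {A T : Set α} {x : FreeGroup α} (h : x ∈ factor A) :
    retr T x ∈ factor (T ∩ A) := by
  induction h using Subgroup.closure_induction with
  | mem y hy =>
    obtain ⟨a, ha, rfl⟩ := hy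
    simp only [retr, FreeGroup.lift_apply_of]
    split_ifs with h
    · exact of_mem_factor ⟨h, ha⟩
    · exact one_mem _
  | one => simp
  | mul x y _ _ hx hy => rw [map_mul]; exact mul_mem hx hy
  | inv x _ hx => rw [map_inv]; exact inv_mem hx

theorem mem_factor_of_zpow_mem {T : Set α} {x : FreeGroup α} {n : ℤ} (hn : n ≠ 0)
    (h : x ^ n ∈ factor T) : x ∈ factor T := by
  rw [mem_factor_iff] at h ⊢
  rw [map_zpow] at h
  exact zpow_left_injective hn h

/-- Free factors generated by letters are malnormal. -/
theorem factor_malnormal {T : Set α} {g x : FreeGroup α} (hx : x ≠ 1) (h1 : g * x * g⁻¹ ∈ factor T)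
    (h2 : x ∈ factor T) : g ∈ factor T := by
  have h3 : g * x * g⁻¹ = retr T g * x * (retr T g)⁻¹ := by
    have := retr_of_mem h1
    rw [map_mul, map_mul, map_inv, retr_of_mem h2] at this
    exact this.symm
  have h4 : Commute ((retr T g)⁻¹ * g) x := by
    have : g * x = retr T g * x * (retr T g)⁻¹ * g := by rw [← h3]; group
    change (retr T g)⁻¹ * g * x = x * ((retr T g)⁻¹ * g)
    rw [mul_assoc, this]; group
  obtain ⟨a, b, ha, hab⟩ := exists_zpow_eq_of_commute h4 hx
  have h5 : (retr T g)⁻¹ * g ∈ factor T :=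
    mem_factor_of_zpow_mem ha (hab ▸ zpow_mem h2 b)
  have := mul_mem (retr_mem T g) h5
  simpa using this

theorem mem_factor_singleton {t : α} {x : FreeGroup α} (h : x ∈ factor {t}) :
    ∃ k : ℤ, x = FreeGroup.of t ^ k := by
  rw [factor, Set.image_singleton, ← Subgroup.zpowers_eq_closure] at h
  obtain ⟨k, hk⟩ := Subgroup.mem_zpowers_iff.mp h
  exact ⟨k, hk.symm⟩

theorem of_zpow_mem_factor (t : α) (k : ℤ) : FreeGroup.of t ^ k ∈ factor {t} :=
  zpow_mem (of_mem_factor (T := {t}) (Set.mem_singleton t)) k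

theorem of_zpow_ne_one (t : α) {s : ℤ} (hs : s ≠ 0) : FreeGroup.of t ^ s ≠ 1 := by
  intro h
  have h1 : FreeGroup.of t ^ s = 1 ^ s := by rw [h, one_zpow]
  have h2 : FreeGroup.of t = 1 := zpow_left_injective hs h1
  exact FreeGroup.of_ne_one t h2

/-- The centralizer of a non-trivial power of a letter consists of the powers of this letter. -/
theorem eq_zpow_of_commute {t : α} {x : FreeGroup α} {s : ℤ} (hs : s ≠ 0)
    (h : Commute x (FreeGroup.of t ^ s)) : ∃ k : ℤ, x = FreeGroup.of t ^ k := by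
  obtain ⟨a, b, ha, hab⟩ := exists_zpow_eq_of_commute h (of_zpow_ne_one t hs)
  refine mem_factor_singleton (mem_factor_of_zpow_mem ha ?_)
  rw [hab]
  exact zpow_mem (of_zpow_mem_factor t s) b

theorem root_of_conj_zpow {t : α} {x h : FreeGroup α} {n j : ℤ} (hn : n ≠ 0)
    (e : x ^ n = h * FreeGroup.of t ^ j * h⁻¹) :
    ∃ k : ℤ, x = h * FreeGroup.of t ^ k * h⁻¹ := by
  have h1 : (h⁻¹ * x * h⁻¹⁻¹) ^ n = FreeGroup.of t ^ j := by
    rw [conj_zpow, e]; group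
  obtain ⟨k, hk⟩ := mem_factor_singleton
    (mem_factor_of_zpow_mem hn (h1 ▸ of_zpow_mem_factor t j))
  exact ⟨k, by rw [← hk]; group⟩

/-- An element conjugate into two free factors is conjugate into their intersection. -/
theorem conj_factor_inter {A B : Set α} {k x y : FreeGroup α} (hx : x * k * x⁻¹ ∈ factor A)
    (hy : y * k * y⁻¹ ∈ factor B) : ∃ z, z * k * z⁻¹ ∈ factor (A ∩ B) := by
  refine ⟨(y⁻¹ * retr B y * (retr B x)⁻¹)⁻¹, ?_⟩
  have h1 := retr_mem_inter (T := B) hx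
  rw [Set.inter_comm] at h1
  have h2 := retr_of_mem hy
  simp only [map_mul, map_inv] at h1 h2
  have h3 : k = y⁻¹ * (retr B y * retr B k * (retr B y)⁻¹) * y := by rw [h2]; group
  have h4 : (y⁻¹ * retr B y * (retr B x)⁻¹)⁻¹ * k * (y⁻¹ * retr B y * (retr B x)⁻¹)⁻¹⁻¹ =
      retr B x * retr B k * (retr B x)⁻¹ := by
    nth_rewrite 1 [h3]; group
  rw [h4]; exact h1

theorem exists_finset_factor (k : FreeGroup α) : ∃ T : Finset α, k ∈ factor (T : Set α) := by
  classical
  induction k using FreeGroup.induction_on with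
  | C1 => exact ⟨∅, one_mem _⟩
  | of a => exact ⟨{a}, of_mem_factor (by simp)⟩
  | inv_of a h => obtain ⟨T, h⟩ := h; exact ⟨T, inv_mem h⟩
  | mul x y hx hy =>
    obtain ⟨T, hT⟩ := hx
    obtain ⟨T', hT'⟩ := hy
    exact ⟨T ∪ T', mul_mem (factor_mono (by simp) hT) (factor_mono (by simp) hT')⟩

/-- The support of a cyclically reduced representative, characterised without words: the smallest
set of letters generating a free factor that contains a conjugate of `k`. -/
theorem exists_min_support (k : FreeGroup α) : ∃ T : Finset α,
    (∃ x, x * k * x⁻¹ ∈ factor (T : Set α)) ∧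
    ∀ T' : Finset α, (∃ x, x * k * x⁻¹ ∈ factor (T' : Set α)) → T ⊆ T' := by
  classical
  have hex : ∃ n, ∃ T : Finset α, T.card = n ∧ ∃ x, x * k * x⁻¹ ∈ factor (T : Set α) := by
    obtain ⟨T, hT⟩ := exists_finset_factor k
    exact ⟨_, T, rfl, 1, by simpa using hT⟩
  obtain ⟨T, hTc, x, hx⟩ := Nat.find_spec hex
  refine ⟨T, ⟨x, hx⟩, ?_⟩
  rintro T' ⟨y, hy⟩
  obtain ⟨z, hz⟩ := conj_factor_inter hx hy
  have h1 : Nat.find hex ≤ (T ∩ T').card :=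
    Nat.find_min' hex ⟨T ∩ T', rfl, z, by simpa using hz⟩
  have h2 : T ∩ T' = T := Finset.eq_of_subset_of_card_le Finset.inter_subset_left (by omega)
  exact Finset.inter_eq_left.mp h2

end FreeGroupLemmas

end TreeRAAG

namespace TreeRAAG

/-! ### Bipartite right-angled Artin groups as semidirect products of free groups -/

/-- A presentation of `G` as the right-angled Artin group of a bipartite graph with parts `I` and
`J` and adjacency relation `E`, given by its universal property. -/
structure BipData {I J : Type} (E : I → J → Prop) (G : Type) [Group G] where
  /-- the generators of the first part -/
  p : I → G
  /-- the generators of the second part -/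
  q : J → G
  comm : ∀ i j, E i j → Commute (p i) (q j)
  exists_lift : ∀ {H : Type} [Group H] (f : I → H) (g : J → H),
    (∀ i j, E i j → Commute (f i) (g j)) → ∃ φ : G →* H, (∀ i, φ (p i) = f i) ∧ ∀ j, φ (q j) = g j
  gen : Subgroup.closure (Set.range p ∪ Set.range q) = ⊤

/-- `z` is rich if its centralizer contains two elements whose `n`-th powers do not commute for any
`n > 0`. Unlike mere non-commutativity of the centralizer, this is inherited by finite-index subgroups. -/
def Rich {G : Type} [Group G] (z : G) : Prop :=
  ∃ x y, Commute x z ∧ Commute y z ∧ ∀ n : ℕ, 0 < n → ¬ Commute (x ^ n) (y ^ n)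

namespace BipData

variable {I J : Type} {E : I → J → Prop} {G : Type} [Group G]

/-- The same presentation with the two parts exchanged. -/
def swap (D : BipData E G) : BipData (fun j i => E i j) G where
  p := D.q
  q := D.p
  comm j i h := (D.comm i j h).symm
  exists_lift f g h := by
    obtain ⟨φ, h1, h2⟩ := D.exists_lift g f fun i j hij => (h j i hij).symm
    exact ⟨φ, h2, h1⟩
  gen := by rw [Set.union_comm]; exact D.gen

/-- Homomorphisms are determined by their values on the vertices. -/
theorem hom_ext (D : BipData E G) {H : Type} [Group H] {f g : G →* H}
    (hp : ∀ i, f (D.p i) = g (D.p i)) (hq : ∀ j, f (D.q j) = g (D.q j)) : f = g := by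
  refine MonoidHom.eq_of_eqOn_dense D.gen ?_
  rintro _ (⟨i, rfl⟩ | ⟨j, rfl⟩)
  · exact hp i
  · exact hq j

theorem exists_proj (D : BipData E G) :
    ∃ φ : G →* FreeGroup J, (∀ i, φ (D.p i) = 1) ∧ ∀ j, φ (D.q j) = FreeGroup.of j :=
  D.exists_lift (fun _ => 1) FreeGroup.of fun _ _ _ => Commute.one_left _

/-- The retraction onto the free group on the second part, killing the first part. -/
noncomputable def proj (D : BipData E G) : G →* FreeGroup J := D.exists_proj.choose

@[simp] theorem proj_p (D : BipData E G) (i : I) : D.proj (D.p i) = 1 :=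
  D.exists_proj.choose_spec.1 i

@[simp] theorem proj_q (D : BipData E G) (j : J) : D.proj (D.q j) = FreeGroup.of j :=
  D.exists_proj.choose_spec.2 j

/-- The section of `proj`. -/
noncomputable def sec (D : BipData E G) : FreeGroup J →* G := FreeGroup.lift D.q

@[simp] theorem sec_of (D : BipData E G) (j : J) : D.sec (FreeGroup.of j) = D.q j := by
  simp [sec]

@[simp] theorem proj_sec (D : BipData E G) (x : FreeGroup J) : D.proj (D.sec x) = x := by
  have : D.proj.comp D.sec = MonoidHom.id _ := by ext j; simp
  exact DFunLike.congr_fun this x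

variable (E) in
/-- The free factor of `FreeGroup J` generated by the neighbours of `i`. -/
def Lam (i : I) : Subgroup (FreeGroup J) := factor {j | E i j}

variable (E) in
/-- The letters of the kernel of `proj`: the conjugates of the generators of the first part. -/
abbrev Letters : Type := Σ i, FreeGroup J ⧸ Lam E i

variable (E) in
/-- `FreeGroup J` acts on the free group on `Letters E` by permuting the letters. -/
def act : FreeGroup J →* MulAut (FreeGroup (Letters E)) where
  toFun g := FreeGroup.freeGroupCongr (MulAction.toPerm g)
  map_one' := by
    apply MulEquiv.toMonoidHom_injective; ext s; simp
  map_mul' a b := by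
    apply MulEquiv.toMonoidHom_injective; ext s; simp [mul_smul]

@[simp] theorem act_of (g : FreeGroup J) (s : Letters E) :
    act E g (FreeGroup.of s) = FreeGroup.of (g • s) := by
  simp [act]

/-- The stabilizers of the letters are the conjugates of the free factors `Lam E i`. -/
theorem stab_iff {g h : FreeGroup J} {i : I} :
    g • (⟨i, (h : FreeGroup J ⧸ Lam E i)⟩ : Letters E) = ⟨i, h⟩ ↔ h⁻¹ * g * h ∈ Lam E i := by
  rw [Sigma.smul_mk]
  simp only [Sigma.mk.injEq, heq_eq_eq, true_and]
  rw [MulAction.Quotient.smul_coe, eq_comm, QuotientGroup.eq, smul_eq_mul, mul_assoc]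

theorem commute_p_sec (D : BipData E G) {i : I} {x : FreeGroup J} (h : x ∈ Lam E i) :
    Commute (D.p i) (D.sec x) := by
  induction h using Subgroup.closure_induction with
  | mem y hy => obtain ⟨j, hj, rfl⟩ := hy; rw [sec_of]; exact D.comm i j hj
  | one => rw [map_one]; exact Commute.one_right _
  | mul x y _ _ hx hy => rw [map_mul]; exact hx.mul_right hy
  | inv x _ hx => rw [map_inv]; exact hx.inv_right

theorem exists_embed (D : BipData E G) : ∃ e : G →* FreeGroup (Letters E) ⋊[act E] FreeGroup J,
    (∀ i, e (D.p i) = SemidirectProduct.inl (FreeGroup.of ⟨i, ((1 : FreeGroup J) : _ ⧸ _)⟩)) ∧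
    ∀ j, e (D.q j) = SemidirectProduct.inr (FreeGroup.of j) := by
  refine D.exists_lift _ _ fun i j hij => ?_
  have h : FreeGroup.of j • (⟨i, ((1 : FreeGroup J) : _ ⧸ _)⟩ : Letters E) = ⟨i, (1 : FreeGroup J)⟩ := by
    rw [stab_iff]; simp only [inv_one, one_mul, mul_one]
    exact of_mem_factor (T := {j | E i j}) hij
  have := SemidirectProduct.inl_aut (φ := act E) (FreeGroup.of j)
    (FreeGroup.of ⟨i, ((1 : FreeGroup J) : _ ⧸ _)⟩)
  rw [act_of, h] at this
  rw [Commute, SemiconjBy]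
  nth_rewrite 1 [this]
  simp [mul_assoc]

/-- The map from `G` to the semidirect product of the free group on `Letters E` by
`FreeGroup J`. -/
noncomputable def embed (D : BipData E G) :
    G →* FreeGroup (Letters E) ⋊[act E] FreeGroup J := D.exists_embed.choose

theorem embed_p (D : BipData E G) (i : I) : D.embed (D.p i) =
    SemidirectProduct.inl (FreeGroup.of ⟨i, ((1 : FreeGroup J) : _ ⧸ _)⟩) :=
  D.exists_embed.choose_spec.1 i

theorem embed_q (D : BipData E G) (j : J) :
    D.embed (D.q j) = SemidirectProduct.inr (FreeGroup.of j) :=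
  D.exists_embed.choose_spec.2 j

/-- The restriction of `back` to the free normal subgroup. -/
noncomputable def backFree (D : BipData E G) : FreeGroup (Letters E) →* G :=
  FreeGroup.lift fun s => D.sec s.2.out * D.p s.1 * (D.sec s.2.out)⁻¹

theorem backFree_of (D : BipData E G) (i : I) (h : FreeGroup J) :
    D.backFree (FreeGroup.of ⟨i, (h : _ ⧸ _)⟩) = D.sec h * D.p i * (D.sec h)⁻¹ := by
  obtain ⟨l, hl⟩ := QuotientGroup.mk_out_eq_mul (Lam E i) h
  simp only [backFree, FreeGroup.lift_apply_of]
  rw [hl, map_mul]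
  have := (D.commute_p_sec l.2).eq
  rw [mul_assoc (D.sec h), ← this]; group

/-- The left inverse of `embed`. -/
noncomputable def back (D : BipData E G) : FreeGroup (Letters E) ⋊[act E] FreeGroup J →* G :=
  SemidirectProduct.lift D.backFree D.sec (by
    intro g
    ext ⟨i, x⟩
    obtain ⟨h, rfl⟩ := QuotientGroup.mk_surjective x
    simp only [MonoidHom.comp_apply, MulEquiv.coe_toMonoidHom, act_of, MulAut.conj_apply]
    rw [Sigma.smul_mk, MulAction.Quotient.smul_coe, backFree_of, backFree_of, smul_eq_mul, map_mul]
    group)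

theorem back_inl (D : BipData E G) (x) : D.back (SemidirectProduct.inl x) = D.backFree x := by
  simp [back]

theorem back_inr (D : BipData E G) (x) : D.back (SemidirectProduct.inr x) = D.sec x := by
  simp [back]

theorem back_embed (D : BipData E G) (z : G) : D.back (D.embed z) = z := by
  have : D.back.comp D.embed = MonoidHom.id _ := by
    apply D.hom_ext
    · intro i
      simp [embed_p, back_inl, backFree_of]
    · intro j
      simp [embed_q, back_inr]
  exact DFunLike.congr_fun this z

theorem embed_injective (D : BipData E G) : Function.Injective D.embed :=
  Function.LeftInverse.injective D.back_embed

theorem embed_right (D : BipData E G) (z : G) : (D.embed z).right = D.proj z := by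
  have : SemidirectProduct.rightHom.comp D.embed = D.proj := by
    apply D.hom_ext
    · intro i; simp [embed_p]
    · intro j; simp [embed_q]
  exact DFunLike.congr_fun this z

theorem embed_eq_inl (D : BipData E G) {z : G} (hz : D.proj z = 1) :
    D.embed z = SemidirectProduct.inl (D.embed z).left := by
  ext
  · simp
  · rw [embed_right, hz]; simp

theorem left_ne_one (D : BipData E G) {z : G} (hz : D.proj z = 1) (h1 : z ≠ 1) :
    (D.embed z).left ≠ 1 := by
  intro h
  apply h1
  apply D.embed_injective
  rw [D.embed_eq_inl hz, h, map_one, map_one]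

/-- The centralizer of an element of the kernel of `proj` acts on this element by conjugation inside
the kernel. -/
theorem act_left (D : BipData E G) {x z : G} (hz : D.proj z = 1) (h : Commute x z) :
    act E (D.proj x) (D.embed z).left =
      (D.embed x).left⁻¹ * (D.embed z).left * (D.embed x).left := by
  have h1 := congrArg SemidirectProduct.left (congrArg D.embed h.eq)
  rw [map_mul, map_mul, SemidirectProduct.mul_left, SemidirectProduct.mul_left, embed_right,
    embed_right, hz, map_one, MulAut.one_apply] at h1
  rw [mul_assoc, ← h1]; group

open Classical in
theorem act_factor (g : FreeGroup J) {T : Finset (Letters E)} {m : FreeGroup (Letters E)}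
    (h : m ∈ factor (T : Set (Letters E))) :
    act E g m ∈ factor ((T.image (g • ·) : Finset (Letters E)) : Set (Letters E)) := by
  induction h using Subgroup.closure_induction with
  | mem y hy =>
    obtain ⟨s, hs, rfl⟩ := hy
    rw [act_of]
    exact of_mem_factor (Finset.mem_coe.mpr (Finset.mem_image_of_mem _ (Finset.mem_coe.mp hs)))
  | one => rw [map_one]; exact one_mem _
  | mul x y _ _ hx hy => rw [map_mul]; exact mul_mem hx hy
  | inv x _ hx => rw [map_inv]; exact inv_mem hx

/-- The centralizer of an element `z` of the kernel of `proj` acts on the finite cyclic support of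
`z`, so suitable powers of its elements fix this support pointwise. -/
theorem exists_support (D : BipData E G) {z : G} (hz : D.proj z = 1) :
    ∃ T : Finset (Letters E), (∃ x, x * (D.embed z).left * x⁻¹ ∈ factor (T : Set (Letters E))) ∧
      (z ≠ 1 → T.Nonempty) ∧
      ∀ y, Commute y z → ∀ t ∈ T, (D.proj y) ^ T.card.factorial • t = t := by
  classical
  obtain ⟨T, ⟨x, hx⟩, hT⟩ := exists_min_support (D.embed z).left
  refine ⟨T, ⟨x, hx⟩, ?_, ?_⟩
  · intro h1
    by_contra hne
    rw [Finset.not_nonempty_iff_eq_empty] at hne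
    subst hne
    simp only [factor, Finset.coe_empty, Set.image_empty, Subgroup.closure_empty,
      Subgroup.mem_bot, conj_eq_one_iff] at hx
    exact D.left_ne_one hz h1 hx
  · intro y hy t ht
    have h1 := act_factor (D.proj y) hx
    rw [map_mul, map_mul, map_inv, D.act_left hz hy] at h1
    have h2 : T ⊆ T.image (D.proj y • ·) := by
      apply hT
      refine ⟨act E (D.proj y) x * (D.embed y).left⁻¹, ?_⟩
      convert h1 using 1
      group
    have h3 : T = T.image (D.proj y • ·) :=
      Finset.eq_of_subset_of_card_le h2 Finset.card_image_le
    have h4 : ∀ s, D.proj y • s ∈ T ↔ s ∈ T := by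
      intro s
      constructor
      · intro hs
        rw [h3, Finset.mem_image] at hs
        obtain ⟨s', hs', e⟩ := hs
        rwa [← smul_left_cancel _ e]
      · intro hs
        rw [h3]; exact Finset.mem_image_of_mem _ hs
    let σ : Equiv.Perm {s // s ∈ T} := (MulAction.toPerm (D.proj y)).subtypePerm h4
    have h5 : σ ^ T.card.factorial = 1 := by
      have := pow_card_eq_one' (x := σ)
      rwa [Nat.card_eq_fintype_card, Fintype.card_perm, Fintype.card_coe] at this
    have h6 : ∀ n : ℕ, ((σ ^ n) ⟨t, ht⟩ : {s // s ∈ T}).1 = (D.proj y) ^ n • t := by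
      intro n
      induction n with
      | zero => simp
      | succ n ih => rw [pow_succ', pow_succ', Equiv.Perm.mul_apply, mul_smul, ← ih]; rfl
    rw [← h6, h5]; rfl

/-- Inside the centralizer of `z`, the intersection with the kernel of `proj` is central, as long
as `z` is a non-trivial element of that kernel. -/
theorem commute_ker (D : BipData E G) {x w z : G} (hz : D.proj z = 1) (h1 : z ≠ 1)
    (hw : D.proj w = 1) (hwz : Commute w z) (hx : Commute x z) : Commute x w := by
  have h2 : Commute (D.embed w).left (D.embed z).left := by
    have := hwz.map D.embed
    rw [D.embed_eq_inl hw, D.embed_eq_inl hz] at this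
    exact SemidirectProduct.inl_injective (by simpa using this.eq)
  obtain ⟨a, b, ha, hab⟩ := exists_zpow_eq_of_commute h2 (D.left_ne_one hz h1)
  have h3 : w ^ a = z ^ b := by
    apply D.embed_injective
    rw [map_zpow, map_zpow, D.embed_eq_inl hw, D.embed_eq_inl hz, ← map_zpow, ← map_zpow, hab]
  have hc : D.proj (x * w * x⁻¹) = 1 := by simp [hw]
  have h4 : (x * w * x⁻¹) ^ a = w ^ a := by
    rw [conj_zpow, h3, (hx.zpow_right b).eq]; group
  have h5 : x * w * x⁻¹ = w := by
    apply D.embed_injective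
    have h6 := congrArg D.embed h4
    rw [map_zpow, map_zpow, D.embed_eq_inl hc, D.embed_eq_inl hw, ← map_zpow, ← map_zpow] at h6
    rw [D.embed_eq_inl hc, D.embed_eq_inl hw,
      zpow_left_injective ha (SemidirectProduct.inl_injective h6)]
  exact mul_inv_eq_iff_eq_mul.mp h5

/-- Two elements of the centralizer of `z` whose projections commute have commuting powers, since the
centralizer meets the kernel of `proj` in central elements. -/
theorem exists_commute_pow (D : BipData E G) {x y z : G} (hz : D.proj z = 1) (h1 : z ≠ 1)
    (hx : Commute x z) (hy : Commute y z) (h : Commute (D.proj x) (D.proj y)) :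
    ∃ n : ℕ, 0 < n ∧ Commute (x ^ n) (y ^ n) := by
  by_cases h0 : D.proj y = 1
  · exact ⟨1, one_pos, by simpa using D.commute_ker hz h1 h0 hy hx⟩
  obtain ⟨a, b, ha, hab⟩ := exists_zpow_eq_of_commute h h0
  have h2 : Commute y (x ^ a * (y ^ b)⁻¹) :=
    D.commute_ker hz h1 (by rw [map_mul, map_inv, map_zpow, map_zpow, hab, mul_inv_cancel])
      ((hx.zpow_left a).mul_left (hy.zpow_left b).inv_left) hy
  have h3 : Commute y (x ^ a) := by
    have := h2.mul_right ((Commute.refl y).zpow_right b)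
    simpa using this
  have h4 : Commute y (x ^ a.natAbs) := by
    obtain ⟨n, rfl | rfl⟩ := Int.eq_nat_or_neg a
    · rw [zpow_natCast] at h3; exact h3
    · rw [zpow_neg, zpow_natCast, Commute.inv_right_iff] at h3
      rw [Int.natAbs_neg, Int.natAbs_natCast]; exact h3
  exact ⟨a.natAbs, Int.natAbs_pos.mpr ha, (h4.pow_left _).symm⟩

/-- A conjugation inside the free group on `Letters E`, transported to `G`. -/
theorem back_conj (D : BipData E G) {z : G} (hz : D.proj z = 1) {x m : FreeGroup (Letters E)}
    (h : x * (D.embed z).left * x⁻¹ = m) :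
    z = (D.backFree x)⁻¹ * D.backFree m * D.backFree x := by
  rw [← h]
  conv_lhs => rw [← D.back_embed z, D.embed_eq_inl hz, back_inl]
  simp only [map_mul, map_inv]; group

/-- A rich element killed by `proj` is conjugate to a power of a generator of the first part with
non-commutative link, provided two distinct letters always have a commutative common stabilizer. -/
theorem rich_ker (D : BipData E G) (H1 : ∀ t₁ t₂ : Letters E, t₁ ≠ t₂ → ∀ a b : FreeGroup J,
      a • t₁ = t₁ → a • t₂ = t₂ → b • t₁ = t₁ → b • t₂ = t₂ → Commute a b)
    {z : G} (hz : D.proj z = 1) (h1 : z ≠ 1) (hR : Rich z) :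
    ∃ (i : I) (s : ℤ) (g : G), z = g * D.p i ^ s * g⁻¹ ∧ s ≠ 0 ∧
      ∃ a ∈ Lam E i, ∃ b ∈ Lam E i, ¬ Commute a b := by
  obtain ⟨T, ⟨u, hu⟩, hne, hT⟩ := D.exists_support hz
  obtain ⟨x, y, hx, hy, hxy⟩ := hR
  have key : ¬ Commute (D.proj x ^ T.card.factorial) (D.proj y ^ T.card.factorial) := by
    intro h
    rw [← map_pow, ← map_pow] at h
    obtain ⟨n, hn, hc⟩ := D.exists_commute_pow hz h1 (hx.pow_left _) (hy.pow_left _) h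
    rw [← pow_mul, ← pow_mul] at hc
    exact hxy _ (Nat.mul_pos (Nat.factorial_pos _) hn) hc
  obtain ⟨⟨i, c⟩, ht⟩ := hne h1
  obtain ⟨h, rfl⟩ := QuotientGroup.mk_surjective c
  have hsing : T = {⟨i, (h : _ ⧸ _)⟩} := by
    refine Finset.eq_singleton_iff_unique_mem.mpr ⟨ht, fun t' ht' => ?_⟩
    by_contra hne'
    exact key (H1 _ _ hne' _ _ (hT x hx _ ht') (hT x hx _ ht) (hT y hy _ ht') (hT y hy _ ht))
  have hux := hu
  rw [hsing, Finset.coe_singleton] at hu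
  obtain ⟨s, hs⟩ := mem_factor_singleton hu
  have hz' := D.back_conj hz hs
  rw [map_zpow, backFree_of] at hz'
  have hz2 : z = ((D.backFree u)⁻¹ * D.sec h) * D.p i ^ s * ((D.backFree u)⁻¹ * D.sec h)⁻¹ := by
    rw [hz', conj_zpow]; group
  refine ⟨i, s, _, hz2, ?_, _, stab_iff.mp (hT x hx _ ht), _, stab_iff.mp (hT y hy _ ht), ?_⟩
  · rintro rfl
    exact h1 (by rw [hz2]; simp)
  · intro hc
    apply key
    have := hc.map (MulAut.conj h).toMonoidHom
    simpa [MulAut.conj_apply, mul_assoc] using this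

/-- A non-trivial element killed by both projections cannot commute with an element outside the kernel of
`proj`, provided the letters fixed by a non-trivial element are a translate of base letters. -/
theorem eq_one_of_commute (D : BipData E G)
    (H2 : ∀ a : FreeGroup J, a ≠ 1 → ∃ g : FreeGroup J, ∀ t : Letters E, a • t = t →
      t = ⟨t.1, (g : _ ⧸ _)⟩)
    {k z : G} (hk : D.proj k = 1) (hk' : D.swap.proj k = 1) (hc : Commute z k)
    (hz : D.proj z ≠ 1) : k = 1 := by
  by_contra hk1
  obtain ⟨T, ⟨u, hu⟩, -, hT⟩ := D.exists_support hk
  obtain ⟨g, hg⟩ := H2 (D.proj z ^ T.card.factorial) (by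
    intro h
    exact hz (pow_left_injective (Nat.factorial_ne_zero _) (h.trans (one_pow _).symm)))
  have h1 : ∀ m ∈ factor (T : Set (Letters E)), ∃ f : FreeGroup I,
      D.backFree m = D.sec g * D.swap.sec f * (D.sec g)⁻¹ := by
    intro m hm
    induction hm using Subgroup.closure_induction with
    | mem y hy =>
      obtain ⟨t, ht, rfl⟩ := hy
      rw [hg t (hT z hc t ht), backFree_of]
      exact ⟨FreeGroup.of t.1, by rw [sec_of]; rfl⟩
    | one => exact ⟨1, by simp⟩
    | mul x y _ _ hx hy =>
      obtain ⟨f, hf⟩ := hx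
      obtain ⟨f', hf'⟩ := hy
      exact ⟨f * f', by rw [map_mul, map_mul, hf, hf']; group⟩
    | inv x _ hx =>
      obtain ⟨f, hf⟩ := hx
      exact ⟨f⁻¹, by rw [map_inv, map_inv, hf]; group⟩
  obtain ⟨f, hf⟩ := h1 _ hu
  have h2 := D.back_conj hk rfl (x := u)
  rw [hf] at h2
  have h3 := congrArg D.swap.proj h2
  rw [hk'] at h3
  have h4 : f = 1 := by
    have h5 : D.swap.proj (D.sec g * D.swap.sec f * (D.sec g)⁻¹) = 1 := by
      have h6 := congrArg (fun v => D.swap.proj (D.backFree u) * v * (D.swap.proj (D.backFree u))⁻¹) h3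
      simp only [map_mul, map_inv] at h6 ⊢
      rw [mul_one, mul_inv_cancel] at h6
      rw [h6]; group
    rw [map_mul, map_mul, map_inv, proj_sec, conj_eq_one_iff] at h5
    exact h5
  rw [h4] at h2
  exact hk1 (by rw [h2]; simp)

/-- An element killed by neither projection is not rich: both projections of its centralizer are
commutative, so commutators of elements of the centralizer are killed by both projections and
commute with `z`, hence are trivial by `eq_one_of_commute`. -/
theorem not_rich (D : BipData E G)
    (H2 : ∀ a : FreeGroup J, a ≠ 1 → ∃ g : FreeGroup J, ∀ t : Letters E, a • t = t →
      t = ⟨t.1, (g : _ ⧸ _)⟩)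
    {z : G} (hz : D.proj z ≠ 1) (hz' : D.swap.proj z ≠ 1) : ¬ Rich z := by
  rintro ⟨x, y, hx, hy, hxy⟩
  have h1 := commute_trans_of_ne_one hz (hx.map D.proj) (hy.map D.proj)
  have h2 := commute_trans_of_ne_one hz' (hx.map D.swap.proj) (hy.map D.swap.proj)
  have h3 : x * y * x⁻¹ * y⁻¹ = 1 := by
    apply D.eq_one_of_commute H2 (z := z) _ _ _ hz
    · simp [h1.eq]
    · simp [h2.eq]
    · exact (((hx.mul_left hy).mul_left hx.inv_left).mul_left hy.inv_left).symm
  apply hxy 1 one_pos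
  rw [pow_one, pow_one]
  exact mul_inv_eq_iff_eq_mul.mp (mul_inv_eq_one.mp h3)

/-- The centralizer of a power of a generator of the first part is the star of that generator. -/
theorem centralizer_p (D : BipData E G) {i : I} {x : G} {s : ℤ} (hs : s ≠ 0)
    (h : Commute x (D.p i ^ s)) :
    D.proj x ∈ Lam E i ∧ ∃ k : ℤ, x = D.p i ^ k * D.sec (D.proj x) := by
  let t : Letters E := ⟨i, ((1 : FreeGroup J) : _ ⧸ _)⟩
  have hz : D.proj (D.p i ^ s) = 1 := by simp
  have hl : (D.embed (D.p i ^ s)).left = FreeGroup.of t ^ s := by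
    rw [map_zpow, embed_p, ← map_zpow, SemidirectProduct.left_inl]
  have h1 := D.act_left hz h
  rw [hl, map_zpow, act_of] at h1
  have h2 : D.proj x • t = t := by
    by_contra hne
    have h3 : (1 : FreeGroup (Letters E)) * FreeGroup.of t ^ s * 1⁻¹ ∈ factor {t} := by
      simpa using of_zpow_mem_factor t s
    have h4 : (D.embed x).left⁻¹ * FreeGroup.of t ^ s * (D.embed x).left⁻¹⁻¹ ∈
        factor {D.proj x • t} := by
      rw [inv_inv, ← h1]; exact of_zpow_mem_factor _ s
    obtain ⟨u, hu⟩ := conj_factor_inter h3 h4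
    rw [Set.singleton_inter_eq_empty.mpr (by simpa using Ne.symm hne)] at hu
    simp only [factor, Set.image_empty, Subgroup.closure_empty, Subgroup.mem_bot,
      conj_eq_one_iff] at hu
    exact of_zpow_ne_one t hs hu
  refine ⟨by simpa using stab_iff.mp h2, ?_⟩
  rw [h2] at h1
  obtain ⟨k, hk⟩ := eq_zpow_of_commute (x := (D.embed x).left) hs (t := t) (by
    change _ * _ = _ * _
    nth_rewrite 1 [h1]; group)
  refine ⟨k, ?_⟩
  conv_lhs => rw [← D.back_embed x, ← SemidirectProduct.inl_left_mul_inr_right (D.embed x), hk,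
    embed_right, map_mul, back_inl, back_inr, map_zpow, backFree_of]
  simp

end BipData

end TreeRAAG

namespace TreeRAAG

/-! ### Links of vertices -/

/-- Non-trivial powers of different letters do not commute. -/
theorem of_injective_comm {L : Type} {a b : L} (h : a ≠ b) {n m : ℤ} (hn : n ≠ 0) (hm : m ≠ 0) :
    ¬ Commute (FreeGroup.of a ^ n) (FreeGroup.of b ^ m) := by
  intro hc
  obtain ⟨k, hk⟩ := eq_zpow_of_commute (x := FreeGroup.of a ^ n) hm hc
  have h1 := of_zpow_mem_factor b k
  rw [← hk, mem_factor_iff, map_zpow] at h1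
  have h2 : retr {b} (FreeGroup.of a) = 1 := by simp [retr, h]
  rw [h2, one_zpow] at h1
  exact of_zpow_ne_one a hn h1.symm

theorem commute_of_conj {G : Type} [Group G] (g : G) {x y : G}
    (h : Commute (g * x * g⁻¹) (g * y * g⁻¹)) :
    Commute x y := by
  have := h.map (MulAut.conj g⁻¹).toMonoidHom
  simpa [mul_assoc] using this

namespace Rich

variable {G : Type} [Group G]

theorem conj {z : G} (h : Rich z) (g : G) : Rich (g * z * g⁻¹) := by
  obtain ⟨x, y, hx, hy, hxy⟩ := h
  refine ⟨g * x * g⁻¹, g * y * g⁻¹, ?_, ?_, fun n hn hc => hxy n hn ?_⟩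
  · simpa using hx.map (MulAut.conj g).toMonoidHom
  · simpa using hy.map (MulAut.conj g).toMonoidHom
  · rw [conj_pow, conj_pow] at hc
    exact commute_of_conj g hc

theorem zpow {z : G} (h : Rich z) (n : ℤ) : Rich (z ^ n) := by
  obtain ⟨x, y, hx, hy, hxy⟩ := h
  exact ⟨x, y, hx.zpow_right n, hy.zpow_right n, hxy⟩

end Rich

namespace BipData

variable {I J : Type} {E : I → J → Prop} {G : Type} [Group G]

open Classical in
/-- The retraction of `G` onto the free group on the link of the generator `p i`. -/
noncomputable def phi (D : BipData E G) (i : I) : G →* FreeGroup {j // E i j} :=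
  (FreeGroup.lift fun j => if h : E i j then FreeGroup.of ⟨j, h⟩ else 1).comp D.proj

/-- The inclusion into `G` of the free group on the link of the generator `p i`. -/
noncomputable def sig (D : BipData E G) (i : I) : FreeGroup {j // E i j} →* G :=
  FreeGroup.lift fun j => D.q j.1

theorem phi_q (D : BipData E G) {i : I} {j : J} (h : E i j) :
    D.phi i (D.q j) = FreeGroup.of ⟨j, h⟩ := by
  simp [phi, h]

theorem phi_p (D : BipData E G) (i i' : I) : D.phi i (D.p i') = 1 := by
  simp [phi]

theorem phi_sig (D : BipData E G) {i : I} (x : FreeGroup {j // E i j}) :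
    D.phi i (D.sig i x) = x := by
  have : (D.phi i).comp (D.sig i) = MonoidHom.id _ := by
    ext j
    simp [sig, D.phi_q j.2]
  exact DFunLike.congr_fun this x

theorem sig_of (D : BipData E G) {i : I} (j : {j // E i j}) :
    D.sig i (FreeGroup.of j) = D.q j.1 := by
  simp [sig]

theorem swap_proj_sig (D : BipData E G) {i : I} (x : FreeGroup {j // E i j}) :
    D.swap.proj (D.sig i x) = 1 := by
  have : (D.swap.proj).comp (D.sig i) = 1 := by
    ext j
    simp [sig]
    exact D.swap.proj_p j.1
  exact DFunLike.congr_fun this x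

theorem commute_sig (D : BipData E G) {i : I} (x : FreeGroup {j // E i j}) :
    Commute (D.p i) (D.sig i x) := by
  induction x using FreeGroup.induction_on with
  | C1 => rw [map_one]; exact Commute.one_right _
  | of j => rw [sig_of]; exact D.comm i j.1 j.2
  | inv_of j h => rw [map_inv]; exact h.inv_right
  | mul x y hx hy => rw [map_mul]; exact hx.mul_right hy

theorem sec_eq_sig (D : BipData E G) {i : I} {x : FreeGroup J} (h : x ∈ Lam E i) :
    D.sec x = D.sig i (D.phi i (D.sec x)) := by
  induction h using Subgroup.closure_induction with
  | mem y hy =>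
    obtain ⟨j, hj, rfl⟩ := hy
    rw [sec_of, D.phi_q hj, sig_of]
  | one => simp
  | mul x y _ _ hx hy => rw [map_mul, map_mul, map_mul, ← hx, ← hy]
  | inv x _ hx => rw [map_inv, map_inv, map_inv, ← hx]

/-- The centralizer of a power of `p i` is the product of the powers of `p i` with the free group on the
link. -/
theorem centralizer_p' (D : BipData E G) {i : I} {x : G} {s : ℤ} (hs : s ≠ 0)
    (h : Commute x (D.p i ^ s)) : ∃ k : ℤ, x = D.p i ^ k * D.sig i (D.phi i x) := by
  obtain ⟨h1, k, hk⟩ := D.centralizer_p hs h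
  refine ⟨k, ?_⟩
  have h2 : D.phi i x = D.phi i (D.sec (D.proj x)) := by
    simp [phi]
  rw [h2, ← D.sec_eq_sig h1]
  exact hk

/-- In the centralizer of a power of `p i`, the elements killed by `swap.proj` form the free group on
the link. -/
theorem eq_sig (D : BipData E G) {i : I} {x : G} {s : ℤ} (hs : s ≠ 0)
    (h : Commute x (D.p i ^ s)) (hx : D.swap.proj x = 1) : x = D.sig i (D.phi i x) := by
  obtain ⟨k, hk⟩ := D.centralizer_p' hs h
  have h1 := congrArg D.swap.proj hk
  rw [hx, map_mul, swap_proj_sig, mul_one, map_zpow] at h1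
  have h2 : D.swap.proj (D.p i) = FreeGroup.of i := D.swap.proj_q i
  rw [h2] at h1
  have h3 : k = 0 := by
    by_contra hk0
    exact of_zpow_ne_one i hk0 h1.symm
  rw [h3, zpow_zero, one_mul] at hk
  exact hk

theorem p_zpow_ne_one (D : BipData E G) (i : I) {k : ℤ} (hk : k ≠ 0) : D.p i ^ k ≠ 1 := by
  intro h
  have h2 : D.swap.proj (D.p i) = FreeGroup.of i := D.swap.proj_q i
  have h1 := congrArg D.swap.proj h
  rw [map_zpow, h2, map_one] at h1
  exact of_zpow_ne_one i hk h1

theorem rich_p (D : BipData E G) {i : I} {a b : J} (hab : a ≠ b) (ha : E i a) (hb : E i b) :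
    Rich (D.p i) := by
  refine ⟨D.q a, D.q b, (D.comm i a ha).symm, (D.comm i b hb).symm, fun n hn hc => ?_⟩
  have h1 := hc.map D.proj
  rw [map_pow, map_pow, proj_q, proj_q, ← zpow_natCast, ← zpow_natCast] at h1
  exact of_injective_comm hab (by omega) (by omega) h1

end BipData

/-! ### Rich elements of the tree groups -/

open BipData

/-- The vertices other than the two neighbours of the centre: the centre `none`, and the leaves, where
`some ⟨i, k⟩` is the `k`-th leaf at the neighbour `i` of the centre. -/
abbrev Outer (d : Bool → ℕ) : Type := Option (Σ i : Bool, Fin (d i))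

/-- Adjacency between the neighbours of the centre, indexed by `Bool`, and the other vertices. -/
def Adj (d : Bool → ℕ) : Bool → Outer d → Prop
  | _, none => True
  | i, some a => a.1 = i

variable {d : Bool → ℕ} {G : Type} [Group G]

theorem adj_inter {i i' : Bool} (h : i ≠ i') :
    {j | Adj d i j} ∩ {j | Adj d i' j} = {(none : Outer d)} := by
  ext j
  rcases j with _ | j
  · simp [Adj]
  · simp only [Set.mem_inter_iff, Set.mem_ofPred_eq, Adj, Set.mem_singleton_iff, reduceCtorEq,
      iff_false, not_and]
    exact fun h1 h2 => h (h1.symm.trans h2)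

/-- An element fixing letters of the two different types is conjugate into the free factor generated
by the centre, the only common neighbour; the conjugator is the one that moves both letters to base
letters simultaneously. -/
theorem stab_pair {i i' : Bool} (hi : i ≠ i') {a h h' : FreeGroup (Outer d)}
    (h1 : h⁻¹ * a * h ∈ Lam (Adj d) i) (h2 : h'⁻¹ * a * h' ∈ Lam (Adj d) i') :
    retr {j | Adj d i j} (h'⁻¹ * a * h') ∈ factor {(none : Outer d)} ∧
    h⁻¹ * a * h = retr {j | Adj d i j} (h⁻¹ * h') * retr {j | Adj d i j} (h'⁻¹ * a * h') *
      (retr {j | Adj d i j} (h⁻¹ * h'))⁻¹ := by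
  refine ⟨?_, ?_⟩
  · rw [← adj_inter hi]; exact retr_mem_inter h2
  · rw [← retr_of_mem h1]
    simp only [map_mul, map_inv]; group

theorem factor_singleton_comm {α : Type} {t : α} {x y : FreeGroup α} (hx : x ∈ factor {t})
    (hy : y ∈ factor {t}) : Commute x y := by
  obtain ⟨a, rfl⟩ := mem_factor_singleton hx
  obtain ⟨b, rfl⟩ := mem_factor_singleton hy
  exact Commute.zpow_zpow_self _ _ _

/-- A non-trivial element fixes at most one letter of each type, by malnormality. -/
theorem letters_eq {I J : Type} {E : I → J → Prop} {i : I} {a h h' : FreeGroup J} (ha : a ≠ 1)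
    (h1 : h⁻¹ * a * h ∈ Lam E i) (h2 : h'⁻¹ * a * h' ∈ Lam E i) :
    (h : FreeGroup J ⧸ Lam E i) = h' := by
  rw [eq_comm, QuotientGroup.eq]
  refine factor_malnormal (x := h⁻¹ * a * h) ?_ ?_ h1
  · intro hx
    apply ha
    have := congrArg (fun v => h * v * h⁻¹) hx
    simpa [mul_assoc] using this
  · have : h'⁻¹ * h * (h⁻¹ * a * h) * (h'⁻¹ * h)⁻¹ = h'⁻¹ * a * h' := by group
    rw [this]; exact h2

/-- The common stabilizer of two different letters is commutative, as needed in `BipData.rich_ker`. -/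
theorem tree_H1 (t₁ t₂ : Letters (Adj d)) (hne : t₁ ≠ t₂) (a b : FreeGroup (Outer d))
    (ha1 : a • t₁ = t₁) (ha2 : a • t₂ = t₂) (hb1 : b • t₁ = t₁) (hb2 : b • t₂ = t₂) :
    Commute a b := by
  obtain ⟨i, c⟩ := t₁
  obtain ⟨h, rfl⟩ := QuotientGroup.mk_surjective c
  obtain ⟨i', c'⟩ := t₂
  obtain ⟨h', rfl⟩ := QuotientGroup.mk_surjective c'
  rw [stab_iff] at ha1 ha2 hb1 hb2
  by_cases hi : i = i'
  · subst hi
    have : a = 1 := by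
      by_contra ha
      exact hne (by rw [letters_eq ha ha1 ha2])
    rw [this]; exact Commute.one_left _
  · obtain ⟨h3, h4⟩ := stab_pair hi ha1 ha2
    obtain ⟨h5, h6⟩ := stab_pair hi hb1 hb2
    have h7 := (factor_singleton_comm h3 h5).map
      (MulAut.conj (retr {j | Adj d i j} (h⁻¹ * h'))).toMonoidHom
    simp only [MulEquiv.coe_toMonoidHom, MulAut.conj_apply] at h7
    rw [← h4, ← h6] at h7
    exact commute_of_conj h⁻¹ (by simpa using h7)

/-- The letters fixed by a non-trivial element are a translate of base letters, as needed in
`BipData.not_rich`. -/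
theorem tree_H2 (a : FreeGroup (Outer d)) (ha : a ≠ 1) :
    ∃ g : FreeGroup (Outer d), ∀ t : Letters (Adj d), a • t = t → t = ⟨t.1, (g : _ ⧸ _)⟩ := by
  by_cases h1 : ∃ h, h⁻¹ * a * h ∈ Lam (Adj d) false
  · by_cases h2 : ∃ h, h⁻¹ * a * h ∈ Lam (Adj d) true
    · obtain ⟨h, h1⟩ := h1
      obtain ⟨h', h2⟩ := h2
      obtain ⟨h3, h4⟩ := stab_pair (by simp) h1 h2
      set T : Set (Outer d) := {j | Adj d false j}
      have h5 : (h : _ ⧸ Lam (Adj d) false) = ↑(h * retr T (h⁻¹ * h')) := by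
        rw [QuotientGroup.eq, inv_mul_cancel_left]
        exact retr_mem _ _
      have h6 : (h' : _ ⧸ Lam (Adj d) true) = ↑(h * retr T (h⁻¹ * h')) := by
        refine letters_eq ha h2 ?_
        have : (h * retr T (h⁻¹ * h'))⁻¹ * a * (h * retr T (h⁻¹ * h')) =
            retr T (h'⁻¹ * a * h') := by
          have : a = h * (h⁻¹ * a * h) * h⁻¹ := by group
          conv_lhs => rw [this, h4]
          group
        rw [this]
        exact factor_mono (by simp [Adj]) h3
      refine ⟨h * retr T (h⁻¹ * h'), fun t ht => ?_⟩
      obtain ⟨i, c⟩ := t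
      obtain ⟨g, rfl⟩ := QuotientGroup.mk_surjective c
      rw [stab_iff] at ht
      cases i
      · rw [letters_eq ha ht h1, h5]
      · rw [letters_eq ha ht h2, h6]
    · obtain ⟨h, h1⟩ := h1
      refine ⟨h, fun t ht => ?_⟩
      obtain ⟨i, c⟩ := t
      obtain ⟨g, rfl⟩ := QuotientGroup.mk_surjective c
      rw [stab_iff] at ht
      cases i
      · rw [letters_eq ha ht h1]
      · exact absurd ⟨g, ht⟩ h2
  · by_cases h2 : ∃ h, h⁻¹ * a * h ∈ Lam (Adj d) true
    · obtain ⟨h, h2⟩ := h2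
      refine ⟨h, fun t ht => ?_⟩
      obtain ⟨i, c⟩ := t
      obtain ⟨g, rfl⟩ := QuotientGroup.mk_surjective c
      rw [stab_iff] at ht
      cases i
      · exact absurd ⟨g, ht⟩ h1
      · rw [letters_eq ha ht h2]
    · refine ⟨1, fun t ht => ?_⟩
      obtain ⟨i, c⟩ := t
      obtain ⟨g, rfl⟩ := QuotientGroup.mk_surjective c
      rw [stab_iff] at ht
      cases i
      · exact absurd ⟨g, ht⟩ h1
      · exact absurd ⟨g, ht⟩ h2

/-- The link of a leaf is a single vertex, so it generates a commutative group. -/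
theorem leaf_comm {k : Σ i : Bool, Fin (d i)} {x y : FreeGroup Bool}
    (hx : x ∈ Lam (fun j i => Adj d i j) (some k)) (hy : y ∈ Lam (fun j i => Adj d i j) (some k)) :
    Commute x y := by
  have : {i | Adj d i (some k)} = {k.1} := by
    ext i; simp [Adj, eq_comm]
  rw [Lam, this] at hx hy
  exact factor_singleton_comm hx hy

/-- The analogue of `tree_H1` for the other part of the tree. -/
theorem tree_H1_swap (t₁ t₂ : Letters (fun j i => Adj d i j)) (hne : t₁ ≠ t₂) (a b : FreeGroup Bool)
    (ha1 : a • t₁ = t₁) (ha2 : a • t₂ = t₂) (hb1 : b • t₁ = t₁) (hb2 : b • t₂ = t₂) :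
    Commute a b := by
  obtain ⟨j, c⟩ := t₁
  obtain ⟨h, rfl⟩ := QuotientGroup.mk_surjective c
  obtain ⟨j', c'⟩ := t₂
  obtain ⟨h', rfl⟩ := QuotientGroup.mk_surjective c'
  rw [stab_iff] at ha1 ha2 hb1 hb2
  rcases j with _ | k
  · rcases j' with _ | k
    · exfalso
      apply hne
      congr 1
      rw [QuotientGroup.eq, Lam]
      have : {i | Adj d i none} = Set.univ := by ext; simp [Adj]
      rw [this, factor, Set.image_univ, FreeGroup.closure_range_of]
      trivial
    · exact commute_of_conj h'⁻¹ (by simpa using leaf_comm ha2 hb2)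
  · exact commute_of_conj h⁻¹ (by simpa using leaf_comm ha1 hb1)

/-- A non-trivial rich element is conjugate to a power of a vertex that is not a leaf. -/
theorem rich_classification (D : BipData (Adj d) G) {z : G} (h1 : z ≠ 1) (hR : Rich z) :
    (∃ (i : Bool) (s : ℤ) (g : G), s ≠ 0 ∧ z = g * D.p i ^ s * g⁻¹) ∨
    ∃ (s : ℤ) (g : G), s ≠ 0 ∧ z = g * D.q none ^ s * g⁻¹ := by
  by_cases hz : D.proj z = 1
  · obtain ⟨i, s, g, h, hs, -⟩ := D.rich_ker tree_H1 hz h1 hR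
    exact Or.inl ⟨i, s, g, hs, h⟩
  by_cases hz' : D.swap.proj z = 1
  · obtain ⟨j, s, g, h, hs, a, ha, b, hb, hab⟩ := D.swap.rich_ker tree_H1_swap hz' h1 hR
    rcases j with _ | k
    · exact Or.inr ⟨s, g, hs, h⟩
    · exact absurd (leaf_comm ha hb) hab
  · exact absurd hR (D.not_rich tree_H2 hz hz')

/-- The properties of a vertex `v` that is not a leaf which enter the comparison of centralizers: the
centralizer of each power of `v` is the product of the powers of `v` with the free group on the link
`L`, and its rich elements are the powers of `v` together with the conjugates of powers of the
neighbours `P`. The weight `τ` recovers the absolute value of the exponent of such a power. -/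
structure VData (G : Type) [Group G] (τ : G → ℕ) (L : Type) where
  /-- the vertex -/
  v : G
  /-- the retraction onto the free group on the link -/
  φ : G →* FreeGroup L
  /-- the inclusion of the free group on the link -/
  σ : FreeGroup L →* G
  /-- the neighbours that are not leaves -/
  P : Finset L
  φ_σ : ∀ x, φ (σ x) = x
  φ_v : φ v = 1
  comm : ∀ x, Commute v (σ x)
  cent : ∀ {x : G} {s : ℤ}, s ≠ 0 → Commute x (v ^ s) → ∃ k : ℤ, x = v ^ k * σ (φ x)
  rich : ∀ {z : G} {s : ℤ}, s ≠ 0 → Commute z (v ^ s) → z ≠ 1 → Rich z → φ z = 1 ∨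
    z = σ (φ z) ∧ ∃ (h : FreeGroup L) (w : L) (j : ℤ), w ∈ P ∧
      φ z = h⁻¹ * FreeGroup.of w ^ j * h
  rich_v : Rich v
  rich_w : ∀ w ∈ P, Rich (σ (FreeGroup.of w))
  tau_w : ∀ w ∈ P, ∀ (j : ℤ) (h : G), τ (h⁻¹ * (σ (FreeGroup.of w)) ^ j * h) = j.natAbs

/-- The exponent sum with respect to the letter `t`. -/
noncomputable def expo {α : Type} [DecidableEq α] (t : α) : FreeGroup α →* Multiplicative ℤ :=
  FreeGroup.lift fun s => if s = t then Multiplicative.ofAdd 1 else 1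

/-- The `ℓ¹`-norm of the exponent sums with respect to the vertices that are not leaves. -/
noncomputable def tau (D : BipData (Adj d) G) (g : G) : ℕ :=
  (expo none (D.proj g)).toAdd.natAbs + ((expo true (D.swap.proj g)).toAdd.natAbs +
    (expo false (D.swap.proj g)).toAdd.natAbs)

theorem tau_conj (D : BipData (Adj d) G) (h g : G) : tau D (h⁻¹ * g * h) = tau D g := by
  have key : ∀ f : G →* Multiplicative ℤ, f (h⁻¹ * g * h) = f g := by
    intro f
    rw [map_mul, map_mul, map_inv, mul_comm, mul_inv_cancel_left]
  have h1 := key ((expo none).comp D.proj)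
  have h2 := key ((expo true).comp D.swap.proj)
  have h3 := key ((expo false).comp D.swap.proj)
  simp only [MonoidHom.comp_apply] at h1 h2 h3
  rw [tau, h1, h2, h3, tau]

theorem tau_p (D : BipData (Adj d) G) (i : Bool) (j : ℤ) : tau D (D.p i ^ j) = j.natAbs := by
  have h2 : D.swap.proj (D.p i) = FreeGroup.of i := D.swap.proj_q i
  cases i <;> simp [tau, h2, expo]

theorem tau_q (D : BipData (Adj d) G) (j : ℤ) : tau D (D.q none ^ j) = j.natAbs := by
  have h2 : D.swap.proj (D.q none) = 1 := D.swap.proj_p none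
  simp [tau, h2, expo]

/-- The local data at `p i`. -/
noncomputable def vP (D : BipData (Adj d) G) (hd : ∀ i, 0 < d i) (i : Bool) :
    VData G (tau D) {j // Adj d i j} where
  v := D.p i
  φ := D.phi i
  σ := D.sig i
  P := {⟨none, trivial⟩}
  φ_σ := D.phi_sig
  φ_v := D.phi_p i i
  comm := D.commute_sig
  cent := D.centralizer_p'
  rich {z s} hs hc h1 hR := by
    rcases rich_classification D h1 hR with ⟨i', s', g, hs', rfl⟩ | ⟨s', g, hs', rfl⟩
    · left
      simp [D.phi_p]
    · right
      have h2 : D.swap.proj (D.q none) = 1 := D.swap.proj_p none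
      refine ⟨D.eq_sig hs hc (by simp [h2]), (D.phi i g)⁻¹, _, s', Finset.mem_singleton_self _, ?_⟩
      rw [map_mul, map_mul, map_zpow, D.phi_q (i := i) (j := none) trivial, map_inv, inv_inv]
  rich_v := D.rich_p (a := none) (b := some ⟨i, ⟨0, hd i⟩⟩) (by simp) trivial rfl
  rich_w w hw := by
    rw [Finset.mem_singleton] at hw
    subst hw
    rw [D.sig_of]
    exact D.swap.rich_p (a := true) (b := false) (by simp) trivial trivial
  tau_w w hw j h := by
    rw [Finset.mem_singleton] at hw
    subst hw
    rw [tau_conj, D.sig_of, tau_q]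

/-- The local data at the centre. -/
noncomputable def vC (D : BipData (Adj d) G) (hd : ∀ i, 0 < d i) :
    VData G (tau D) {i // Adj d i none} where
  v := D.q none
  φ := D.swap.phi none
  σ := D.swap.sig none
  P := {⟨true, trivial⟩, ⟨false, trivial⟩}
  φ_σ := D.swap.phi_sig
  φ_v := D.swap.phi_p none none
  comm := D.swap.commute_sig
  cent := D.swap.centralizer_p'
  rich {z s} hs hc h1 hR := by
    rcases rich_classification D h1 hR with ⟨i', s', g, hs', rfl⟩ | ⟨s', g, hs', rfl⟩
    · right
      refine ⟨D.swap.eq_sig (i := none) hs hc ?_, (D.swap.phi none g)⁻¹, ⟨i', trivial⟩, s', ?_, ?_⟩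
      · change D.proj _ = 1
        simp
      · cases i' <;> simp
      · rw [map_mul, map_mul, map_zpow]
        erw [D.swap.phi_q (i := none) (j := i') trivial]
        rw [map_inv, inv_inv]
    · left
      have : D.swap.phi none (D.q none) = 1 := D.swap.phi_p none none
      simp [this]
  rich_v := D.swap.rich_p (a := true) (b := false) (by simp) trivial trivial
  rich_w w hw := by
    rw [D.swap.sig_of]
    exact D.rich_p (i := w.1) (a := none) (b := some ⟨w.1, ⟨0, hd w.1⟩⟩) (by simp) trivial rfl
  tau_w w hw j h := by
    rw [tau_conj, D.swap.sig_of]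
    exact tau_p D w.1 j

end TreeRAAG

namespace TreeRAAG

/-! ### Counting conjugates of peripheral elements -/

theorem expo_of {α : Type} [DecidableEq α] (s t : α) :
    expo t (FreeGroup.of s) = if s = t then Multiplicative.ofAdd 1 else 1 := by
  simp [expo]

/-- A conjugate of a power of a letter determines the letter, the exponent and the coset of the
conjugator. -/
theorem conj_zpow_inj {L : Type} {h₁ h₂ : FreeGroup L} {w₁ w₂ : L} {a b : ℤ} (ha : a ≠ 0)
    (h : h₁⁻¹ * FreeGroup.of w₁ ^ a * h₁ = h₂⁻¹ * FreeGroup.of w₂ ^ b * h₂) :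
    w₁ = w₂ ∧ a = b ∧ ∃ k : ℤ, h₂ = FreeGroup.of w₁ ^ k * h₁ := by
  classical
  have h1 := congrArg (expo w₁) h
  have h2 : ∀ (x : FreeGroup L) (w : L) (n : ℤ),
      expo w₁ (x⁻¹ * FreeGroup.of w ^ n * x) = expo w₁ (FreeGroup.of w) ^ n := by
    intro x w n
    rw [map_mul, map_mul, map_inv, mul_comm, mul_inv_cancel_left, map_zpow]
  rw [h2, h2, expo_of, expo_of, if_pos rfl] at h1
  by_cases hw : w₂ = w₁
  · subst hw
    rw [if_pos rfl] at h1
    have h3 : a = b := by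
      have := congrArg Multiplicative.toAdd h1
      simpa using this
    subst h3
    refine ⟨rfl, rfl, ?_⟩
    obtain ⟨k, hk⟩ := eq_zpow_of_commute (x := h₂ * h₁⁻¹) (t := w₂) ha (by
      change _ * _ = _ * _
      have := congrArg (fun v => h₂ * v * h₁⁻¹) h
      simpa [mul_assoc] using this)
    exact ⟨k, by rw [← hk]; group⟩
  · rw [if_neg hw, one_zpow] at h1
    have := congrArg Multiplicative.toAdd h1
    simp at this
    exact absurd this ha

/-- Two maps of a group onto finite-index subgroups of free groups having the same kernel and
matching the conjugates of powers of the generators in `P` with those for `P'`. -/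
structure Match {K L L' : Type} [Group K] (π : K →* FreeGroup L) (π' : K →* FreeGroup L')
    (P : Finset L) (P' : Finset L') : Prop where
  ker : ∀ k, π k = 1 ↔ π' k = 1
  fin : π.range.FiniteIndex
  fin' : π'.range.FiniteIndex
  fwd : ∀ k h w (j : ℤ), w ∈ P → j ≠ 0 → π k = h⁻¹ * FreeGroup.of w ^ j * h →
    ∃ (h' : FreeGroup L') (w' : L') (j' : ℤ), w' ∈ P' ∧ j' ≠ 0 ∧ π' k = h'⁻¹ * FreeGroup.of w' ^ j' * h'
  bwd : ∀ k h w (j : ℤ), w ∈ P' → j ≠ 0 → π' k = h⁻¹ * FreeGroup.of w ^ j * h →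
    ∃ (h' : FreeGroup L) (w' : L) (j' : ℤ), w' ∈ P ∧ j' ≠ 0 ∧ π k = h'⁻¹ * FreeGroup.of w' ^ j' * h'

namespace Match

variable {K L L' : Type} [Group K] {π : K →* FreeGroup L} {π' : K →* FreeGroup L'}
  {P : Finset L} {P' : Finset L'}

theorem symm (M : Match π π' P P') : Match π' π P' P :=
  ⟨fun k => (M.ker k).symm, M.fin', M.fin, M.bwd, M.fwd⟩

/-- `k` witnesses that the conjugates of `w` by `h` and of `w'` by `h'` correspond. -/
structure Wit (π : K →* FreeGroup L) (π' : K →* FreeGroup L') (k : K) (h : FreeGroup L) (w : L)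
    (s : ℤ) (h' : FreeGroup L') (w' : L') (s' : ℤ) : Prop where
  ne : s ≠ 0
  ne' : s' ≠ 0
  eq : π k = h⁻¹ * FreeGroup.of w ^ s * h
  eq' : π' k = h'⁻¹ * FreeGroup.of w' ^ s' * h'

theorem Wit.symm {k : K} {h w s h' w' s'} (W : Wit π π' k h w s h' w' s') :
    Wit π' π k h' w' s' h w s := ⟨W.ne', W.ne, W.eq', W.eq⟩

/-- Witnesses for the same letter `w` and the same coset determine the same letter `w'` and the same orbit
of `w'` on cosets, and have the same stretch factor `s' / s`. -/
theorem ratio (M : Match π π' P P') {k₁ k₂ : K} {h₁ h₂ w s₁ s₂ h₁' h₂' w₁' w₂' s₁' s₂'}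
    (W₁ : Wit π π' k₁ h₁ w s₁ h₁' w₁' s₁') (W₂ : Wit π π' k₂ h₂ w s₂ h₂' w₂' s₂')
    (hh : (h₁ : FreeGroup L ⧸ π.range) = h₂) :
    w₁' = w₂' ∧ s₁' * s₂ = s₂' * s₁ ∧
      ∃ e : ℤ, FreeGroup.of w₁' ^ e • (h₁' : FreeGroup L' ⧸ π'.range) = h₂' := by
  rw [QuotientGroup.eq] at hh
  obtain ⟨u, hu⟩ := hh
  have h2 : h₂ = h₁ * π u := by rw [hu]; group
  have e1 : π (k₁ ^ s₂ * (u * k₂ * u⁻¹) ^ (-s₁)) = 1 := by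
    rw [map_mul, map_zpow, map_zpow, map_mul, map_mul, map_inv, W₁.eq, W₂.eq, h2]
    have : π u * ((h₁ * π u)⁻¹ * FreeGroup.of w ^ s₂ * (h₁ * π u)) * (π u)⁻¹ =
      h₁⁻¹ * FreeGroup.of w ^ s₂ * h₁⁻¹⁻¹ := by group
    rw [this]
    nth_rewrite 2 [← inv_inv h₁]
    rw [conj_zpow, conj_zpow, ← zpow_mul, ← zpow_mul]
    have : s₂ * -s₁ = -(s₁ * s₂) := by ring
    rw [this, zpow_neg]; group
  rw [M.ker, map_mul, map_zpow, map_zpow, map_mul, map_mul, map_inv, W₁.eq', W₂.eq', zpow_neg,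
    mul_inv_eq_one] at e1
  have e2 : π' u * (h₂'⁻¹ * FreeGroup.of w₂' ^ s₂' * h₂') * (π' u)⁻¹ =
      (h₂' * (π' u)⁻¹)⁻¹ * FreeGroup.of w₂' ^ s₂' * (h₂' * (π' u)⁻¹)⁻¹⁻¹ := by group
  rw [e2, conj_zpow] at e1
  nth_rewrite 2 [← inv_inv h₁'] at e1
  rw [conj_zpow, ← zpow_mul, ← zpow_mul, inv_inv, inv_inv] at e1
  obtain ⟨rfl, h4, e, he⟩ := conj_zpow_inj (mul_ne_zero W₁.ne' W₂.ne) e1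
  refine ⟨rfl, h4, e, ?_⟩
  rw [MulAction.Quotient.smul_coe, smul_eq_mul, ← he, QuotientGroup.eq]
  exact ⟨u, by group⟩

/-- The length of the orbit of the coset `x` under the letter `w`. -/
noncomputable def per (π : K →* FreeGroup L) (w : L) (x : FreeGroup L ⧸ π.range) : ℕ :=
  Function.minimalPeriod (FreeGroup.of w • ·) x

/-- The conjugate by `h` of the infinite cyclic group generated by `w` meets the range of `π` in the
powers divisible by the orbit length. -/
theorem zpow_mem_iff {w : L} {h : FreeGroup L} {s : ℤ} :
    (∃ k, π k = h⁻¹ * FreeGroup.of w ^ s * h) ↔ (per π w h : ℤ) ∣ s := by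
  rw [per, ← MulAction.zpow_smul_eq_iff_minimalPeriod_dvd, MulAction.Quotient.smul_coe, eq_comm,
    QuotientGroup.eq, smul_eq_mul, ← mul_assoc]
  rfl

theorem per_orbit {w : L} (e : ℤ) (x : FreeGroup L ⧸ π.range) :
    per π w (FreeGroup.of w ^ e • x) = per π w x := by
  rw [per, per]
  apply Nat.dvd_antisymm
  · rw [← Int.natCast_dvd_natCast, ← MulAction.zpow_smul_eq_iff_minimalPeriod_dvd, smul_smul,
      ← zpow_add, add_comm, zpow_add, mul_smul,
      MulAction.zpow_smul_eq_iff_minimalPeriod_dvd.mpr dvd_rfl]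
  · rw [← Int.natCast_dvd_natCast, ← MulAction.zpow_smul_eq_iff_minimalPeriod_dvd]
    apply smul_left_cancel (FreeGroup.of w ^ e)
    rw [smul_smul, ← zpow_add, add_comm, zpow_add, mul_smul,
      MulAction.zpow_smul_eq_iff_minimalPeriod_dvd.mpr dvd_rfl]

theorem per_pos (M : Match π π' P P') (w : L) (x : FreeGroup L ⧸ π.range) : 0 < per π w x := by
  have := M.fin
  rw [per]
  exact Function.minimalPeriod_pos_of_mem_periodicPts
    (Function.Injective.mem_periodicPts (MulAction.injective _) x)

theorem exists_wit (M : Match π π' P P') {w : L} (hw : w ∈ P) (h : FreeGroup L) :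
    ∃ (k : K) (h' : FreeGroup L') (w' : L') (s' : ℤ), w' ∈ P' ∧
      Wit π π' k h w (per π w h) h' w' s' := by
  obtain ⟨k, hk⟩ := zpow_mem_iff.mpr (dvd_refl (per π w h : ℤ))
  have h0 : (per π w h : ℤ) ≠ 0 := by exact_mod_cast (M.per_pos w h).ne'
  obtain ⟨h', w', j, hw', hj, e⟩ := M.fwd k h w _ hw h0 hk
  exact ⟨k, h', w', j, hw', h0, hj, hk, e⟩

theorem per_le (M : Match π π' P P') {k : K} {h w s h' w' s'} (hw : w ∈ P)
    (W : Wit π π' k h w s h' w' s') :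
    per π' w' h' * s.natAbs ≤ s'.natAbs * per π w h := by
  obtain ⟨k₀, h₀', w₀', j, -, W₀⟩ := M.exists_wit hw h
  obtain ⟨rfl, h2, e, he⟩ := M.ratio W W₀ rfl
  have h3 := zpow_mem_iff.mp ⟨k₀, W₀.eq'⟩
  rw [← he, per_orbit] at h3
  have h4 : per π' w' h' ≤ j.natAbs :=
    Nat.le_of_dvd (Int.natAbs_pos.mpr W₀.ne') (Int.natCast_dvd.mp h3)
  have h5 := congrArg Int.natAbs h2
  rw [Int.natAbs_mul, Int.natAbs_mul, Int.natAbs_natCast] at h5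
  rw [h5]
  exact Nat.mul_le_mul_right _ h4

/-- The stretch factor is the quotient of the orbit lengths, since both generate the intersection of
the range with a maximal cyclic subgroup. -/
theorem per_eq (M : Match π π' P P') {k : K} {h w s h' w' s'} (hw : w ∈ P) (hw' : w' ∈ P')
    (W : Wit π π' k h w s h' w' s') :
    per π' w' h' * s.natAbs = s'.natAbs * per π w h := by
  apply le_antisymm (M.per_le hw W)
  have := M.symm.per_le hw' W.symm
  linarith

/-- The correspondence between conjugates of the letters in `P` and in `P'`: a pair of a letter and a
coset stands for the conjugate of the letter by a representative of the coset. -/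
def Rel (π : K →* FreeGroup L) (π' : K →* FreeGroup L') (y : {w // w ∈ P} × FreeGroup L ⧸ π.range)
    (y' : {w // w ∈ P'} × FreeGroup L' ⧸ π'.range) : Prop :=
  ∃ (k : K) (h : FreeGroup L) (s : ℤ) (h' : FreeGroup L') (s' : ℤ),
    (h : FreeGroup L ⧸ π.range) = y.2 ∧ (h' : FreeGroup L' ⧸ π'.range) = y'.2 ∧
    Wit π π' k h y.1.1 s h' y'.1.1 s'

theorem Rel.symm {y : {w // w ∈ P} × FreeGroup L ⧸ π.range}
    {y' : {w // w ∈ P'} × FreeGroup L' ⧸ π'.range} (h : Rel π π' y y') : Rel π' π y' y := by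
  obtain ⟨k, h, s, h', s', e, e', W⟩ := h
  exact ⟨k, h', s', h, s, e', e, W.symm⟩

/-- The pairs corresponding to a given pair form a single orbit of a letter. -/
theorem ncard_rel (M : Match π π' P P') {y : {w // w ∈ P} × FreeGroup L ⧸ π.range}
    {y' : {w // w ∈ P'} × FreeGroup L' ⧸ π'.range} (h : Rel π π' y y') :
    {z : {w // w ∈ P'} × FreeGroup L' ⧸ π'.range | Rel π π' y z}.ncard = per π' y'.1.1 y'.2 := by
  have := M.fin'
  have : {z : {w // w ∈ P'} × FreeGroup L' ⧸ π'.range | Rel π π' y z} =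
      (fun x => (y'.1, x)) '' MulAction.orbit (Subgroup.zpowers (FreeGroup.of y'.1.1)) y'.2 := by
    obtain ⟨k₁, h₁, s₁, h₁', s₁', e₁, e₁', W₁⟩ := h
    ext z
    constructor
    · rintro ⟨k, h, s, h', s', e, e', W⟩
      obtain ⟨h2, h3, n, h4⟩ := M.ratio W₁ W (e₁.trans e.symm)
      refine ⟨z.2, ⟨⟨FreeGroup.of y'.1.1 ^ n, n, rfl⟩, ?_⟩, ?_⟩
      · rw [← e', ← h4, ← e₁']; rfl
      · exact Prod.ext (Subtype.ext h2) rfl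
    · rintro ⟨_, ⟨⟨_, n, rfl⟩, rfl⟩, rfl⟩
      refine ⟨k₁, h₁, s₁, FreeGroup.of y'.1.1 ^ n * h₁', s₁', e₁, ?_, W₁.ne, W₁.ne', W₁.eq, ?_⟩
      · change _ = FreeGroup.of y'.1.1 ^ n • y'.2
        rw [← e₁', MulAction.Quotient.smul_coe, smul_eq_mul]
      · rw [W₁.eq']; group
  rw [this, Set.ncard_image_of_injective _ (Prod.mk_right_injective _), per]
  have h1 := @MulAction.minimalPeriod_eq_card _ _ _ (FreeGroup.of y'.1.1) _ y'.2
    (Fintype.ofFinite _)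
  exact (h1.trans (@Nat.card_eq_fintype_card _ (_)).symm).symm

/-- If `ρ` is the stretch factor of the conjugate described by a pair, then the sum of `ρ` over all pairs
on one side is the number of pairs on the other side: each pair `y` contributes `ρ y`, which is the
number of pairs `y'` corresponding to it divided by the orbit length of `y`, and every `y'` corresponds
to exactly one orbit. -/
theorem count (M : Match π π' P P') (ρ : {w // w ∈ P} × FreeGroup L ⧸ π.range → ℚ)
    (hρ : ∀ y, ∃ (k : K) (h : FreeGroup L) (s : ℤ) (h' : FreeGroup L') (w' : L') (s' : ℤ),
      (h : FreeGroup L ⧸ π.range) = y.2 ∧ w' ∈ P' ∧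
      Wit π π' k h y.1.1 s h' w' s' ∧ ρ y * s.natAbs = s'.natAbs) :
    ∑ᶠ y, ρ y = P'.card * π'.range.index := by
  classical
  have := M.fin
  have := M.fin'
  have : Fintype (FreeGroup L ⧸ π.range) := Fintype.ofFinite _
  have : Fintype (FreeGroup L' ⧸ π'.range) := Fintype.ofFinite _
  rw [finsum_eq_sum_of_fintype]
  have h1 : ∀ y, ρ y = ∑ y' : {w // w ∈ P'} × FreeGroup L' ⧸ π'.range,
      if Rel π π' y y' then (per π y.1.1 y.2 : ℚ)⁻¹ else 0 := by
    intro y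
    obtain ⟨k, h, s, h', w', s', e, hw', W, hr⟩ := hρ y
    have h2 : Rel π π' y (⟨w', hw'⟩, (h' : FreeGroup L' ⧸ π'.range)) :=
      ⟨k, h, s, h', s', e, rfl, W⟩
    have h3 := M.ncard_rel h2
    rw [← Finset.sum_filter, Finset.sum_const, nsmul_eq_mul]
    have h4 : (Finset.univ.filter (Rel (P' := P') π π' y)).card = per π' w' h' := by
      rw [← h3, ← Set.ncard_coe_finset]; simp
    rw [h4]
    have h5 := M.per_eq y.1.2 hw' W
    rw [e] at h5
    have h6 : (per π y.1.1 y.2 : ℚ) ≠ 0 := by exact_mod_cast (M.per_pos _ _).ne'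
    have h7 : (s.natAbs : ℚ) ≠ 0 := by exact_mod_cast (Int.natAbs_pos.mpr W.ne).ne'
    have h8 : (per π' w' h' : ℚ) * s.natAbs = s'.natAbs * per π y.1.1 y.2 := by exact_mod_cast h5
    rw [eq_mul_inv_iff_mul_eq₀ h6]
    apply mul_right_cancel₀ h7
    rw [h8, ← hr]; ring
  rw [Finset.sum_congr rfl fun y _ => h1 y, Finset.sum_comm]
  have h2 : ∀ y' : {w // w ∈ P'} × FreeGroup L' ⧸ π'.range,
      (∑ y : {w // w ∈ P} × FreeGroup L ⧸ π.range, if Rel π π' y y' then (per π y.1.1 y.2 : ℚ)⁻¹ else 0) = 1 := by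
    intro y'
    obtain ⟨h', e'⟩ := QuotientGroup.mk_surjective y'.2
    obtain ⟨k, h, w, s, hw, W⟩ := M.symm.exists_wit y'.1.2 h'
    have h3 : Rel π π' ((⟨w, hw⟩ : {w // w ∈ P}), (h : FreeGroup L ⧸ π.range)) y' :=
      ⟨k, h, _, h', _, rfl, e', W.symm⟩
    have h4 : ∀ y : {w // w ∈ P} × FreeGroup L ⧸ π.range, Rel π π' y y' →
        (Finset.univ.filter fun z : {w // w ∈ P} × FreeGroup L ⧸ π.range => Rel π π' z y').card = per π y.1.1 y.2 := by
      intro y hy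
      rw [← M.symm.ncard_rel hy.symm, ← Set.ncard_coe_finset]
      congr 1
      ext z
      simp only [Finset.coe_filter, Finset.mem_univ, true_and, Set.mem_ofPred_eq]
      exact ⟨Rel.symm, Rel.symm⟩
    rw [← Finset.sum_filter]
    rw [Finset.sum_congr rfl fun y hy => by rw [← h4 y (Finset.mem_filter.mp hy).2]]
    rw [Finset.sum_const, nsmul_eq_mul, mul_inv_cancel₀]
    rw [h4 _ h3]
    exact_mod_cast (M.per_pos _ _).ne'
  rw [Finset.sum_congr rfl fun y _ => h2 y, Finset.sum_const, nsmul_eq_mul, mul_one,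
    Finset.card_univ, Fintype.card_prod, Fintype.card_coe, Subgroup.index,
    Nat.card_eq_fintype_card]
  push_cast; rfl

end Match

end TreeRAAG

namespace TreeRAAG

/-! ### The rank of a finite-index subgroup of a free group -/

section Rank

variable {L X : Type} [MulAction (FreeGroup L) X]

/-- `C` is a crossed homomorphism from the free group to the rational functions on `X`. -/
def IsCocycle (C : FreeGroup L → X → ℚ) : Prop :=
  ∀ g h x, C (g * h) x = C g (h • x) + C h x

theorem IsCocycle.one {C : FreeGroup L → X → ℚ} (h : IsCocycle C) (x : X) : C 1 x = 0 := by
  have := h 1 1 x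
  rw [one_mul, one_smul] at this
  linarith

theorem IsCocycle.inv {C : FreeGroup L → X → ℚ} (h : IsCocycle C) (g : FreeGroup L) (x : X) :
    C g⁻¹ x = - C g (g⁻¹ • x) := by
  have := h g g⁻¹ x
  rw [mul_inv_cancel, h.one] at this
  linarith

theorem IsCocycle.ext {C C' : FreeGroup L → X → ℚ} (h : IsCocycle C) (h' : IsCocycle C')
    (e : ∀ l x, C (FreeGroup.of l) x = C' (FreeGroup.of l) x) (g : FreeGroup L) (x : X) :
    C g x = C' g x := by
  induction g using FreeGroup.induction_on generalizing x with
  | C1 => rw [h.one, h'.one]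
  | of l => exact e l x
  | inv_of l _ => rw [h.inv, h'.inv, e]
  | mul a b ha hb => rw [h, h', ha, hb]

/-- The permutations of `X × ℚ` defining the crossed homomorphism with given values on the
generators. -/
def cocPerm (c : L → X → ℚ) (l : L) : Equiv.Perm (X × ℚ) where
  toFun y := (FreeGroup.of l • y.1, y.2 + c l y.1)
  invFun y := ((FreeGroup.of l)⁻¹ • y.1, y.2 - c l ((FreeGroup.of l)⁻¹ • y.1))
  left_inv y := by simp
  right_inv y := by simp

/-- The crossed homomorphism with given values on the generators. -/
noncomputable def coc (c : L → X → ℚ) (g : FreeGroup L) (x : X) : ℚ :=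
  (FreeGroup.lift (cocPerm c) g (x, 0)).2

theorem cocPerm_lift (c : L → X → ℚ) (g : FreeGroup L) : ∀ (x : X) (t : ℚ),
    FreeGroup.lift (cocPerm c) g (x, t) = (g • x, t + coc c g x) := by
  have key : ∀ g, (∃ k : X → ℚ, ∀ (x : X) (t : ℚ),
      FreeGroup.lift (cocPerm c) g (x, t) = (g • x, t + k x)) → ∀ (x : X) (t : ℚ),
      FreeGroup.lift (cocPerm c) g (x, t) = (g • x, t + coc c g x) := by
    rintro g ⟨k, hk⟩ x t
    rw [coc, hk, hk]; simp
  induction g using FreeGroup.induction_on with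
  | C1 => apply key; exact ⟨0, fun x t => by simp⟩
  | of l => apply key; exact ⟨c l, fun x t => by simp [cocPerm]⟩
  | inv_of l h =>
    apply key
    refine ⟨fun x => - coc c (FreeGroup.of l) ((FreeGroup.of l)⁻¹ • x), fun x t => ?_⟩
    rw [map_inv, Equiv.Perm.inv_eq_iff_eq, h]
    simp
  | mul a b ha hb =>
    apply key
    refine ⟨fun x => coc c b x + coc c a (b • x), fun x t => ?_⟩
    rw [map_mul, Equiv.Perm.mul_apply, hb, ha, mul_smul, add_assoc]

theorem coc_isCocycle (c : L → X → ℚ) : IsCocycle (coc c) := by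
  intro g h x
  have h1 := cocPerm_lift c (g * h) x 0
  rw [map_mul, Equiv.Perm.mul_apply, cocPerm_lift, cocPerm_lift] at h1
  have := congrArg Prod.snd h1
  simp only [zero_add] at this
  rw [← this, add_comm]

theorem coc_of (c : L → X → ℚ) (l : L) (x : X) : coc c (FreeGroup.of l) x = c l x := by
  simp [coc, cocPerm]

end Rank

section Restriction

variable {L : Type} (U : Subgroup (FreeGroup L))

theorem smul_base {u : FreeGroup L} (hu : u ∈ U) :
    u • ((1 : FreeGroup L) : FreeGroup L ⧸ U) = (1 : FreeGroup L) := by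
  rw [MulAction.Quotient.smul_coe, eq_comm, QuotientGroup.eq]; simpa using hu

/-- The restriction of crossed homomorphisms to homomorphisms on the stabilizer `U` of the base point.
A crossed homomorphism is given by its values on the letters, which are arbitrary. -/
noncomputable def resU : (L → FreeGroup L ⧸ U → ℚ) →ₗ[ℚ] (Additive U →+ ℚ) where
  toFun c :=
    { toFun := fun u => coc c u.toMul.1 ((1 : FreeGroup L) : FreeGroup L ⧸ U)
      map_zero' := (coc_isCocycle c).one _
      map_add' := fun u v => by
        change coc c (u.toMul.1 * v.toMul.1) _ = _
        rw [coc_isCocycle c, smul_base U v.toMul.2] }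
  map_add' c c' := by
    ext u
    refine IsCocycle.ext (C' := fun g x => coc c g x + coc c' g x) (coc_isCocycle _) ?_ ?_ _ _
    · intro g h x
      simp only [coc_isCocycle c g h, coc_isCocycle c' g h]; ring
    · intro l x; simp [coc_of]
  map_smul' a c := by
    ext u
    refine IsCocycle.ext (C' := fun g x => a * coc c g x) (coc_isCocycle _) ?_ ?_ _ _
    · intro g h x
      simp only [coc_isCocycle c g h]; ring
    · intro l x; simp [coc_of]

/-- The coboundary of a function. -/
def cobU : (FreeGroup L ⧸ U → ℚ) →ₗ[ℚ] (L → FreeGroup L ⧸ U → ℚ) where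
  toFun f l x := f (FreeGroup.of l • x) - f x
  map_add' f f' := by ext l x; simp; ring
  map_smul' a f := by ext l x; simp; ring

theorem coc_cob (f : FreeGroup L ⧸ U → ℚ) (g : FreeGroup L) (x : FreeGroup L ⧸ U) :
    coc (cobU U f) g x = f (g • x) - f x := by
  refine IsCocycle.ext (C' := fun g x => f (g • x) - f x) (coc_isCocycle _) ?_ ?_ _ _
  · intro g h x; simp [mul_smul]
  · intro l x; rw [coc_of]; rfl

theorem out_smul (x : FreeGroup L ⧸ U) :
    x.out • ((1 : FreeGroup L) : FreeGroup L ⧸ U) = x := by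
  rw [MulAction.Quotient.smul_coe, smul_eq_mul, mul_one, QuotientGroup.out_eq']

theorem transv_mem (g : FreeGroup L) (x : FreeGroup L ⧸ U) :
    (g • x).out⁻¹ * g * x.out ∈ U := by
  rw [mul_assoc, ← QuotientGroup.eq, QuotientGroup.out_eq', ← smul_eq_mul,
    ← MulAction.Quotient.smul_coe, QuotientGroup.out_eq']

/-- A homomorphism on `U` extends to a crossed homomorphism by means of a transversal, as in Shapiro's
lemma. -/
theorem resU_surjective : Function.Surjective (resU U) := by
  intro θ
  let C : FreeGroup L → FreeGroup L ⧸ U → ℚ := fun g x => θ (Additive.ofMul ⟨_, transv_mem U g x⟩)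
  have hC : IsCocycle C := by
    intro g h x
    simp only [C]
    rw [← map_add, ← ofMul_mul]
    congr 2
    ext
    simp only [Subgroup.coe_mul, mul_smul]
    group
  refine ⟨fun l x => C (FreeGroup.of l) x, ?_⟩
  ext u
  change coc _ _ _ = _
  rw [IsCocycle.ext (coc_isCocycle _) hC (fun l x => coc_of _ l x)]
  set b : FreeGroup L ⧸ U := ((1 : FreeGroup L) : FreeGroup L ⧸ U)
  have hb : b.out ∈ U := by
    have h := QuotientGroup.out_eq' b
    rw [eq_comm, QuotientGroup.eq] at h
    simpa using h
  have h1 : (⟨_, transv_mem U u.1 b⟩ : U) = ⟨_, hb⟩⁻¹ * u * ⟨_, hb⟩ := by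
    ext
    simp only [Subgroup.coe_mul, Subgroup.coe_inv]
    rw [smul_base U u.2]
  change θ (Additive.ofMul ⟨_, transv_mem U u.1 b⟩) = θ (Additive.ofMul u)
  rw [h1, ofMul_mul, ofMul_mul, map_add, map_add, ofMul_inv, map_neg]
  simp

/-- A crossed homomorphism is trivial on the stabilizer of the base point exactly when it is a
coboundary. -/
theorem ker_resU : LinearMap.ker (resU U) = LinearMap.range (cobU U) := by
  ext c
  rw [LinearMap.mem_ker, LinearMap.mem_range]
  constructor
  · intro hc
    have h0 : ∀ u ∈ U, coc c u ((1 : FreeGroup L) : FreeGroup L ⧸ U) = 0 := fun u hu =>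
      DFunLike.congr_fun hc (Additive.ofMul ⟨u, hu⟩)
    refine ⟨fun x => coc c x.out ((1 : FreeGroup L) : FreeGroup L ⧸ U), ?_⟩
    ext l x
    change coc c _ _ - coc c _ _ = _
    have hu := transv_mem U (FreeGroup.of l) x
    have h1 : FreeGroup.of l * x.out =
      (FreeGroup.of l • x).out * ((FreeGroup.of l • x).out⁻¹ * FreeGroup.of l * x.out) := by group
    have h2 := congrArg (fun g => coc c g ((1 : FreeGroup L) : FreeGroup L ⧸ U)) h1
    rw [coc_isCocycle, coc_isCocycle c _ (_ * _), smul_base U hu, h0 _ hu, out_smul, coc_of] at h2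
    linarith
  · rintro ⟨f, rfl⟩
    ext u
    change coc _ u.1 _ = 0
    rw [coc_cob, smul_base U u.2, sub_self]

/-- By transitivity only constant functions have vanishing coboundary. -/
theorem ker_cobU : LinearMap.ker (cobU U) = Submodule.span ℚ {fun _ => (1 : ℚ)} := by
  ext f
  rw [LinearMap.mem_ker, Submodule.mem_span_singleton]
  constructor
  · intro h
    refine ⟨f ((1 : FreeGroup L) : FreeGroup L ⧸ U), ?_⟩
    ext x
    have h1 := coc_cob U f x.out ((1 : FreeGroup L) : FreeGroup L ⧸ U)
    have h2 : coc (cobU U f) x.out ((1 : FreeGroup L) : FreeGroup L ⧸ U) = 0 := by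
      refine IsCocycle.ext (C' := fun _ _ => 0) (coc_isCocycle _) ?_ ?_ _ _
      · intro g h x; simp
      · intro l x; rw [coc_of, h]; rfl
    rw [h2, out_smul] at h1
    simp
    linarith
  · rintro ⟨a, rfl⟩
    ext l x
    simp [cobU]

/-- The Schreier index formula, in terms of the first rational cohomology. The crossed homomorphisms
have dimension `card L * index`, and the coboundaries have dimension `index - 1`. -/
theorem rank_formula [Fintype L] [U.FiniteIndex] :
    Module.finrank ℚ (Additive U →+ ℚ) + U.index = Fintype.card L * U.index + 1 := by
  have : Fintype (FreeGroup L ⧸ U) := Fintype.ofFinite _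
  have h1 := LinearMap.finrank_range_add_finrank_ker (resU U)
  have h2 := LinearMap.finrank_range_add_finrank_ker (cobU U)
  rw [LinearMap.range_eq_top.mpr (resU_surjective U), finrank_top, ker_resU] at h1
  rw [ker_cobU, finrank_span_singleton, Module.finrank_fintype_fun_eq_card] at h2
  · have h3 : Module.finrank ℚ (L → FreeGroup L ⧸ U → ℚ) = Fintype.card L * U.index := by
      rw [Module.finrank_pi_fintype]
      simp [Subgroup.index, Nat.card_eq_fintype_card]
    rw [h3] at h1
    have h4 : U.index = Fintype.card (FreeGroup L ⧸ U) := by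
      rw [Subgroup.index, Nat.card_eq_fintype_card]
    omega
  · intro h
    have := congrFun h ((1 : FreeGroup L) : FreeGroup L ⧸ U)
    simp at this

end Restriction

/-- The two ranges are isomorphic, so their ranks in the Schreier index formula agree. -/
theorem Match.index_eq {K L L' : Type} [Group K] [Fintype L] [Fintype L'] {π : K →* FreeGroup L}
    {π' : K →* FreeGroup L'} {P : Finset L} {P' : Finset L'} (M : Match π π' P P') :
    (π.range.index : ℚ) * (Fintype.card L - 1) = π'.range.index * (Fintype.card L' - 1) := by
  have := M.fin
  have := M.fin'
  have hk : π.ker = π'.ker := by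
    ext k; exact M.ker k
  let e : π.range ≃* π'.range :=
    ((QuotientGroup.quotientKerEquivRange π).symm.trans (QuotientGroup.quotientMulEquivOfEq hk)).trans
      (QuotientGroup.quotientKerEquivRange π')
  let f : (Additive π'.range →+ ℚ) ≃ₗ[ℚ] (Additive π.range →+ ℚ) :=
    { toFun := fun θ => θ.comp (MulEquiv.toAdditive e).toAddMonoidHom
      invFun := fun θ => θ.comp (MulEquiv.toAdditive e.symm).toAddMonoidHom
      map_add' := fun _ _ => rfl
      map_smul' := fun _ _ => rfl
      left_inv := fun θ => by
        ext u
        exact congrArg (fun v => θ (Additive.ofMul v)) (e.apply_symm_apply u)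
      right_inv := fun θ => by
        ext u
        exact congrArg (fun v => θ (Additive.ofMul v)) (e.symm_apply_apply u) }
  have h := f.finrank_eq
  have h1 := rank_formula π.range
  have h2 := rank_formula π'.range
  rw [h] at h2
  have h3 : Fintype.card L * π.range.index + π'.range.index =
    Fintype.card L' * π'.range.index + π.range.index := by omega
  have h4 : (Fintype.card L * π.range.index + π'.range.index : ℚ) =
    Fintype.card L' * π'.range.index + π.range.index := by exact_mod_cast h3
  linarith

end TreeRAAG

namespace TreeRAAG

/-! ### Commensurations and centralizers -/

/-- Richness is preserved and reflected by embeddings of finite index. -/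
theorem rich_map_iff {A G : Type} [Group A] [Group G] {ι : A →* G} (hι : Function.Injective ι)
    (hf : ι.range.FiniteIndex) {a : A} : Rich (ι a) ↔ Rich a := by
  constructor
  · rintro ⟨x, y, hx, hy, hxy⟩
    obtain ⟨m, hm, -, u, hu⟩ := Subgroup.exists_pow_mem_of_index_ne_zero hf.index_ne_zero x
    obtain ⟨n, hn, -, v, hv⟩ := Subgroup.exists_pow_mem_of_index_ne_zero hf.index_ne_zero y
    refine ⟨u ^ n, v ^ m, ?_, ?_, ?_⟩
    · apply hι
      rw [map_mul, map_mul, map_pow, hu]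
      exact (hx.pow_left m).pow_left n
    · apply hι
      rw [map_mul, map_mul, map_pow, hv]
      exact (hy.pow_left n).pow_left m
    · intro k hk hc
      have h1 := hc.map ι
      rw [map_pow, map_pow, map_pow, map_pow, hu, hv, ← pow_mul, ← pow_mul, ← pow_mul,
        ← pow_mul, mul_left_comm n m k] at h1
      exact hxy _ (by positivity) h1
  · rintro ⟨x, y, hx, hy, hxy⟩
    refine ⟨ι x, ι y, hx.map ι, hy.map ι, fun n hn hc => hxy n hn ?_⟩
    apply hι
    simpa using hc.eq

/-- Two finite-index embeddings of a group `A`, with an element `y` of `A` that becomes a power of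
a vertex in both targets. -/
structure Setup {A G G' : Type} [Group A] [Group G] [Group G'] {τ : G → ℕ} {τ' : G' → ℕ}
    {L L' : Type} (ι : A →* G) (ι' : A →* G') (V : VData G τ L) (V' : VData G' τ' L')
    (y : A) (t t' : ℤ) : Prop where
  inj : Function.Injective ι
  inj' : Function.Injective ι'
  fin : ι.range.FiniteIndex
  fin' : ι'.range.FiniteIndex
  eq : ι y = V.v ^ t
  eq' : ι' y = V'.v ^ t'
  ne : t ≠ 0
  ne' : t' ≠ 0

namespace Setup

variable {A G G' : Type} [Group A] [Group G] [Group G'] {τ : G → ℕ} {τ' : G' → ℕ}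
    {L L' : Type} {ι : A →* G} {ι' : A →* G'} {V : VData G τ L} {V' : VData G' τ' L'}
    {y : A} {t t' : ℤ}

theorem symm (S : Setup ι ι' V V' y t t') : Setup ι' ι V' V y t' t :=
  ⟨S.inj', S.inj, S.fin', S.fin, S.eq', S.eq, S.ne', S.ne⟩

theorem phi_y (S : Setup ι ι' V V' y t t') : V.φ (ι y) = 1 := by
  rw [S.eq, map_zpow, V.φ_v, one_zpow]

theorem commute (S : Setup ι ι' V V' y t t') {a : A} (h : Commute a y) :
    Commute (ι a) (V.v ^ t) := by
  rw [← S.eq]; exact h.map ι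

/-- An element of the centralizer of `y` that becomes a power of the vertex in `G` has a common power with
`y`, so it also becomes a power of the vertex in `G'`. -/
theorem ker (S : Setup ι ι' V V' y t t') {a : A} (h : Commute a y) (h1 : V.φ (ι a) = 1) :
    V'.φ (ι' a) = 1 := by
  obtain ⟨k, hk⟩ := V.cent S.ne (S.commute h)
  rw [h1, map_one, mul_one] at hk
  have h2 : a ^ t = y ^ k := by
    apply S.inj
    rw [map_zpow, map_zpow, S.eq, hk, ← zpow_mul, ← zpow_mul, mul_comm]
  have h3 : (V'.φ (ι' a)) ^ t = 1 := by
    rw [← map_zpow, ← map_zpow, h2, map_zpow, map_zpow, S.symm.phi_y, one_zpow]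
  by_contra hne
  apply hne
  apply zpow_left_injective S.ne
  simpa using h3

/-- An element of `A` that becomes a conjugate of a power of a neighbour in `P` is rich, hence becomes such
a conjugate in the other target as well, with exponent measured by the weight `τ'`. -/
theorem core (S : Setup ι ι' V V' y t t') {a : A} (h : Commute a y)
    (h1 : ι a = V.σ (V.φ (ι a))) {u : FreeGroup L} {w : L} {j : ℤ} (hw : w ∈ V.P) (hj : j ≠ 0)
    (h2 : V.φ (ι a) = u⁻¹ * FreeGroup.of w ^ j * u) :
    ∃ (u' : FreeGroup L') (w' : L') (j' : ℤ), w' ∈ V'.P ∧ j' ≠ 0 ∧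
      V'.φ (ι' a) = u'⁻¹ * FreeGroup.of w' ^ j' * u' ∧ τ' (ι' a) = j'.natAbs := by
  have h3 : V.φ (ι a) ≠ 1 := by
    rw [h2]
    intro h
    have := congrArg (fun x => u * x * u⁻¹) h
    simp only [mul_assoc, mul_inv_cancel_left, mul_inv_cancel, mul_one] at this
    exact of_zpow_ne_one w hj this
  have hR : Rich (ι a) := by
    rw [h1, h2]
    have := ((V.rich_w w hw).zpow j).conj (V.σ u)⁻¹
    simpa using this
  have hR' : Rich (ι' a) := (rich_map_iff S.inj' S.fin').mpr ((rich_map_iff S.inj S.fin).mp hR)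
  have h4 : V'.φ (ι' a) ≠ 1 := fun h5 => h3 (S.symm.ker h h5)
  rcases V'.rich S.ne' (S.symm.commute h) (fun h => h4 (by rw [h, map_one])) hR' with
    h5 | ⟨h5, u', w', j', hw', h6⟩
  · exact absurd h5 h4
  · refine ⟨u', w', j', hw', ?_, h6, ?_⟩
    · rintro rfl
      apply h4; rw [h6]; simp
    · rw [h5, h6, map_mul, map_mul, map_inv, map_zpow, V'.tau_w w' hw']

/-- As in `core`, but only modulo the powers of the vertex. A suitable power of `a` differs from an element
to which `core` applies by a power of `y`, and roots are extracted in the free group on the link. -/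
theorem fwd (S : Setup ι ι' V V' y t t') {a : A} (h : Commute a y)
    {u : FreeGroup L} {w : L} {j : ℤ} (hw : w ∈ V.P) (hj : j ≠ 0)
    (h2 : V.φ (ι a) = u⁻¹ * FreeGroup.of w ^ j * u) :
    ∃ (u' : FreeGroup L') (w' : L') (j' : ℤ), w' ∈ V'.P ∧ j' ≠ 0 ∧
      V'.φ (ι' a) = u'⁻¹ * FreeGroup.of w' ^ j' * u' := by
  obtain ⟨m, hm⟩ := V.cent S.ne (S.commute h)
  have h3 : ι (a ^ t * (y ^ m)⁻¹) = V.σ (V.φ (ι a) ^ t) := by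
    have hc := V.comm (V.φ (ι a))
    rw [map_mul, map_zpow, map_inv, map_zpow, S.eq, map_zpow]
    nth_rewrite 1 [hm]
    rw [(hc.zpow_left m).mul_zpow, ← zpow_mul, ← zpow_mul, mul_comm m t,
      ((hc.zpow_left (t * m)).zpow_right t).eq]
    group
  have h4 : V.φ (ι (a ^ t * (y ^ m)⁻¹)) = V.φ (ι a) ^ t := by rw [h3, V.φ_σ]
  obtain ⟨u', w', j', hw', hj', h5, -⟩ := S.core (a := a ^ t * (y ^ m)⁻¹)
    ((h.zpow_left t).mul_left ((Commute.refl y).zpow_left m).inv_left) (by rw [h4, h3])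
    (u := u) (j := j * t) hw (mul_ne_zero hj S.ne) (by
      rw [h4, h2]
      nth_rewrite 2 [← inv_inv u]
      rw [conj_zpow, ← zpow_mul, inv_inv])
  have h6 : V'.φ (ι' a) ^ t = u'⁻¹ * FreeGroup.of w' ^ j' * u'⁻¹⁻¹ := by
    rw [inv_inv, ← h5, map_mul, map_mul, map_inv, map_inv, map_zpow, map_zpow, map_zpow, map_zpow,
      S.symm.phi_y, one_zpow, inv_one, mul_one]
  obtain ⟨k, hk⟩ := root_of_conj_zpow S.ne h6
  rw [inv_inv] at hk
  refine ⟨u', w', k, hw', ?_, hk⟩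
  rintro rfl
  rw [hk] at h6
  simp only [zpow_zero, mul_one, inv_mul_cancel, one_zpow, inv_inv] at h6
  have := congrArg (fun x => u' * x * u'⁻¹) h6
  simp only [mul_assoc, mul_inv_cancel_left, mul_inv_cancel, mul_one] at this
  exact of_zpow_ne_one w' hj' this.symm

/-- The map from the centralizer of `y` to the free group on the link. -/
def pi (ι : A →* G) (V : VData G τ L) (y : A) : Subgroup.centralizer {y} →* FreeGroup L :=
  (V.φ.comp ι).comp (Subgroup.subtype _)

theorem mem_cent {a : A} : a ∈ Subgroup.centralizer {y} ↔ Commute a y := by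
  rw [Subgroup.mem_centralizer_singleton_iff]
  exact ⟨fun h => h, fun h => h.eq⟩

theorem commute_of_sig (S : Setup ι ι' V V' y t t') {a : A} {x : FreeGroup L}
    (h : ι a = V.σ x) : Commute a y := by
  apply S.inj
  rw [map_mul, map_mul, h, S.eq]
  exact ((V.comm x).symm.zpow_right t).eq

/-- The range contains the intersection of `A` with the free group on the link. -/
theorem pi_fin (S : Setup ι ι' V V' y t t') : (pi ι V y).range.FiniteIndex := by
  have := S.fin
  have : (ι.range.comap V.σ).FiniteIndex := ⟨by
    rw [Subgroup.index_comap]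
    intro h0
    have h1 := Subgroup.relIndex_eq_zero_of_le_right le_top h0
    rw [Subgroup.relIndex_top_right] at h1
    exact this.index_ne_zero h1⟩
  refine Subgroup.finiteIndex_of_le (H := ι.range.comap V.σ) ?_
  rintro x ⟨a, ha⟩
  exact ⟨⟨a, mem_cent.mpr (S.commute_of_sig ha)⟩, by simp [pi, ha, V.φ_σ]⟩

/-- The projections to the free groups on the two links satisfy the hypotheses of the counting
lemma. -/
theorem toMatch (S : Setup ι ι' V V' y t t') : Match (pi ι V y) (pi ι' V' y) V.P V'.P where
  ker k := ⟨S.ker (mem_cent.mp k.2), S.symm.ker (mem_cent.mp k.2)⟩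
  fin := S.pi_fin
  fin' := S.symm.pi_fin
  fwd k _ _ _ hw hj h := S.fwd (mem_cent.mp k.2) hw hj h
  bwd k _ _ _ hw hj h := S.symm.fwd (mem_cent.mp k.2) hw hj h

/-- The sum of the stretch factors at a vertex having a single neighbour in `P`, by combining
`Match.count` with the comparison of indices `Match.index_eq`. -/
theorem count [Fintype L] [Fintype L'] (S : Setup ι ι' V V' y t t') {w : L} (hw : V.P = {w})
    (ρ : FreeGroup L ⧸ (pi ι V y).range → ℚ)
    (hρ : ∀ x, ∃ (a : A) (h : FreeGroup L) (s : ℤ), (h : FreeGroup L ⧸ (pi ι V y).range) = x ∧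
      s ≠ 0 ∧ ι a = V.σ (h⁻¹ * FreeGroup.of w ^ s * h) ∧ ρ x * s.natAbs = τ' (ι' a)) :
    (∑ᶠ x, ρ x) * (Fintype.card L' - 1) =
      V'.P.card * ((pi ι V y).range.index * (Fintype.card L - 1)) := by
  have M := S.toMatch
  have hw' : w ∈ V.P := by rw [hw]; exact Finset.mem_singleton_self w
  have h1 := M.count (fun z => ρ z.2) (by
    rintro ⟨⟨w₁, hw₁⟩, x⟩
    have hw₂ := hw₁
    rw [hw, Finset.mem_singleton] at hw₂
    subst hw₂
    obtain ⟨a, h, s, rfl, hs, ha, hr⟩ := hρ x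
    have h2 : V.φ (ι a) = h⁻¹ * FreeGroup.of w₁ ^ s * h := by rw [ha, V.φ_σ]
    have hc := S.commute_of_sig ha
    obtain ⟨u', w', j', hw', hj', h5, h6⟩ := S.core hc (by rw [h2, ha]) hw₁ hs h2
    exact ⟨⟨a, mem_cent.mpr hc⟩, h, s, u', w', j', rfl, hw', ⟨hs, hj', h2, h5⟩, by
      rw [← h6]; exact hr⟩)
  have h2 : ∑ᶠ z : {w // w ∈ V.P} × FreeGroup L ⧸ (pi ι V y).range, ρ z.2 = ∑ᶠ x, ρ x := by
    have hu : Unique {w // w ∈ V.P} := 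
      { default := ⟨w, hw'⟩
        uniq := fun z => Subtype.ext (Finset.mem_singleton.mp
          (by rw [← hw]; exact z.2)) }
    exact finsum_eq_of_bijective Prod.snd (Equiv.uniqueProd _ _).bijective fun _ => rfl
  rw [h2] at h1
  rw [h1, M.index_eq, mul_assoc]

end Setup

end TreeRAAG

namespace TreeRAAG

/-! ### Averaging over a finite-index subgroup -/

section Averaging

open BipData

variable {d d' : Bool → ℕ} {G G' : Type} [Group G] [Group G']

/-- The vertex `p i` has the centre and `d i` leaves as its neighbours. -/
theorem card_adj (i : Bool) : Nat.card {j : Outer d // Adj d i j} = d i + 1 := by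
  let e : Option (Fin (d i)) → {j : Outer d // Adj d i j} := fun o =>
    match o with
    | none => ⟨none, trivial⟩
    | some k => ⟨some ⟨i, k⟩, rfl⟩
  have he : Function.Bijective e := by
    constructor
    · rintro (_ | a) (_ | b) h <;> have h' := congrArg Subtype.val h <;> simp_all [e]
    · rintro ⟨_ | ⟨i', k⟩, hj⟩
      · exact ⟨none, rfl⟩
      · obtain rfl : i' = i := hj
        exact ⟨some k, rfl⟩
  rw [← Nat.card_congr (Equiv.ofBijective e he)]
  simp

theorem card_adj_none : Nat.card {i : Bool // Adj d i none} = 2 := by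
  rw [Nat.card_congr (Equiv.subtypeUnivEquiv (p := fun i => Adj d i none) fun _ => trivial)]
  simp

variable (D : BipData (Adj d) G) (D' : BipData (Adj d') G') (A : Subgroup G) [A.Normal]
  (f : A →* G')

/-- The conjugate `g * c ^ N * g⁻¹` of a power of the central vertex `c`, as an element of the
normal subgroup `A` of index `N`. -/
noncomputable def cpow (g : G) : A := MulAut.conjNormal g ⟨D.q none ^ A.index, A.pow_index_mem _⟩

/-- The factor by which `f` stretches the conjugate of the central vertex by an element of the
coset `x`. -/
noncomputable def stretch (x : G ⧸ A) : ℚ := tau D' (f (cpow D A x.out)) / A.index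

/-- The stretch factor does not depend on the representative of the coset, since `tau` is invariant under
conjugation. -/
theorem stretch_mk (g : G) : stretch D D' A f g = tau D' (f (cpow D A g)) / A.index := by
  obtain ⟨a, ha⟩ := QuotientGroup.mk_out_eq_mul A g
  have h1 : cpow D A (g * a) = (MulAut.conjNormal g a⁻¹)⁻¹ * cpow D A g * MulAut.conjNormal g a⁻¹ := by
    ext
    simp only [cpow, MulAut.conjNormal_apply, Subgroup.coe_mul, Subgroup.coe_inv]
    group
  rw [stretch, ha, h1, map_mul, map_mul, map_inv, tau_conj]

variable {D D' A f}

/-- The inclusion of `A` into `G` and a conjugate of `f` form a `Setup` at the vertex `p i` and the vertex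
of `G'` to which its translate by `g` is mapped. -/
theorem exists_setup [A.FiniteIndex] (hd : ∀ i, 0 < d i) (hf : Function.Injective f)
    (hr : f.range.FiniteIndex) (i : Bool) (g : G) {L' : Type} (V' : VData G' (tau D') L')
    {s : ℤ} (hs : s ≠ 0) {u : G'} {y : A} (hy : (y : G) = D.p i ^ A.index)
    (hu : f (MulAut.conjNormal g y) = u * V'.v ^ s * u⁻¹) :
    Setup A.subtype ((MulAut.conj u⁻¹).toMonoidHom.comp (f.comp (MulAut.conjNormal g).toMonoidHom))
      (vP D hd i) V' y A.index s where
  inj := A.subtype_injective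
  inj' := (MulAut.conj u⁻¹).injective.comp (hf.comp (MulAut.conjNormal g).injective)
  fin := by rw [A.range_subtype]; infer_instance
  fin' := by
    constructor
    rw [MonoidHom.range_comp, MonoidHom.range_comp, MonoidHom.range_eq_top_of_surjective
      (MulAut.conjNormal g : MulAut A).toMonoidHom (MulAut.conjNormal g).surjective, ← MonoidHom.range_eq_map,
      Subgroup.index_map_of_bijective (MulAut.conj u⁻¹).bijective]
    exact hr.index_ne_zero
  eq := by rw [zpow_natCast]; exact hy
  eq' := by
    simp only [MonoidHom.comp_apply, MulEquiv.coe_toMonoidHom, hu, MulAut.conj_apply]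
    group
  ne := by exact_mod_cast Subgroup.FiniteIndex.index_ne_zero
  ne' := hs

/-- The subgroup of the link group of `p i` that is induced by `A`. -/
noncomputable abbrev linkSub (D : BipData (Adj d) G) (A : Subgroup G) [A.Normal] (hd : ∀ i, 0 < d i) (i : Bool) :
    Subgroup (FreeGroup {j // Adj d i j}) :=
  (Setup.pi A.subtype (vP D hd i) ⟨D.p i ^ A.index, A.pow_index_mem _⟩).range

variable (D D' A f) in
/-- The sum of the stretch factors of the conjugates of the centre adjacent to the translate of `p i` by
`q`, one for each coset of `linkSub`. -/
noncomputable def linkSum (hd : ∀ i, 0 < d i) (i : Bool) (q : G ⧸ A) : ℚ :=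
  ∑ᶠ x : FreeGroup {j // Adj d i j} ⧸ linkSub D A hd i,
    stretch D D' A f (q * ((D.sig i x.out : G) : G ⧸ A)⁻¹)

/-- The value of `linkSum` when the translate of `p i` by `g` is mapped to a conjugate of the vertex
`V'`. -/
theorem linkSum_eq [A.FiniteIndex] (hd : ∀ i, 0 < d i) (hf : Function.Injective f)
    (hr : f.range.FiniteIndex) (i : Bool) (g : G) {L' : Type} [Fintype L']
    (V' : VData G' (tau D') L') {s : ℤ} (hs : s ≠ 0) {u : G'}
    (hu : f (MulAut.conjNormal g ⟨D.p i ^ A.index, A.pow_index_mem _⟩) = u * V'.v ^ s * u⁻¹) :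
    linkSum D D' A f hd i g * (Nat.card L' - 1) = V'.P.card * ((linkSub D A hd i).index * d i) := by
  have : Fintype {j // Adj d i j} := Fintype.ofFinite _
  have hN : (A.index : ℚ) ≠ 0 := by exact_mod_cast Subgroup.FiniteIndex.index_ne_zero
  have S := exists_setup hd hf hr i g V' hs rfl hu
  have h := S.count (w := ⟨none, trivial⟩) rfl
    (fun x => stretch D D' A f (g * ((D.sig i x.out : G) : G ⧸ A)⁻¹)) (by
      intro x
      refine ⟨cpow D A (D.sig i x.out)⁻¹, x.out, A.index, QuotientGroup.out_eq' x, S.ne, ?_, ?_⟩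
      · change _ = D.sig i _
        rw [map_mul, map_mul, map_inv, map_zpow, D.sig_of]
        simp [cpow]
      · rw [← QuotientGroup.mk_inv, ← QuotientGroup.mk_mul, stretch_mk, Int.natAbs_natCast,
          div_mul_cancel₀ _ hN]
        simp only [MonoidHom.comp_apply, MulEquiv.coe_toMonoidHom, MulAut.conj_apply]
        rw [← tau_conj D' u]
        congr 2
        simp only [cpow, map_mul, MulAut.mul_apply]
        group)
  rw [← Nat.card_eq_fintype_card, ← Nat.card_eq_fintype_card, card_adj] at h
  rw [linkSum, h]
  push_cast; ring

/-- The possible values of `linkSum` are `index * d i / d' i'` and `index * 2 * d i`, and `1 ≤ d' i'`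
is at most `d' true`. -/
theorem linkSum_bounds [A.FiniteIndex] (hd : ∀ i, 0 < d i) (hd' : ∀ i, 0 < d' i)
    (h1 : d' false = 1) (hf : Function.Injective f) (hr : f.range.FiniteIndex) (i : Bool)
    (q : G ⧸ A) :
    linkSum D D' A f hd i q ≤ 2 * ((linkSub D A hd i).index * d i) ∧
      (linkSub D A hd i).index * d i ≤ d' true * linkSum D D' A f hd i q := by
  obtain ⟨g, rfl⟩ := QuotientGroup.mk_surjective q
  have hN : A.index ≠ 0 := Subgroup.FiniteIndex.index_ne_zero
  have hA : A.subtype.range.FiniteIndex := by rw [A.range_subtype]; infer_instance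
  set y : A := ⟨D.p i ^ A.index, A.pow_index_mem _⟩ with hy
  have hR : Rich (f (MulAut.conjNormal g y)) := by
    rw [rich_map_iff hf hr, ← rich_map_iff A.subtype_injective hA]
    have h2 : Rich (D.p i ^ (A.index : ℤ)) := (vP D hd i).rich_v.zpow _
    simpa [hy] using h2.conj g
  have hne : f (MulAut.conjNormal g y) ≠ 1 := by
    intro h
    rw [map_eq_one_iff f hf, EmbeddingLike.map_eq_one_iff, hy, Subgroup.mk_eq_one] at h
    exact D.p_zpow_ne_one i (k := A.index) (by exact_mod_cast hN) (by rw [zpow_natCast]; exact h)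
  set I : ℚ := (linkSub D A hd i).index * d i with hI
  have hI0 : 0 ≤ I := by positivity
  have hd1 : (1 : ℚ) ≤ d' true := by exact_mod_cast hd' true
  have : ∀ i, Fintype {j // Adj d' i j} := fun i => Fintype.ofFinite _
  have : Fintype {i // Adj d' i none} := Fintype.ofFinite _
  rcases rich_classification D' hne hR with ⟨i', s, u, hs, hu⟩ | ⟨s, u, hs, hu⟩
  · have h := linkSum_eq hd hf hr i g (vP D' hd' i') hs hu
    rw [card_adj, ← hI] at h
    have hc : (vP D' hd' i').P.card = 1 := rfl
    rw [hc] at h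
    push_cast at h
    rw [add_sub_cancel_right, one_mul] at h
    cases i'
    · rw [h1, Nat.cast_one, mul_one] at h
      rw [h]
      constructor <;> nlinarith
    · constructor
      · have : 0 ≤ linkSum D D' A f hd i g := by
          by_contra hlt; push Not at hlt; nlinarith
        nlinarith
      · rw [← h, mul_comm]
  · have h := linkSum_eq hd hf hr i g (vC D' hd') hs hu
    rw [card_adj_none, ← hI] at h
    have hc : (vC D' hd').P.card = 2 := rfl
    rw [hc] at h
    norm_num at h
    rw [h]
    constructor <;> nlinarith

/-- Each coset of `linkSub` contributes the total stretch factor, as right translations permute the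
quotient group. -/
theorem sum_linkSum [A.FiniteIndex] [Fintype (G ⧸ A)] (hd : ∀ i, 0 < d i) (i : Bool)
    (hU : (linkSub D A hd i).FiniteIndex) :
    ∑ q, linkSum D D' A f hd i q = (linkSub D A hd i).index * ∑ q, stretch D D' A f q := by
  have : Fintype (FreeGroup {j // Adj d i j} ⧸ linkSub D A hd i) := Fintype.ofFinite _
  simp only [linkSum, finsum_eq_sum_of_fintype]
  rw [Finset.sum_comm]
  have h : ∀ x : FreeGroup {j // Adj d i j} ⧸ linkSub D A hd i,
      ∑ q, stretch D D' A f (q * ((D.sig i x.out : G) : G ⧸ A)⁻¹) = ∑ q, stretch D D' A f q :=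
    fun x => Equiv.sum_comp (Equiv.mulRight (((D.sig i x.out : G) : G ⧸ A)⁻¹)) _
  rw [Finset.sum_congr rfl fun x _ => h x, Finset.sum_const, Finset.card_univ, nsmul_eq_mul,
    ← Nat.card_eq_fintype_card, Subgroup.index]

/-- The total stretch factor is at most twice the index of `A` by summing over the translates of
`p false`, and at least `d true / d' true` times this index by summing over those of `p true`. -/
theorem le_of_embed (D : BipData (Adj d) G) (D' : BipData (Adj d') G') [A.FiniteIndex] (hd : ∀ i, 0 < d i) (hd' : ∀ i, 0 < d' i)
    (h1 : d false = 1) (h1' : d' false = 1) (hf : Function.Injective f)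
    (hr : f.range.FiniteIndex) : d true ≤ 2 * d' true := by
  have : Fintype (G ⧸ A) := Fintype.ofFinite _
  have hA : A.subtype.range.FiniteIndex := by rw [A.range_subtype]; infer_instance
  have hU : ∀ i, (linkSub D A hd i).FiniteIndex := fun i => by
    have S : Setup A.subtype A.subtype (vP D hd i) (vP D hd i)
        ⟨D.p i ^ A.index, A.pow_index_mem _⟩ A.index A.index :=
      ⟨A.subtype_injective, A.subtype_injective, hA, hA, (zpow_natCast _ _).symm,
        (zpow_natCast _ _).symm, by exact_mod_cast Subgroup.FiniteIndex.index_ne_zero,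
        by exact_mod_cast Subgroup.FiniteIndex.index_ne_zero⟩
    exact S.pi_fin
  have hpos : ∀ i, (0 : ℚ) < (linkSub D A hd i).index := fun i => by
    exact_mod_cast Nat.pos_of_ne_zero (hU i).index_ne_zero
  set S := ∑ q, stretch D D' A f q with hS
  set Q : ℚ := ((Fintype.card (G ⧸ A) : ℕ) : ℚ) with hQ
  have hQ0 : 0 < Q := by
    have : 0 < Fintype.card (G ⧸ A) := Fintype.card_pos
    rw [hQ]; exact_mod_cast this
  have e1 : S ≤ 2 * Q := by
    have h := Finset.sum_le_sum fun q (_ : q ∈ Finset.univ) =>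
      (linkSum_bounds (D := D) (D' := D') hd hd' h1' hf hr false q).1
    rw [sum_linkSum hd false (hU false), Finset.sum_const, Finset.card_univ, nsmul_eq_mul, h1,
      Nat.cast_one, mul_one, ← hS, ← hQ] at h
    nlinarith [hpos false]
  have e2 : Q * d true ≤ d' true * S := by
    have h := Finset.sum_le_sum fun q (_ : q ∈ Finset.univ) =>
      (linkSum_bounds (D := D) (D' := D') hd hd' h1' hf hr true q).2
    rw [← Finset.mul_sum Finset.univ _ (d' true : ℚ), sum_linkSum hd true (hU true), Finset.sum_const, Finset.card_univ,
      nsmul_eq_mul, ← hS, ← hQ] at h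
    refine le_of_mul_le_mul_left ?_ (hpos true)
    linarith
  have e3 : (d true : ℚ) ≤ 2 * d' true := by
    refine le_of_mul_le_mul_left ?_ hQ0
    have : (0 : ℚ) ≤ d' true := by positivity
    nlinarith
  exact_mod_cast e3

end Averaging

/-- The comparison for commensurable groups, obtained by passing to the normal core. -/
theorem le_of_commensurable {d d' : Bool → ℕ} {G G' : Type} [Group G] [Group G']
    (D : BipData (Adj d) G) (D' : BipData (Adj d') G') (hd : ∀ i, 0 < d i) (hd' : ∀ i, 0 < d' i)
    (h1 : d false = 1) (h1' : d' false = 1) {A : Subgroup G} {B : Subgroup G'}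
    (hA : A.FiniteIndex) (hB : B.FiniteIndex) (e : A ≃* B) : d true ≤ 2 * d' true := by
  let i : A.normalCore →* A := Subgroup.inclusion A.normalCore_le
  have hi : i.range.FiniteIndex := by
    rw [Subgroup.inclusion_range]
    infer_instance
  refine le_of_embed D D' (A := A.normalCore)
    (f := B.subtype.comp (e.toMonoidHom.comp i)) hd hd' h1 h1' ?_ ?_
  · exact B.subtype_injective.comp (e.injective.comp (Subgroup.inclusion_injective _))
  · constructor
    rw [MonoidHom.range_comp, Subgroup.index_map_subtype, MonoidHom.range_comp,
      Subgroup.index_map_of_bijective e.bijective]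
    exact mul_ne_zero hi.index_ne_zero hB.index_ne_zero

end TreeRAAG

namespace TreeRAAG

/-! ### The trees and their right-angled Artin groups -/

/-- The tree with centre `inr none` whose neighbours are the two vertices `inl i`, of which `inl i`
carries `d i` leaves `inr (some ⟨i, k⟩)`. -/
def treeGraph (d : Bool → ℕ) : SimpleGraph (Bool ⊕ Outer d) where
  Adj
    | .inl i, .inr j => Adj d i j
    | .inr j, .inl i => Adj d i j
    | _, _ => False
  symm := ⟨by rintro (i | j) (i' | j') h <;> exact h⟩
  loopless := ⟨by rintro (i | j) h <;> exact h⟩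

variable {d : Bool → ℕ}

theorem treeGraph_reachable (v : Bool ⊕ Outer d) :
    ∃ p : (treeGraph d).Walk v (.inr none), p.length ≤ 2 := by
  have h : ∀ i, (treeGraph d).Adj (.inl i) (.inr none) := fun i => trivial
  rcases v with i | _ | ⟨i, k⟩
  · exact ⟨(h i).toWalk, by simp⟩
  · exact ⟨.nil, by simp⟩
  · have h' : (treeGraph d).Adj (.inr (some ⟨i, k⟩)) (.inl i) := rfl
    exact ⟨.cons h' (h i).toWalk, by simp⟩

theorem treeGraph_connected : (treeGraph d).Connected := by
  rw [SimpleGraph.connected_iff_exists_forall_reachable]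
  exact ⟨.inr none, fun v => ⟨(treeGraph_reachable v).choose.reverse⟩⟩

theorem treeGraph_isTree : (treeGraph d).IsTree := by
  rw [SimpleGraph.isTree_iff_connected_and_card]
  refine ⟨treeGraph_connected, ?_⟩
  -- every vertex other than the centre is matched with the edge towards the centre
  let e : Bool ⊕ (Σ i : Bool, Fin (d i)) → (treeGraph d).edgeSet := fun x =>
    match x with
    | .inl i => ⟨s(.inl i, .inr none), show Adj d i none from trivial⟩
    | .inr a => ⟨s(.inl a.1, .inr (some a)), show Adj d a.1 (some a) from rfl⟩
  have he : Function.Bijective e := by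
    constructor
    · rintro (i | a) (i' | a') h <;> have h' := congrArg Subtype.val h <;> simp_all [e]
    · rintro ⟨x, hx⟩
      induction x with
      | _ u v =>
        rcases u with i | _ | a <;> rcases v with i' | _ | a'
        · exact hx.elim
        · exact ⟨.inl i, rfl⟩
        · obtain rfl : a'.1 = i := hx
          exact ⟨.inr a', rfl⟩
        · exact ⟨.inl i', Subtype.ext Sym2.eq_swap⟩
        · exact hx.elim
        · exact hx.elim
        · obtain rfl : a.1 = i' := hx
          exact ⟨.inr a, Subtype.ext Sym2.eq_swap⟩
        · exact hx.elim
        · exact hx.elim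
  rw [← Nat.card_congr (Equiv.ofBijective e he)]
  simp [Nat.card_eq_fintype_card]
  ring

/-- The signed distance to the centre, negative on the side of `inl false`. -/
def height : Bool ⊕ Outer d → ℤ
  | .inl i => if i then 1 else -1
  | .inr none => 0
  | .inr (some a) => if a.1 then 2 else -2

/-- The height changes by at most one along each edge, which bounds distances from below. -/
theorem height_le {u v : Bool ⊕ Outer d} (p : (treeGraph d).Walk u v) :
    height v ≤ height u + p.length := by
  induction p with
  | nil => simp
  | @cons u v w h p ih =>
    have h1 : height v ≤ height u + 1 := by
      rcases u with i | _ | a <;> rcases v with i' | _ | a'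
      · exact h.elim
      · cases i <;> simp [height]
      · obtain rfl : a'.1 = i := h
        obtain ⟨i, k⟩ := a'
        cases i <;> simp [height]
      · cases i' <;> simp [height]
      · exact h.elim
      · exact h.elim
      · obtain rfl : a.1 = i' := h
        obtain ⟨i, k⟩ := a
        cases i <;> simp [height]
      · exact h.elim
      · exact h.elim
    rw [SimpleGraph.Walk.length_cons]
    push_cast
    linarith

theorem treeGraph_diam (hd : ∀ i, 0 < d i) : (treeGraph d).diam = 4 := by
  apply le_antisymm
  · obtain ⟨u, v, h⟩ := (treeGraph d).exists_dist_eq_diam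
    rw [← h]
    obtain ⟨p, hp⟩ := treeGraph_reachable u
    obtain ⟨q, hq⟩ := treeGraph_reachable v
    have := SimpleGraph.dist_le (p.append q.reverse)
    rw [SimpleGraph.Walk.length_append, SimpleGraph.Walk.length_reverse] at this
    omega
  · have h1 := SimpleGraph.connected_iff_ediam_ne_top.mp (treeGraph_connected (d := d))
    refine le_trans ?_ (SimpleGraph.dist_le_diam h1 (u := .inr (some ⟨false, ⟨0, hd false⟩⟩))
      (v := .inr (some ⟨true, ⟨0, hd true⟩⟩)))
    obtain ⟨p, hp⟩ := treeGraph_connected.exists_walk_length_eq_dist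
      (.inr (some ⟨false, ⟨0, hd false⟩⟩)) (.inr (some ⟨true, ⟨0, hd true⟩⟩) : Bool ⊕ Outer d)
    rw [← hp]
    have := height_le p
    simp only [height, if_true, Bool.false_eq_true, if_false] at this
    omega

theorem lift_comm {V H : Type} [Group H] {f : V → H} {u v : V} (h : Commute (f u) (f v)) :
    FreeGroup.lift f (FreeGroup.of u * FreeGroup.of v * (FreeGroup.of u)⁻¹ *
      (FreeGroup.of v)⁻¹) = 1 := by
  simp only [map_mul, map_inv, FreeGroup.lift_apply_of]
  rw [h.eq]; group

/-- The right-angled Artin group of the tree satisfies the universal property in `BipData`. -/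
def treeData (d : Bool → ℕ) : BipData (Adj d) (RAAG (treeGraph d)) where
  p i := PresentedGroup.of (.inl i)
  q j := PresentedGroup.of (.inr j)
  comm i j h := by
    have h1 : (PresentedGroup.mk (raagRels (treeGraph d))) (FreeGroup.of (.inl i) *
        FreeGroup.of (.inr j) * (FreeGroup.of (.inl i))⁻¹ * (FreeGroup.of (.inr j))⁻¹) = 1 :=
      (QuotientGroup.eq_one_iff _).mpr (Subgroup.subset_normalClosure ⟨.inl i, .inr j, h, rfl⟩)
    rw [map_mul, map_inv, mul_inv_eq_one, map_mul, map_inv, mul_inv_eq_iff_eq_mul, map_mul] at h1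
    exact h1
  exists_lift f g h := by
    refine ⟨PresentedGroup.toGroup (f := Sum.elim f g) ?_, fun i => ?_, fun j => ?_⟩
    · rintro _ ⟨u, v, huv, rfl⟩
      apply lift_comm
      rcases u with i | j <;> rcases v with i' | j'
      · exact huv.elim
      · exact h i j' huv
      · exact (h i' j huv).symm
      · exact huv.elim
    · simp
    · simp
  gen := by
    rw [← PresentedGroup.closure_range_of (raagRels (treeGraph d)), ← Set.Sum.elim_range]
    congr 2
    ext (i | j) <;> rfl

/-- The numbers of leaves of the `n`-th tree. -/
def leaves (n : ℕ) (i : Bool) : ℕ := if i then 3 ^ n else 1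

theorem leaves_pos (n : ℕ) (i : Bool) : 0 < leaves n i := by
  cases i <;> simp [leaves]

theorem not_commensurable {m n : ℕ} (h : m < n) {A : Subgroup (RAAG (treeGraph (leaves n)))}
    {B : Subgroup (RAAG (treeGraph (leaves m)))} (hA : A.FiniteIndex) (hB : B.FiniteIndex)
    (e : A ≃* B) : False := by
  have h1 := le_of_commensurable (treeData (leaves n)) (treeData (leaves m)) (leaves_pos n)
    (leaves_pos m) rfl rfl hA hB e
  simp only [leaves, if_true] at h1
  have h2 : 3 ^ (m + 1) ≤ 3 ^ n := Nat.pow_le_pow_right (by norm_num) h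
  rw [pow_succ] at h2
  have h3 : 0 < 3 ^ m := by positivity
  omega

end TreeRAAG

theorem stmt4 : ∃ (Vt : ℕ → Type) (_ : ∀ i, Fintype (Vt i))
    (G : (i : ℕ) → SimpleGraph (Vt i)),
    (∀ i, (G i).IsTree) ∧ (∀ i, (G i).diam = 4) ∧
    ∀ i j, i ≠ j → ¬ GroupsCommensurable (RAAG (G i)) (RAAG (G j)) := by
  refine ⟨fun n => Bool ⊕ TreeRAAG.Outer (TreeRAAG.leaves n), fun n => inferInstance,
    fun n => TreeRAAG.treeGraph (TreeRAAG.leaves n), fun n => TreeRAAG.treeGraph_isTree,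
    fun n => TreeRAAG.treeGraph_diam (TreeRAAG.leaves_pos n), ?_⟩
  rintro i j hij ⟨A, B, hA, hB, ⟨e⟩⟩
  rcases lt_or_gt_of_ne hij with h | h
  · exact TreeRAAG.not_commensurable h hB hA e.symm
  · exact TreeRAAG.not_commensurable h hA hB e
end

section
/- Let T = T((m_1,k_1), …, (m_l,k_l); p) and S = T((n_1,r_1), …, (n_l,r_l); q) be two trees of diameter 4 (with the same number l of distinct pivot degrees). If m_i/n_i = m_j/n_j for all i, j = 1, …, l, then the right-angled Artin groups G(T) and G(S) are commensurable. -/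
/-- The vertices of the tree `T((d₁,k₁),…,(d_l,k_l); q)` of diameter 4:
a center, `q` hairs, `k i` pivots of degree `d i + 1` for each `i`,
and `d i` leaves attached to each such pivot. -/
inductive T4V (l : ℕ) (d k : Fin l → ℕ) (q : ℕ) : Type where
  | center : T4V l d k q
  | hair : Fin q → T4V l d k q
  | pivot : (i : Fin l) → Fin (k i) → T4V l d k q
  | leaf : (i : Fin l) → Fin (k i) → Fin (d i) → T4V l d k q

/-- Adjacency in the tree `T((d₁,k₁),…,(d_l,k_l); q)`: the center is joined to every
hair and every pivot, and each pivot is joined to its own leaves. -/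
def t4Adj {l : ℕ} {d k : Fin l → ℕ} {q : ℕ} :
    T4V l d k q → T4V l d k q → Prop
  | .center, .hair _ => True
  | .center, .pivot _ _ => True
  | .pivot i j, .leaf i' j' _ => (⟨i, j⟩ : Σ i, Fin (k i)) = ⟨i', j'⟩
  | _, _ => False

/-- The tree `T((d₁,k₁),…,(d_l,k_l); q)` of diameter 4, as a simple graph. -/
def t4Graph (l : ℕ) (d k : Fin l → ℕ) (q : ℕ) : SimpleGraph (T4V l d k q) :=
  SimpleGraph.fromRel t4Adj

/-! ### Finite index embeddings -/

/-- `K` embeds in `G` as a subgroup of finite index. -/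
def FIEmb (K G : Type) [Group K] [Group G] : Prop :=
  ∃ f : K →* G, Function.Injective f ∧ f.range.FiniteIndex

theorem FIEmb.of_equiv {K G : Type} [Group K] [Group G] (e : K ≃* G) : FIEmb K G := by
  refine ⟨e.toMonoidHom, e.injective, ?_⟩
  have : e.toMonoidHom.range = ⊤ := MonoidHom.range_eq_top.2 e.surjective
  rw [this]; infer_instance

theorem FIEmb.trans {K H G : Type} [Group K] [Group H] [Group G]
    (h₁ : FIEmb K H) (h₂ : FIEmb H G) : FIEmb K G := by
  obtain ⟨f, hf, hfi⟩ := h₁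
  obtain ⟨g, hg, hgi⟩ := h₂
  refine ⟨g.comp f, hg.comp hf, ?_⟩
  rw [MonoidHom.range_comp]
  constructor
  rw [Subgroup.index_map_of_injective _ hg]
  exact mul_ne_zero hfi.index_ne_zero hgi.index_ne_zero

/-- The group `X → H` acts on `X × H` fibrewise by left multiplication. -/
def fibreMul (X H : Type) [Group H] : (X → H) →* Equiv.Perm (X × H) where
  toFun z :=
    { toFun := fun w => (w.1, z w.1 * w.2)
      invFun := fun w => (w.1, (z w.1)⁻¹ * w.2)
      left_inv := fun w => by simp
      right_inv := fun w => by simp }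
  map_one' := by ext w <;> simp
  map_mul' z z' := by ext w <;> simp [mul_assoc]

/-- Recognizes a homomorphism `f : H →* G` as the inclusion of a finite index subgroup with
transversal `t`. If `G` acts on `X × H` so that `(x, h) ↦ t x * f h` is equivariant, and `H` acts
through `f` on the fibre over the base point `x₀` by left multiplication, then this action is the
regular action of `G` written in the coordinates given by `t`: freeness on the fibre over `x₀`
makes `f` injective, and equivariance makes the cosets of the `t x` exhaust `G`. Both hypotheses
are needed only on generators of `G` and of `H`. -/
theorem FIEmb.of_action {G H X : Type} [Group G] [Group H] [Finite X] (f : H →* G)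
    (φ : G →* Equiv.Perm (X × H)) (t : X → G) (x₀ : X) (ht : t x₀ = 1)
    (sG : Set G) (hsG : Subgroup.closure sG = ⊤) (sH : Set H) (hsH : Subgroup.closure sH = ⊤)
    (h₁ : ∀ g ∈ sG, ∀ w, t (φ g w).1 * f (φ g w).2 = g * (t w.1 * f w.2))
    (h₂ : ∀ k ∈ sH, ∀ h, φ (f k) (x₀, h) = (x₀, k * h)) : FIEmb H G := by
  have H₁ : ∀ g w, t (φ g w).1 * f (φ g w).2 = g * (t w.1 * f w.2) := by
    intro g
    have hg : g ∈ Subgroup.closure sG := hsG ▸ Subgroup.mem_top g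
    induction hg using Subgroup.closure_induction with
    | mem g hg => exact h₁ g hg
    | one => simp
    | mul a b _ _ ha hb => intro w; rw [map_mul, Equiv.Perm.mul_apply, ha, hb, mul_assoc]
    | inv a _ ha =>
      intro w
      have := ha (φ a⁻¹ w)
      rw [← Equiv.Perm.mul_apply, ← map_mul, mul_inv_cancel, map_one, Equiv.Perm.one_apply] at this
      rw [this, inv_mul_cancel_left]
  have H₂ : ∀ k h, φ (f k) (x₀, h) = (x₀, k * h) := by
    intro k
    have hk : k ∈ Subgroup.closure sH := hsH ▸ Subgroup.mem_top k
    induction hk using Subgroup.closure_induction with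
    | mem k hk => exact h₂ k hk
    | one => simp
    | mul a b _ _ ha hb => intro h; rw [map_mul, map_mul, Equiv.Perm.mul_apply, hb, ha, mul_assoc]
    | inv a _ ha =>
      intro h
      rw [map_inv, map_inv, Equiv.Perm.inv_eq_iff_eq, ha, mul_inv_cancel_left]
  refine ⟨f, ?_, ?_⟩
  · rw [injective_iff_map_eq_one]
    intro k hk
    have := H₂ k 1
    rw [hk, map_one] at this
    simpa using this.symm
  · have hs : Function.Surjective (fun x : X => (t x : G ⧸ f.range)) := by
      intro y
      induction y using QuotientGroup.induction_on with
      | H g =>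
        refine ⟨(φ g (x₀, 1)).1, ?_⟩
        have := H₁ g (x₀, 1)
        simp only [ht, map_one, mul_one] at this
        dsimp only
        rw [QuotientGroup.eq]
        refine ⟨(φ g (x₀, 1)).2, ?_⟩
        rw [eq_inv_mul_iff_mul_eq, this]
    have : Finite (G ⧸ f.range) := Finite.of_surjective _ hs
    exact Subgroup.finiteIndex_of_finite_quotient

/-- The permutation of `Fin (n + 1) × H` that moves each sheet to the next one, and multiplies by
`g` on the left when it passes from the last sheet to the first. It describes left multiplication
by `x` in the coordinates `(s, h) ↦ x ^ s * h`, where `g` stands for `x ^ (n + 1)`. -/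
def turn (n : ℕ) {H : Type} [Group H] (g : H) : Equiv.Perm (Fin (n + 1) × H) where
  toFun w := (w.1 + 1, if w.1 = Fin.last n then g * w.2 else w.2)
  invFun w := (w.1 - 1, if w.1 = 0 then g⁻¹ * w.2 else w.2)
  left_inv w := by
    obtain ⟨s, h⟩ := w
    by_cases hs : s = Fin.last n
    · subst hs
      have : (-1 : Fin (n + 1)) = Fin.last n :=
        (eq_neg_of_add_eq_zero_left (Fin.last_add_one n)).symm
      simp [this]
    · have : s + 1 ≠ 0 := fun h0 => hs (by
        rw [← Fin.last_add_one n] at h0; exact add_right_cancel h0)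
      simp [hs, this]
  right_inv w := by
    obtain ⟨s, h⟩ := w
    by_cases hs : s = 0
    · subst hs
      have : (-1 : Fin (n + 1)) = Fin.last n :=
        (eq_neg_of_add_eq_zero_left (Fin.last_add_one n)).symm
      simp [this]
    · have : s - 1 ≠ Fin.last n := fun h0 => hs (by
        rw [sub_eq_iff_eq_add, Fin.last_add_one] at h0; exact h0)
      simp [hs, this]

theorem turn_pow (n : ℕ) {H : Type} [Group H] (g h : H) (s : ℕ) (hs : s < n + 1) :
    (turn n g ^ s) (0, h) = (⟨s, hs⟩, h) := by
  induction s with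
  | zero => simp
  | succ s ih =>
    rw [pow_succ', Equiv.Perm.mul_apply, ih (by omega)]
    have h1 : (⟨s, by omega⟩ : Fin (n+1)) ≠ Fin.last n := by
      intro h; have := congrArg Fin.val h; simp at this; omega
    simp only [turn, Equiv.coe_fn_mk, h1, if_false]
    congr 1
    apply Fin.ext
    rw [Fin.val_add_one_of_lt]
    exact Fin.lt_last_iff_ne_last.2 h1

theorem turn_pow_fin {n : ℕ} {H : Type} [Group H] (g h : H) (s : Fin (n + 1)) :
    (turn n g ^ (s : ℕ)) (0, h) = (s, h) := turn_pow n g h s s.2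

theorem turn_pow_last (n : ℕ) {H : Type} [Group H] (g h : H) :
    (turn n g ^ (n + 1)) (0, h) = (0, g * h) := by
  rw [pow_succ', Equiv.Perm.mul_apply, turn_pow n g h n (by omega)]
  have : (⟨n, by omega⟩ : Fin (n+1)) = Fin.last n := rfl
  simp [turn, this]

theorem turn_commute {n : ℕ} {H : Type} [Group H] {g k : H} (hgk : Commute g k) :
    Commute (turn n g) (fibreMul (Fin (n + 1)) H (fun _ => k)) := by
  ext ⟨s, h⟩ <;> simp [turn, fibreMul]
  split_ifs
  · rw [← mul_assoc, hgk.eq, mul_assoc]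
  · rfl

/-- `turn n g` realizes left multiplication by `x` in the coordinates `(s, h) ↦ x ^ s * f h`,
as soon as `f g = x ^ (n + 1)`. -/
theorem turn_equivariant {n : ℕ} {G H : Type} [Group G] [Group H] (f : H →* G) (x : G) (g : H)
    (hg : f g = x ^ (n + 1)) (w : Fin (n + 1) × H) :
    x ^ ((turn n g w).1 : ℕ) * f (turn n g w).2 = x * (x ^ (w.1 : ℕ) * f w.2) := by
  obtain ⟨s, h⟩ := w
  by_cases hs : s = Fin.last n
  · subst hs
    simp [turn, hg, pow_succ', mul_assoc]
  · have : ((s + 1 : Fin (n+1)) : ℕ) = s + 1 :=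
      Fin.val_add_one_of_lt (Fin.lt_last_iff_ne_last.2 hs)
    simp [turn, hs, this, pow_succ', mul_assoc]

/-! ### Tree groups with arbitrary index types -/

/-- The vertices of a tree of diameter at most 4: a center, hairs indexed by `H`, pivots indexed
by `P`, and leaves indexed by `Λ`. -/
inductive GV (P H Λ : Type) : Type where
  | c : GV P H Λ
  | h : H → GV P H Λ
  | p : P → GV P H Λ
  | l : Λ → GV P H Λ

/-- The oriented edges of the tree in which the leaf `x` hangs from the pivot `π x`. -/
inductive GAdj {P Λ : Type} (H : Type) (π : Λ → P) : GV P H Λ → GV P H Λ → Prop where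
  | ch (x : H) : GAdj H π .c (.h x)
  | cp (x : P) : GAdj H π .c (.p x)
  | pl (x : Λ) : GAdj H π (.p (π x)) (.l x)

/-- One commutator for each edge of the tree. -/
def genRels {P Λ : Type} (H : Type) (π : Λ → P) : Set (FreeGroup (GV P H Λ)) :=
  {r | ∃ u v, GAdj H π u v ∧
    r = FreeGroup.of u * FreeGroup.of v * (FreeGroup.of u)⁻¹ * (FreeGroup.of v)⁻¹}

/-- The right-angled Artin group of the tree with hairs `H` and with leaves attached to the pivots
by `π : Λ → P`. In contrast to `T4V`, the leaves are given by a map to the pivots, so that the trees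
arising from coverings are described by maps between index types. -/
abbrev Gen {P Λ : Type} (H : Type) (π : Λ → P) : Type := PresentedGroup (genRels H π)

namespace Gen

variable {P H Λ : Type} {π : Λ → P} {K : Type} [Group K]

/-- The canonical generator of the center. -/
def c : Gen H π := PresentedGroup.of .c

/-- The canonical generator of a hair. -/
def h (x : H) : Gen H π := PresentedGroup.of (.h x)

/-- The canonical generator of a pivot. -/
def p (x : P) : Gen H π := PresentedGroup.of (.p x)

/-- The canonical generator of a leaf. -/
def l (x : Λ) : Gen H π := PresentedGroup.of (.l x)

theorem commute_of_adj {u v : GV P H Λ} (huv : GAdj H π u v) :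
    Commute (PresentedGroup.of u : Gen H π) (PresentedGroup.of v) :=
  commutatorElement_eq_one_iff_commute.1 (PresentedGroup.one_of_mem ⟨u, v, huv, rfl⟩)

theorem c_h (x : H) : Commute (c : Gen H π) (h x) := commute_of_adj (.ch x)

theorem c_p (x : P) : Commute (c : Gen H π) (p x) := commute_of_adj (.cp x)

theorem p_l (x : Λ) : Commute (p (π x) : Gen H π) (l x) := commute_of_adj (.pl x)

/-- The universal property: images of the canonical generators that commute along the edges
define a homomorphism. -/
def lift (c' : K) (h' : H → K) (p' : P → K) (l' : Λ → K) (hch : ∀ x, Commute c' (h' x))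
    (hcp : ∀ x, Commute c' (p' x)) (hpl : ∀ x, Commute (p' (π x)) (l' x)) : Gen H π →* K :=
  PresentedGroup.toGroup (f := fun v => match v with
    | .c => c' | .h x => h' x | .p x => p' x | .l x => l' x) (by
    rintro r ⟨u, v, huv, rfl⟩
    simp only [map_mul, map_inv, FreeGroup.lift_apply_of]
    apply commutatorElement_eq_one_iff_commute.2
    cases huv
    exacts [hch _, hcp _, hpl _])

section
variable (c' : K) (h' : H → K) (p' : P → K) (l' : Λ → K) (hch : ∀ x, Commute c' (h' x))
    (hcp : ∀ x, Commute c' (p' x)) (hpl : ∀ x, Commute (p' (π x)) (l' x))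

@[simp] theorem lift_c : lift c' h' p' l' hch hcp hpl c = c' := PresentedGroup.toGroup.of _
@[simp] theorem lift_h (x : H) : lift c' h' p' l' hch hcp hpl (h x) = h' x :=
  PresentedGroup.toGroup.of _
@[simp] theorem lift_p (x : P) : lift c' h' p' l' hch hcp hpl (p x) = p' x :=
  PresentedGroup.toGroup.of _
@[simp] theorem lift_l (x : Λ) : lift c' h' p' l' hch hcp hpl (l x) = l' x :=
  PresentedGroup.toGroup.of _
end

/-- Case distinction over the canonical generators, in the form required by `FIEmb.of_action`. -/
theorem forall_gen {C : Gen H π → Prop} (hc : C c) (hh : ∀ x, C (h x)) (hp : ∀ x, C (p x))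
    (hl : ∀ x, C (l x)) :
    ∀ g ∈ Set.range (PresentedGroup.of : GV P H Λ → Gen H π), C g := by
  rintro _ ⟨_ | x | x | x, rfl⟩
  exacts [hc, hh x, hp x, hl x]

theorem hom_ext {f g : Gen H π →* K} (hc : f c = g c) (hh : ∀ x, f (h x) = g (h x))
    (hp : ∀ x, f (p x) = g (p x)) (hl : ∀ x, f (l x) = g (l x)) : f = g := by
  apply PresentedGroup.ext
  rintro (_ | x | x | x)
  exacts [hc, hh x, hp x, hl x]

/-- An isomorphism of trees induces an isomorphism of groups. -/
theorem nonempty_equiv {P' H' Λ' : Type} {π' : Λ' → P'} (eP : P ≃ P') (eH : H ≃ H')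
    (eL : Λ ≃ Λ') (he : ∀ x, π' (eL x) = eP (π x)) : Nonempty (Gen H π ≃* Gen H' π') := by
  have he' : ∀ y, eP.symm (π' y) = π (eL.symm y) := fun y => by
    rw [Equiv.symm_apply_eq, ← he, Equiv.apply_symm_apply]
  refine ⟨MonoidHom.toMulEquiv
    (lift c (fun x => h (eH x)) (fun x => p (eP x)) (fun x => l (eL x))
      (fun x => c_h _) (fun x => c_p _) (fun x => by rw [← he]; exact p_l _))
    (lift c (fun x => h (eH.symm x)) (fun x => p (eP.symm x)) (fun x => l (eL.symm x))
      (fun x => c_h _) (fun x => c_p _) (fun x => by rw [he']; exact p_l _)) ?_ ?_⟩ <;>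
  · apply hom_ext <;> simp

end Gen

/-! ### Two cyclic coverings -/

theorem fibreMul_commute {X H : Type} [Group H] {z w : X → H} (hzw : ∀ x, Commute (z x) (w x)) :
    Commute (fibreMul X H z) (fibreMul X H w) :=
  Commute.map (funext hzw : Commute z w) _

theorem fibreMul_apply {X H : Type} [Group H] (z : X → H) (x : X) (h : H) :
    fibreMul X H z (x, h) = (x, z x * h) := rfl

/-- Conjugating by a power of `turn` brings the fibre over `s` to the fibre over `0`. -/
theorem turn_conj_fibreMul {n : ℕ} {H : Type} [Group H] (g h : H) (z : Fin (n + 1) → H)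
    (s : Fin (n + 1)) :
    (turn n g ^ (s : ℕ))⁻¹ (fibreMul _ H z ((turn n g ^ (s : ℕ)) (0, h))) = (0, z s * h) := by
  rw [turn_pow_fin, fibreMul_apply, Equiv.Perm.inv_eq_iff_eq, turn_pow_fin]

theorem commute_conj {G : Type} [Group G] (x : G) {g k : G} (hgk : Commute g k) :
    Commute (x⁻¹ * g * x) (x⁻¹ * k * x) := by
  simpa using (Commute.conj_iff (h := x⁻¹)).2 hgk

open Gen in
/-- The kernel of the homomorphism `Gen H π → ZMod (n + 1)` sending the center to `1` and all other
canonical generators to `0`. It is generated by `c ^ (n + 1)`, the hairs, the pivots, and the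
conjugates of the leaves by `1, c, …, c ^ n`; as `c` commutes with hairs and pivots, these are the
canonical generators of a tree group in which each leaf is replaced by `n + 1` leaves on the same
pivot. -/
theorem fiEmb_leaves {P H Λ : Type} (π : Λ → P) (n : ℕ) :
    FIEmb (Gen H (fun x : Λ × Fin (n + 1) => π x.1)) (Gen H π) := by
  let f : Gen H (fun x : Λ × Fin (n + 1) => π x.1) →* Gen H π :=
    lift (c ^ (n + 1)) h p (fun x => (c ^ (x.2 : ℕ))⁻¹ * l x.1 * c ^ (x.2 : ℕ))
      (fun x => (c_h x).pow_left _) (fun x => (c_p x).pow_left _)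
      (fun x => by
        have h := ((c_p (H := H) (π := π) (π x.1)).pow_left (x.2 : ℕ)).symm
        have h2 := commute_conj (c ^ (x.2 : ℕ)) (p_l (H := H) (π := π) x.1)
        rwa [mul_assoc, h.eq, inv_mul_cancel_left] at h2)
  let φ : Gen H π →* Equiv.Perm (Fin (n + 1) × Gen H (fun x : Λ × Fin (n + 1) => π x.1)) :=
    lift (turn n c) (fun x => fibreMul _ _ fun _ => h x) (fun x => fibreMul _ _ fun _ => p x)
      (fun x => fibreMul _ _ fun s => l (x, s))
      (fun x => turn_commute (c_h x)) (fun x => turn_commute (c_p x))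
      (fun x => fibreMul_commute fun s => p_l (x, s))
  refine FIEmb.of_action f φ (fun s => c ^ (s : ℕ)) 0 (by simp) _
    (PresentedGroup.closure_range_of _) _ (PresentedGroup.closure_range_of _) ?_ ?_
  · apply forall_gen
    · intro w
      simpa [φ] using turn_equivariant f c c (by simp [f]) w
    · rintro x ⟨s, k⟩
      simp [φ, f, fibreMul_apply, ← mul_assoc, ((c_h (π := π) x).pow_left s).eq]
    · rintro x ⟨s, k⟩
      simp [φ, f, fibreMul_apply, ← mul_assoc, ((c_p (H := H) (π := π) x).pow_left s).eq]
    · rintro x ⟨s, k⟩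
      simp [φ, f, fibreMul_apply, mul_assoc]
  · apply forall_gen
    · intro k
      simp only [f, φ, lift_c, map_pow, turn_pow_last]
    · intro x k
      simp [f, φ, fibreMul_apply]
    · intro x k
      simp [f, φ, fibreMul_apply]
    · rintro ⟨x, s⟩ k
      simp only [f, φ, lift_l, map_mul, map_inv, map_pow, lift_c]
      exact turn_conj_fibreMul _ _ (fun s => l (x, s)) s

open Gen in
/-- The pivots are split as `Option A ⊕ B`, where `v = none` is a chosen one. The kernel of the
homomorphism to `ZMod (n + 1)` sending the pivots in `Option A` to `1` and all other canonical
generators to `0` is again a tree group, with transversal `1, v, …, v ^ n`. Its center is the old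
one, each pivot `a` in `Option A` gives the pivot `a ^ (n + 1)` with the same leaves, and each
pivot in `B` gives `n + 1` conjugates, each with its own conjugate of the leaves. The hairs are the
`n + 1` conjugates of the old hairs, and the elements `v ^ (-j) * a ^ j` with `a` in `A` and
`1 ≤ j ≤ n`, which commute with the center only. -/
theorem fiEmb_pivots {A B H ΛA ΛB : Type} (πA : ΛA → Option A) (πB : ΛB → B) (n : ℕ) :
    FIEmb (Gen (H × Fin (n + 1) ⊕ A × Fin n) (Sum.map πA (Prod.map πB (id : Fin (n + 1) → _))))
      (Gen H (Sum.map πA πB)) := by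
  set π := Sum.map πA πB with hπ
  set π' := Sum.map πA (Prod.map πB (id : Fin (n + 1) → _)) with hπ'
  set H' := H × Fin (n + 1) ⊕ A × Fin n with hH'
  let v : Gen H π := p (.inl none)
  let cj (s : Fin (n + 1)) (g : Gen H π) : Gen H π := (v ^ (s : ℕ))⁻¹ * g * v ^ (s : ℕ)
  have hcj : ∀ s g, cj s g = (v ^ (s : ℕ))⁻¹ * g * v ^ (s : ℕ) := fun s g => rfl
  have cj_comm : ∀ s {g k}, Commute g k → Commute (cj s g) (cj s k) := fun s g k hgk =>
    commute_conj _ hgk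
  have hcv : ∀ s : ℕ, Commute (c : Gen H π) (v ^ s) := fun s => (c_p _).pow_right s
  have hcc : ∀ s g, Commute c g → Commute c (cj s g) := fun s g hg => by
    rw [hcj]
    exact (((hcv s).inv_right).mul_right hg).mul_right (hcv s)
  let f : Gen H' π' →* Gen H π :=
    lift c (Sum.elim (fun x => cj x.2 (h x.1))
        (fun x => (v ^ (x.2 + 1 : ℕ))⁻¹ * p (.inl (some x.1)) ^ (x.2 + 1 : ℕ)))
      (Sum.elim (fun a => p (.inl a) ^ (n + 1)) (fun b => cj b.2 (p (.inr b.1))))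
      (Sum.elim (fun x => l (.inl x)) (fun x => cj x.2 (l (.inr x.1))))
      (by
        rintro (x | x)
        · exact hcc _ _ (c_h _)
        · exact ((hcv _).inv_right).mul_right ((c_p _).pow_right _))
      (by
        rintro (x | x)
        · exact (c_p _).pow_right _
        · exact hcc _ _ (c_p _))
      (by
        rintro (x | x)
        · exact (p_l (π := π) (.inl x)).pow_left _
        · exact cj_comm _ (p_l (π := π) (.inr x.1)))
  -- `f (z a s) = v ^ (-s) * a ^ s`: the change of coordinates between the transversals given by
  -- the powers of `v` and by the powers of `a`
  let z : Option A → Fin (n + 1) → Gen H' π' := fun a s =>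
    a.elim 1 fun a => Fin.cases 1 (fun j => h (.inr (a, j))) s
  have hz0 : ∀ a, z a 0 = 1 := by rintro (_ | a) <;> rfl
  have hzn : z none = 1 := rfl
  have hcz : ∀ a s, Commute c (z a s) := by
    rintro (_ | a) s
    · exact Commute.one_right _
    · refine Fin.cases ?_ (fun j => ?_) s
      · exact Commute.one_right _
      · exact c_h _
  have hfz : ∀ a (s : Fin (n + 1)), v ^ (s : ℕ) * f (z a s) = p (.inl a) ^ (s : ℕ) := by
    rintro (_ | a) s
    · simp [hzn, v]
    · refine Fin.cases ?_ (fun j => ?_) s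
      · simp [hz0]
      · simp [z, f]
  let cg (a : Option A) (σ : Equiv.Perm (Fin (n + 1) × Gen H' π')) :=
    MulAut.conj (fibreMul _ _ (z a)) σ
  have hcg : ∀ a σ, cg a σ = fibreMul _ _ (z a) * σ * (fibreMul _ _ (z a))⁻¹ := fun a σ => rfl
  have cg_comm : ∀ a {g k}, Commute g k → Commute (cg a g) (cg a k) := fun s g k hgk =>
    hgk.map (MulAut.conj _).toMonoidHom
  have ccg : ∀ a σ, Commute (fibreMul _ _ fun _ => c) σ →
      Commute (fibreMul _ _ fun _ => c) (cg a σ) := fun a σ hσ => by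
    have := fibreMul_commute (hcz a)
    rw [hcg]
    exact (this.mul_right hσ).mul_right this.inv_right
  -- in the coordinates `a ^ s * f k` the pivot `a` acts by `turn`, and its leaves, which commute
  -- with `a`, by constant multiplication; conjugation by `z a` returns to the coordinates
  -- `v ^ s * f k`
  let φ : Gen H π →* Equiv.Perm (Fin (n + 1) × Gen H' π') :=
    lift (fibreMul _ _ fun _ => c) (fun x => fibreMul _ _ fun s => h (.inl (x, s)))
      (Sum.elim (fun a => cg a (turn n (p (.inl a))))
        (fun b => fibreMul _ _ fun s => p (.inr (b, s))))
      (Sum.elim (fun x => cg (πA x) (fibreMul _ _ fun _ => l (.inl x)))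
        (fun x => fibreMul _ _ fun s => l (.inr (x, s))))
      (fun x => fibreMul_commute fun s => c_h _)
      (by
        rintro (a | b)
        · exact ccg _ _ (turn_commute (c_p _).symm).symm
        · exact fibreMul_commute fun s => c_p _)
      (by
        rintro (x | x)
        · exact cg_comm _ (turn_commute (p_l (π := π') (.inl x)))
        · exact fibreMul_commute fun s => p_l (π := π') (.inr (x, s)))
  have hφv : φ v = turn n (p (.inl none)) := by
    simp [φ, v, hcg, hzn]
  -- the map `(s, k) ↦ v ^ s * f k` turns fibrewise multiplication by `z a` into replacing
  -- `v ^ s` by the power `a ^ s` of the pivot `a`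
  have hcgE : ∀ a σ (g : Gen H π),
      (∀ w, p (.inl a) ^ ((σ w).1 : ℕ) * f (σ w).2 = g * (p (.inl a) ^ (w.1 : ℕ) * f w.2)) →
      ∀ w, v ^ ((cg a σ w).1 : ℕ) * f (cg a σ w).2 = g * (v ^ (w.1 : ℕ) * f w.2) := by
    intro a σ g hσ w
    have key : ∀ w : Fin (n + 1) × Gen H' π', v ^ ((fibreMul _ _ (z a) w).1 : ℕ) *
        f (fibreMul _ _ (z a) w).2 = p (.inl a) ^ (w.1 : ℕ) * f w.2 := by
      rintro ⟨s, k⟩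
      rw [fibreMul_apply, map_mul, ← mul_assoc, hfz]
    obtain ⟨w, rfl⟩ := (fibreMul _ _ (z a)).surjective w
    have : cg a σ (fibreMul _ _ (z a) w) = fibreMul _ _ (z a) (σ w) := by
      simp [hcg]
    rw [this, key, key, hσ]
  -- `z a 0 = 1`, so conjugation by `z a` is invisible at the base point
  have hz00 : ∀ a k, fibreMul _ _ (z a) (0, k) = (0, k) := fun a k => by
    rw [fibreMul_apply, hz0, one_mul]
  have hz00' : ∀ a k, (fibreMul _ _ (z a))⁻¹ (0, k) = (0, k) := fun a k => by
    rw [Equiv.Perm.inv_eq_iff_eq, hz00]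
  have hφcj : ∀ s g (y : Fin (n + 1) → Gen H' π'), φ g = fibreMul _ _ y →
      ∀ k, φ (cj s g) (0, k) = (0, y s * k) := by
    intro s g y hg k
    rw [hcj, map_mul, map_mul, map_inv, map_pow, hφv, hg]
    exact turn_conj_fibreMul _ _ _ _
  refine FIEmb.of_action f φ (fun s => v ^ (s : ℕ)) 0 (by simp) _
    (PresentedGroup.closure_range_of _) _ (PresentedGroup.closure_range_of _) ?_ ?_
  · apply forall_gen
    · rintro ⟨s, k⟩
      simp [φ, f, fibreMul_apply, ← mul_assoc, (hcv s).eq]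
    · rintro x ⟨s, k⟩
      simp [φ, f, fibreMul_apply, hcj, mul_assoc]
    · rintro (a | b)
      · simp only [φ, lift_p, Sum.elim_inl]
        exact hcgE a _ _ (turn_equivariant f _ _ (by simp [f]))
      · rintro ⟨s, k⟩
        simp [φ, f, fibreMul_apply, hcj, mul_assoc]
    · rintro (x | x)
      · simp only [φ, lift_l, Sum.elim_inl]
        refine hcgE (πA x) _ _ ?_
        rintro ⟨s, k⟩
        have hx : Commute (p (.inl (πA x)) : Gen H π) (l (.inl x)) := p_l (π := π) (.inl x)
        simp [f, fibreMul_apply, ← mul_assoc, (hx.pow_left s).eq]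
      · rintro ⟨s, k⟩
        simp [φ, f, fibreMul_apply, hcj, mul_assoc]
  · apply forall_gen
    · intro k
      simp [f, φ, fibreMul_apply]
    · rintro (⟨x, s⟩ | ⟨a, j⟩) k
      · simp only [f, lift_h, Sum.elim_inl]
        exact hφcj s _ (fun s => h (.inl (x, s))) (by simp [φ]) k
      · have h1 : f (h (.inr (a, j))) = (v ^ (j.succ : ℕ))⁻¹ * p (.inl (some a)) ^ (j.succ : ℕ) := by
          simp [f]
        have h2 : φ (p (.inl (some a))) = cg (some a) (turn n (p (.inl (some a)))) := by
          simp [φ]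
        have h3 : z (some a) j.succ = h (.inr (a, j)) := rfl
        rw [h1, map_mul, map_inv, map_pow, map_pow, hφv, h2, Equiv.Perm.mul_apply,
          Equiv.Perm.inv_eq_iff_eq, turn_pow_fin, hcg, conj_pow, Equiv.Perm.mul_apply,
          Equiv.Perm.mul_apply, hz00', turn_pow_fin, fibreMul_apply, h3]
    · rintro (a | ⟨b, s⟩) k
      · simp only [f, φ, lift_p, Sum.elim_inl, map_pow, hcg]
        rw [conj_pow, Equiv.Perm.mul_apply, Equiv.Perm.mul_apply, hz00', turn_pow_last, hz00]
      · simp only [f, lift_p, Sum.elim_inr]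
        exact hφcj s _ (fun s => p (.inr (b, s))) (by simp [φ]) k
    · rintro (x | ⟨x, s⟩) k
      · simp only [f, φ, lift_l, Sum.elim_inl, hcg, Equiv.Perm.mul_apply]
        rw [hz00', fibreMul_apply _ 0, hz00]
      · simp only [f, lift_l, Sum.elim_inr]
        exact hφcj s _ (fun s => l (.inr (x, s))) (by simp [φ]) k

/-! ### From index types to numerical parameters -/

theorem FIEmb.commensurable {K G H : Type} [Group K] [Group G] [Group H]
    (h₁ : FIEmb K G) (h₂ : FIEmb K H) : GroupsCommensurable G H := by
  obtain ⟨f, hf, hfi⟩ := h₁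
  obtain ⟨g, hg, hgi⟩ := h₂
  exact ⟨f.range, g.range, hfi, hgi,
    ⟨(MonoidHom.ofInjective hf).symm.trans (MonoidHom.ofInjective hg)⟩⟩

/-- The group of `T((d₁,k₁),…,(d_l,k_l); q)` as a `Gen`, with pivots and leaves indexed by sigma
types. -/
theorem nonempty_t4_equiv {l : ℕ} (d k : Fin l → ℕ) (q : ℕ) :
    Nonempty (RAAG (t4Graph l d k q) ≃*
      Gen (Fin q) (Sigma.fst : (Σ ij : (Σ i, Fin (k i)), Fin (d ij.1)) → _)) := by
  set π := (Sigma.fst : (Σ ij : (Σ i, Fin (k i)), Fin (d ij.1)) → _) with hπ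
  let F : T4V l d k q → Gen (Fin q) π := fun
    | .center => Gen.c
    | .hair x => Gen.h x
    | .pivot i j => Gen.p ⟨i, j⟩
    | .leaf i j x => Gen.l ⟨⟨i, j⟩, x⟩
  have hF : ∀ u v, t4Adj u v → Commute (F u) (F v) := by
    rintro (_ | x | ⟨i, j⟩ | ⟨i, j, x⟩) (_ | x' | ⟨i', j'⟩ | ⟨i', j', x'⟩) huv <;>
      try exact huv.elim
    · exact Gen.c_h _
    · exact Gen.c_p _
    · cases (show (⟨i, j⟩ : Σ i, Fin (k i)) = ⟨i', j'⟩ from huv)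
      exact Gen.p_l (π := π) ⟨⟨i, j⟩, x'⟩
  have hR : ∀ {u v : T4V l d k q}, u ≠ v → t4Adj u v →
      Commute (PresentedGroup.of u : RAAG (t4Graph l d k q)) (PresentedGroup.of v) :=
    fun {u v} hne huv => commutatorElement_eq_one_iff_commute.1
      (PresentedGroup.one_of_mem ⟨u, v, ⟨hne, Or.inl huv⟩, rfl⟩)
  let φ : RAAG (t4Graph l d k q) →* Gen (Fin q) π := PresentedGroup.toGroup (f := F) (by
    rintro r ⟨u, v, ⟨-, huv⟩, rfl⟩
    simp only [map_mul, map_inv, FreeGroup.lift_apply_of]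
    apply commutatorElement_eq_one_iff_commute.2
    rcases huv with huv | huv
    exacts [hF _ _ huv, (hF _ _ huv).symm])
  have hφ : ∀ u, φ (PresentedGroup.of u) = F u := fun u => PresentedGroup.toGroup.of _
  let ψ : Gen (Fin q) π →* RAAG (t4Graph l d k q) :=
    Gen.lift (PresentedGroup.of .center) (fun x => PresentedGroup.of (.hair x))
      (fun x => PresentedGroup.of (.pivot x.1 x.2))
      (fun x => PresentedGroup.of (.leaf x.1.1 x.1.2 x.2))
      (fun x => hR (by simp) trivial) (fun x => hR (by simp) trivial)
      (fun x => hR (by simp) rfl)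
  refine ⟨MonoidHom.toMulEquiv φ ψ ?_ ?_⟩
  · apply PresentedGroup.ext
    rintro (_ | x | ⟨i, j⟩ | ⟨i, j, x⟩) <;> simp [hφ, F, ψ]
  · apply Gen.hom_ext <;> simp [hφ, F, ψ]

open Classical in
/-- Two maps whose fibres over corresponding points have the same number of elements are
isomorphic over the given bijection of the bases. -/
theorem exists_equiv_over {X X' Y Y' : Type} [Fintype X] [Fintype X'] (π : X → Y)
    (π' : X' → Y') (e : Y ≃ Y')
    (h : ∀ y, (∑ x, if π x = y then 1 else 0) = ∑ x, if π' x = e y then 1 else 0) :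
    ∃ e' : X ≃ X', ∀ x, π' (e' x) = e (π x) := by
  have key : ∀ y, Nonempty ({x // π x = y} ≃ {x // π' x = e y}) := fun y =>
    ⟨Fintype.equivOfCardEq (by
      rw [Fintype.card_subtype, Fintype.card_subtype, Finset.card_filter, Finset.card_filter, h])⟩
  refine ⟨(Equiv.sigmaFiberEquiv π).symm.trans
    ((Equiv.sigmaCongr e fun y => (key y).some).trans (Equiv.sigmaFiberEquiv π')), fun x => ?_⟩
  exact ((key (π x)).some ⟨x, rfl⟩).2

theorem sum_sigma_ite {ι : Type} [Fintype ι] (c : ι → ℕ) (i : ι) [DecidablePred (· = i)] :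
    (∑ x : Σ i, Fin (c i), if x.1 = i then 1 else 0) = c i := by
  rw [Fintype.sum_sigma, Finset.sum_eq_single i]
  · simp
  · intro j _ hj
    simp [hj]
  · simp

theorem sum_sigma_prod_ite {ι : Type} [Fintype ι] (c : ι → ℕ) (n : ℕ) (i : ι)
    [DecidablePred (· = i)] :
    (∑ x : (Σ i, Fin (c i)) × Fin n, if x.1.1 = i then 1 else 0) = c i * n := by
  rw [Fintype.sum_prod_type_right]
  exact (Finset.sum_congr rfl fun _ _ => sum_sigma_ite c i).trans (by simp [mul_comm])

theorem sum_sigma_map_ite {ι : Type} [Fintype ι] (c : ι → ℕ) (n : ℕ) (y : ι × Fin n)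
    [DecidablePred (· = y)] :
    (∑ x : (Σ i, Fin (c i)) × Fin n, if (x.1.1, x.2) = y then 1 else 0) = c y.1 := by
  classical
  rw [Fintype.sum_prod_type_right, Finset.sum_eq_single y.2]
  · rw [← sum_sigma_ite c y.1]
    exact Finset.sum_congr rfl fun x _ => if_congr (by simp [Prod.ext_iff]) rfl rfl
  · intro s _ hs
    exact Finset.sum_eq_zero fun x _ => if_neg fun h => hs (congrArg Prod.snd h)
  · simp

open Classical in
/-- A tree group is determined by the number of its hairs and the numbers of pivots and leaves:
here `τ` gives the degree class of a pivot, `hk` counts the pivots in each class and `hd` the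
leaves on each pivot. -/
theorem nonempty_t4_equiv_of_count {l : ℕ} {d k : Fin l → ℕ} {q : ℕ} {P H Λ : Type} [Fintype P]
    [Fintype H] [Fintype Λ] (π : Λ → P) (τ : P → Fin l)
    (hk : ∀ i, (∑ x, if τ x = i then 1 else 0) = k i)
    (hd : ∀ y, (∑ x, if π x = y then 1 else 0) = d (τ y)) (hq : Fintype.card H = q) :
    Nonempty (RAAG (t4Graph l d k q) ≃* Gen H π) := by
  obtain ⟨e₀⟩ := nonempty_t4_equiv d k q
  obtain ⟨eP, hP⟩ := exists_equiv_over (Sigma.fst : (Σ i, Fin (k i)) → _) τ (Equiv.refl _)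
    (fun i => by
      rw [Equiv.refl_apply]
      convert (sum_sigma_ite k i).trans (hk i).symm)
  obtain ⟨eL, hL⟩ := exists_equiv_over
    (Sigma.fst : (Σ ij : (Σ i, Fin (k i)), Fin (d ij.1)) → _) π eP
    (fun i => by
      rw [hd, hP, Equiv.refl_apply]
      convert sum_sigma_ite (fun ij : Σ i, Fin (k i) => d ij.1) i)
  have eH : Fin q ≃ H := (Fintype.equivFinOfCardEq hq).symm
  obtain ⟨e⟩ := Gen.nonempty_equiv eP eH eL hL
  exact ⟨e₀.trans e⟩

/-! ### The coverings in terms of the parameters -/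

open Classical in
/-- All the `d i` can be multiplied by a common factor on passing to a finite index subgroup. -/
theorem t4_leaves {l : ℕ} (d k : Fin l → ℕ) (q n : ℕ) :
    FIEmb (RAAG (t4Graph l (fun i => d i * (n + 1)) k q)) (RAAG (t4Graph l d k q)) := by
  obtain ⟨e⟩ := nonempty_t4_equiv d k q
  obtain ⟨e'⟩ := nonempty_t4_equiv_of_count (d := fun i => d i * (n + 1)) (k := k) (q := q)
    (H := Fin q)
    (fun x : (Σ ij : (Σ i, Fin (k i)), Fin (d ij.1)) × Fin (n + 1) => x.1.1) Sigma.fst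
    (fun i => sum_sigma_ite k i)
    (fun y => by
      convert sum_sigma_prod_ite (fun ij : Σ i, Fin (k i) => d ij.1) (n + 1) y)
    (by simp)
  exact (FIEmb.of_equiv e').trans ((fiEmb_leaves _ n).trans (FIEmb.of_equiv e.symm))

open Classical in
/-- `fiEmb_pivots` in numerical form: `b i` pivots of class `i` lie in `B`, the pivot `v` has class
`i₀`, and `k₀ i` pivots of class `i` lie in `A`. -/
theorem t4_pivots {l : ℕ} (d k₀ b : Fin l → ℕ) (i₀ : Fin l) (q n : ℕ) :
    FIEmb (RAAG (t4Graph l d (fun i => k₀ i + (if i₀ = i then 1 else 0) + b i * (n + 1))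
        (q * (n + 1) + (∑ i, k₀ i) * n)))
      (RAAG (t4Graph l d (fun i => k₀ i + (if i₀ = i then 1 else 0) + b i) q)) := by
  let A := Σ i, Fin (k₀ i)
  let B := Σ i, Fin (b i)
  let τA : Option A → Fin l := fun a => a.elim i₀ Sigma.fst
  let πA : (Σ a, Fin (d (τA a))) → Option A := Sigma.fst
  let πB : (Σ b : B, Fin (d b.1)) → B := Sigma.fst
  obtain ⟨e⟩ := nonempty_t4_equiv_of_count (d := d)
    (k := fun i => k₀ i + (if i₀ = i then 1 else 0) + b i) (q := q) (H := Fin q)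
    (Sum.map πA πB) (Sum.elim τA Sigma.fst)
    (fun i => by
      rw [Fintype.sum_sum_type, Fintype.sum_option, add_comm (ite _ _ _)]
      exact congrArg₂ _ (congrArg (· + _) (sum_sigma_ite k₀ i)) (sum_sigma_ite b i))
    (by
      rintro (a | b)
      · rw [Fintype.sum_sum_type]
        simpa [πA] using sum_sigma_ite (fun a => d (τA a)) a
      · rw [Fintype.sum_sum_type]
        simpa [πB] using sum_sigma_ite (fun b : B => d b.1) b)
    (by simp)
  obtain ⟨e'⟩ := nonempty_t4_equiv_of_count (d := d)
    (k := fun i => k₀ i + (if i₀ = i then 1 else 0) + b i * (n + 1))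
    (q := q * (n + 1) + (∑ i, k₀ i) * n) (H := Fin q × Fin (n + 1) ⊕ A × Fin n)
    (Sum.map πA (Prod.map πB (id : Fin (n + 1) → _))) (Sum.elim τA fun x => x.1.1)
    (fun i => by
      rw [Fintype.sum_sum_type, Fintype.sum_option, add_comm (ite _ _ _)]
      exact congrArg₂ _ (congrArg (· + _) (sum_sigma_ite k₀ i)) (sum_sigma_prod_ite b _ i))
    (by
      rintro (a | y)
      · rw [Fintype.sum_sum_type]
        simpa [πA] using sum_sigma_ite (fun a => d (τA a)) a
      · rw [Fintype.sum_sum_type]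
        simpa [πB, Prod.map] using sum_sigma_map_ite (fun b : B => d b.1) (n + 1) y)
    (by simp [A])
  exact (FIEmb.of_equiv e').trans ((fiEmb_pivots πA πB n).trans (FIEmb.of_equiv e.symm))

/-- A form of `t4_pivots` with the multiplicities before and after as parameters: if `b i` of the
`k i` pivots are to be multiplied by `n + 1`, with at least one pivot (of class `i₀`) left over,
the number of hairs is determined by the condition that the Euler characteristic `∑ i, k i + q - 1`
is multiplied by the index `n + 1`. -/
theorem t4_pivots' {l : ℕ} {d k b k' : Fin l → ℕ} {q q' n : ℕ} (i₀ : Fin l)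
    (hk : ∀ i, b i + (if i₀ = i then 1 else 0) ≤ k i) (hk' : ∀ i, k' i = k i + b i * n)
    (hq : (∑ i, k' i) + q' + n = (n + 1) * ((∑ i, k i) + q)) :
    FIEmb (RAAG (t4Graph l d k' q')) (RAAG (t4Graph l d k q)) := by
  have h := t4_pivots d (fun i => k i - b i - if i₀ = i then 1 else 0) b i₀ q n
  have e1 : (fun i => k i - b i - (if i₀ = i then 1 else 0) + (if i₀ = i then 1 else 0) + b i)
      = k := by
    funext i; have := hk i; omega
  have e2 : (fun i => k i - b i - (if i₀ = i then 1 else 0) + (if i₀ = i then 1 else 0)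
      + b i * (n + 1)) = k' := by
    funext i; have := hk i; rw [hk', mul_add]; omega
  rw [e1, e2] at h
  have s1 : ∑ i, (k i - b i - if i₀ = i then 1 else 0) + 1 + ∑ i, b i = ∑ i, k i := by
    conv_rhs => rw [← e1]
    simp [Finset.sum_add_distrib]
  have s2 : ∑ i, k' i = ∑ i, k i + (∑ i, b i) * n := by
    simp [hk', Finset.sum_add_distrib, Finset.sum_mul]
  have hq' : q' = q * (n + 1) + (∑ i, (k i - b i - if i₀ = i then 1 else 0)) * n := by
    rw [s2, ← s1] at hq
    linarith
  rwa [hq']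

/-- The multiplicities `k` can be increased to any `t ≥ k`, one pivot at a time, by coverings of
degree 2; `M` is the total degree, by which `∑ i, k i + q - 1` is multiplied. Having two pivots
leaves, next to the one to be doubled, a pivot for the role of `v`. -/
theorem t4_grow {l : ℕ} (d t : Fin l → ℕ) (N : ℕ) : ∀ (k : Fin l → ℕ) (q : ℕ),
    (∀ i, k i ≤ t i) → ∑ i, (t i - k i) = N → (∀ i, 0 < k i) → 2 ≤ ∑ i, k i →
    ∃ q' M, 0 < M ∧ (∑ i, t i) + q' + M = M * ((∑ i, k i) + q) + 1 ∧
      FIEmb (RAAG (t4Graph l d t q')) (RAAG (t4Graph l d k q)) := by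
  induction N with
  | zero =>
    intro k q hkt hN _ _
    have : k = t := by
      funext i
      have := (Finset.sum_eq_zero_iff.1 hN) i (Finset.mem_univ i)
      have := hkt i
      omega
    subst this
    exact ⟨q, 1, one_pos, by ring, FIEmb.of_equiv (MulEquiv.refl _)⟩
  | succ N ih =>
    intro k q hkt hN hk hK
    obtain ⟨j, -, hj⟩ : ∃ j ∈ Finset.univ, t j - k j ≠ 0 := by
      by_contra! h
      rw [Finset.sum_eq_zero h] at hN
      omega
    let b : Fin l → ℕ := fun i => if j = i then 1 else 0
    let k' : Fin l → ℕ := fun i => k i + b i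
    have hsb : ∑ i, b i = 1 := by simp [b]
    have hsk' : ∑ i, k' i = ∑ i, k i + 1 := by simp only [k', Finset.sum_add_distrib, hsb]
    -- the number of hairs after doubling one pivot: `(k + 1) + q' - 1 = 2 * (k + q - 1)`
    obtain ⟨q', M, hM, hq', hFI⟩ := ih k' (∑ i, k i + 2 * q - 2)
      (fun i => by
        simp only [k', b]
        split_ifs with h
        · subst h; omega
        · exact hkt i)
      (by
        have : ∑ i, (t i - k' i) + ∑ i, b i = ∑ i, (t i - k i) := by
          rw [← Finset.sum_add_distrib]
          refine Finset.sum_congr rfl fun i _ => ?_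
          simp only [k', b]
          split_ifs with h
          · subst h; omega
          · omega
        omega)
      (fun i => by have := hk i; simp only [k']; omega) (by omega)
    obtain ⟨i₀, hi₀⟩ : ∃ i₀, ∀ i, b i + (if i₀ = i then 1 else 0) ≤ k i := by
      by_cases h2 : 2 ≤ k j
      · refine ⟨j, fun i => ?_⟩
        have := hk i
        simp only [b]
        split_ifs with h
        · subst h; omega
        · omega
      · obtain ⟨i₀, hi₀⟩ : ∃ i₀, i₀ ≠ j := by
          by_contra! h
          rw [Finset.sum_eq_single j (fun i _ hi => (hi (h i)).elim) (by simp)] at hK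
          omega
        refine ⟨i₀, fun i => ?_⟩
        have := hk i
        simp only [b]
        split_ifs with h h'
        · exact (hi₀ (h'.trans h.symm)).elim
        all_goals omega
    refine ⟨q', M * 2, by omega, ?_, hFI.trans (t4_pivots' (n := 1) i₀ hi₀ (by simp [k']) ?_)⟩
    · rw [hsk'] at hq'
      have : ∑ i, k i + 1 + (∑ i, k i + 2 * q - 2) + 1 = 2 * (∑ i, k i + q) := by omega
      have h3 : M * (∑ i, k i + 1 + (∑ i, k i + 2 * q - 2)) + M = M * (2 * (∑ i, k i + q)) := by
        rw [← this]; ring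
      rw [mul_assoc, ← h3]
      omega
    · omega

/-- Without changing the pivots, `∑ i, k i + q - 1` can be multiplied by any `M > 0`. -/
theorem t4_hairs {l : ℕ} {d k : Fin l → ℕ} {q q' M : ℕ} (i₀ : Fin l) (hk : ∀ i, 0 < k i)
    (hM : 0 < M) (hq : (∑ i, k i) + q' + M = M * ((∑ i, k i) + q) + 1) :
    FIEmb (RAAG (t4Graph l d k q')) (RAAG (t4Graph l d k q)) := by
  obtain ⟨n, rfl⟩ : ∃ n, M = n + 1 := ⟨M - 1, by omega⟩
  refine t4_pivots' (b := 0) (n := n) i₀ (fun i => ?_) (by simp) (by omega)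
  have := hk i
  simp only [Pi.zero_apply]
  split_ifs <;> omega

/-! ### Commensurability -/

theorem stmt6 (l : ℕ) (hl : 0 < l) (m n k r : Fin l → ℕ) (p q : ℕ)
    (hm : StrictMono m) (hn : StrictMono n)
    (hmpos : ∀ i, 0 < m i) (hnpos : ∀ i, 0 < n i)
    (hkpos : ∀ i, 0 < k i) (hrpos : ∀ i, 0 < r i)
    (hdiamT : l = 1 → ∀ i, 2 ≤ k i) (hdiamS : l = 1 → ∀ i, 2 ≤ r i)
    (hratio : ∀ i j : Fin l, m i * n j = m j * n i) :
    GroupsCommensurable (RAAG (t4Graph l m k p)) (RAAG (t4Graph l n r q)) := by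
  have two_le : ∀ k : Fin l → ℕ, (∀ i, 0 < k i) → (l = 1 → ∀ i, 2 ≤ k i) → 2 ≤ ∑ i, k i := by
    intro k hk h1
    by_cases h : l = 1
    · exact (h1 h ⟨0, hl⟩).trans
        (Finset.single_le_sum (fun i _ => Nat.zero_le _) (Finset.mem_univ _))
    · calc 2 ≤ l := by omega
        _ = ∑ _i : Fin l, 1 := by simp
        _ ≤ _ := Finset.sum_le_sum fun i _ => hk i
  have hK := two_le k hkpos hdiamT
  have hR := two_le r hrpos hdiamS
  let i₀ : Fin l := ⟨0, hl⟩
  obtain ⟨a, ha⟩ : ∃ a, n i₀ = a + 1 := ⟨n i₀ - 1, by have := hnpos i₀; omega⟩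
  obtain ⟨b, hb⟩ : ∃ b, m i₀ = b + 1 := ⟨m i₀ - 1, by have := hmpos i₀; omega⟩
  -- by the ratio condition, the two families of degrees agree after multiplying `m` by `n i₀` and
  -- `n` by `m i₀`
  have h₁ := t4_leaves m k p a
  have h₂ := t4_leaves n r q b
  have hd : (fun i => n i * (b + 1)) = fun i => m i * (a + 1) := by
    funext i
    rw [← ha, ← hb, hratio i i₀, mul_comm]
  rw [hd] at h₂
  obtain ⟨q₁, M₁, hM₁, hq₁, g₁⟩ := t4_grow (fun i => m i * (a + 1)) (fun i => k i + r i) _ k p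
    (fun i => by omega) rfl hkpos hK
  obtain ⟨q₂, M₂, hM₂, hq₂, g₂⟩ := t4_grow (fun i => m i * (a + 1)) (fun i => k i + r i) _ r q
    (fun i => by omega) rfl hrpos hR
  -- `x` and `y` are the initial values of `∑ i, k i + p - 1` and `∑ i, r i + q - 1`; they have
  -- become `M₁ * x` and `M₂ * y`, and crosswise multiplication makes them equal
  obtain ⟨x, hx⟩ : ∃ x, ∑ i, k i + p = x + 1 := ⟨∑ i, k i + p - 1, by omega⟩
  obtain ⟨y, hy⟩ : ∃ y, ∑ i, r i + q = y + 1 := ⟨∑ i, r i + q - 1, by omega⟩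
  have hs : ∑ i, (k i + r i) = ∑ i, k i + ∑ i, r i := Finset.sum_add_distrib
  have ht : ∀ i, 0 < k i + r i := fun i => by have := hkpos i; omega
  rw [hx, mul_add, mul_one] at hq₁
  rw [hy, mul_add, mul_one] at hq₂
  have e₁ : ∑ i, (k i + r i) + q₁ = M₁ * x + 1 := by omega
  have e₂ : ∑ i, (k i + r i) + q₂ = M₂ * y + 1 := by omega
  have hx0 : 0 < x := by omega
  have hy0 : 0 < y := by omega
  have hle : ∑ i, (k i + r i) ≤ M₂ * y * (M₁ * x) + 1 := by
    have : M₁ * x ≤ M₂ * y * (M₁ * x) := Nat.le_mul_of_pos_left _ (Nat.mul_pos hM₂ hy0)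
    omega
  have f₁ := t4_hairs (d := fun i => m i * (a + 1)) (q := q₁) (M := M₂ * y)
    (q' := M₂ * y * (M₁ * x) + 1 - ∑ i, (k i + r i)) i₀ ht (Nat.mul_pos hM₂ hy0)
    (by rw [e₁, mul_add, mul_one]; omega)
  have f₂ := t4_hairs (d := fun i => m i * (a + 1)) (q := q₂) (M := M₁ * x)
    (q' := M₂ * y * (M₁ * x) + 1 - ∑ i, (k i + r i)) i₀ ht (Nat.mul_pos hM₁ hx0)
    (by rw [e₂, mul_add, mul_one, mul_comm (M₁ * x)]; omega)
  exact (f₁.trans (g₁.trans h₁)).commensurable (f₂.trans (g₂.trans h₂))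
end

section
/- Let G = G(T), where T = T((v_1,1), …, (v_l,1); 0) is a tree of diameter 4 with l ≥ 2 (so v_1 < … < v_l are positive integers). For any positive integers k_1, …, k_l there exist a non-negative integer q and a finite-index subgroup H of G such that H is isomorphic to G(S), where S = T((v_1,k_1), …, (v_l,k_l); q). In particular, G(S) and G(T) are commensurable. -/
/-! ### Homomorphisms out of a right-angled Artin group -/

/-- The canonical generator of `RAAG G` attached to a vertex. -/
def raagOf {V : Type} (G : SimpleGraph V) (u : V) : RAAG G := PresentedGroup.of u

theorem raagOf_commute {V : Type} (G : SimpleGraph V) {u w : V} (h : G.Adj u w) :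
    Commute (raagOf G u) (raagOf G w) := by
  have h1 : (PresentedGroup.mk (raagRels G))
      (FreeGroup.of u * FreeGroup.of w * (FreeGroup.of u)⁻¹ * (FreeGroup.of w)⁻¹) = 1 :=
    PresentedGroup.one_of_mem ⟨u, w, h, rfl⟩
  simp only [map_mul, map_inv] at h1
  rw [mul_inv_eq_one, mul_inv_eq_iff_eq_mul] at h1
  exact h1

/-- The universal property: vertex images that commute along edges define a homomorphism. -/
def raagLift {V : Type} (G : SimpleGraph V) {K : Type*} [Group K] (f : V → K)
    (hf : ∀ u w, G.Adj u w → Commute (f u) (f w)) : RAAG G →* K :=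
  PresentedGroup.toGroup (f := f) (by
    rintro r ⟨u, w, h, rfl⟩
    simp [(hf u w h).eq])

@[simp] theorem raagLift_of {V : Type} (G : SimpleGraph V) {K : Type*} [Group K] (f : V → K)
    (hf : ∀ u w, G.Adj u w → Commute (f u) (f w)) (u : V) :
    raagLift G f hf (raagOf G u) = f u :=
  PresentedGroup.toGroup.of _

theorem raag_induction {V : Type} (G : SimpleGraph V) (p : RAAG G → Prop)
    (hof : ∀ u, p (raagOf G u)) (hone : p 1) (hmul : ∀ a b, p a → p b → p (a * b))
    (hinv : ∀ a, p a → p a⁻¹) (g : RAAG G) : p g := by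
  have hg : g ∈ Subgroup.closure (Set.range (PresentedGroup.of (rels := raagRels G))) := by
    rw [PresentedGroup.closure_range_of]; trivial
  induction hg using Subgroup.closure_induction with
  | mem x hx => obtain ⟨u, rfl⟩ := hx; exact hof u
  | one => exact hone
  | mul a b _ _ ha hb => exact hmul a b ha hb
  | inv a _ ha => exact hinv a ha

/-- For the trees of diameter 4 it suffices to check commutation along oriented edges. -/
theorem t4_commute_of {l : ℕ} {d k : Fin l → ℕ} {q : ℕ} {K : Type*} [Group K]
    (f : T4V l d k q → K) (hhair : ∀ h, Commute (f .center) (f (.hair h)))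
    (hpiv : ∀ i j, Commute (f .center) (f (.pivot i j)))
    (hleaf : ∀ i j e, Commute (f (.pivot i j)) (f (.leaf i j e))) :
    ∀ u w, (t4Graph l d k q).Adj u w → Commute (f u) (f w) := by
  have key : ∀ u w : T4V l d k q, t4Adj u w → Commute (f u) (f w) := by
    intro u w h
    match u, w, h with
    | .center, .hair h, _ => exact hhair h
    | .center, .pivot i j, _ => exact hpiv i j
    | .pivot i j, .leaf i' j' e, h =>
      have h' : (⟨i, j⟩ : Σ i, Fin (k i)) = ⟨i', j'⟩ := h
      cases h'
      exact hleaf i j e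
  intro u w h
  rcases (SimpleGraph.fromRel_adj _ _ _).1 h with ⟨_, h | h⟩
  · exact key u w h
  · exact (key w u h).symm

/-! ### Permutations with one marked cycle over each point -/

/-- A permutation `σ` of `X` whose cycles are the fibres of `π : X → J`; `n x` is the
position of `x` in its cycle, counted from the marked point `base j` of the fibre over `j`. -/
structure CycData {X J : Type} (π : X → J) (base : J → X) where
  σ : Equiv.Perm X
  n : X → ℕ
  n_base : ∀ j, n (base j) = 0
  eq_base : ∀ x, n x = 0 → x = base (π x)
  π_σ : ∀ x, π (σ x) = π x
  n_σ : ∀ x, n (σ x) ≠ 0 → n (σ x) = n x + 1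

theorem exists_fin_equiv {Y : Type} [Finite Y] (y : Y) :
    ∃ (m : ℕ) (e : Y ≃ Fin (m + 1)), e y = 0 := by
  obtain ⟨m, ⟨e⟩⟩ := Finite.exists_equiv_fin Y
  cases m with
  | zero => exact (e y).elim0
  | succ m => exact ⟨m, e.trans (Equiv.swap (e y) 0), by simp⟩

/-- Any finite fibration with a section `base` carries such a permutation: identify each fibre with
`Fin (m + 1)`, its marked point going to `0`, and add `1`. -/
theorem exists_cycData {X J : Type} [Finite X] (π : X → J) (base : J → X)
    (hb : ∀ j, π (base j) = j) : Nonempty (CycData π base) := by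
  choose m e he using fun j => exists_fin_equiv (⟨base j, hb j⟩ : {x // π x = j})
  let s : ∀ j, Equiv.Perm {x // π x = j} := fun j =>
    (e j).trans ((Equiv.addRight 1).trans (e j).symm)
  let F := Equiv.sigmaFiberEquiv π
  have hn : ∀ j (y : {x // π x = j}), (e (π y.1) ⟨y.1, rfl⟩).val = (e j y).val := by
    rintro j ⟨x, rfl⟩; rfl
  have hσ : ∀ x, (F.symm.trans ((Equiv.sigmaCongrRight s).trans F)) x
      = (s (π x) ⟨x, rfl⟩).1 := fun x => rfl
  refine ⟨⟨F.symm.trans ((Equiv.sigmaCongrRight s).trans F),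
    fun x => (e (π x) ⟨x, rfl⟩).val, ?_, ?_, ?_, ?_⟩⟩
  · intro j
    have := hn j ⟨base j, hb j⟩
    simp only at this
    rw [this, he]; rfl
  · intro x hx
    have h0 : e (π x) ⟨x, rfl⟩ = e (π x) ⟨base (π x), hb _⟩ := by
      rw [he]; exact Fin.ext hx
    exact congrArg Subtype.val ((e (π x)).injective h0)
  · intro x
    rw [hσ]
    exact (s (π x) ⟨x, rfl⟩).2
  · intro x
    rw [hσ, hn]
    simp only [s, Equiv.trans_apply, Equiv.coe_addRight, Equiv.apply_symm_apply]
    intro h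
    rw [Fin.val_add_one] at h ⊢
    split_ifs at h ⊢ with h1
    · exact absurd rfl h
    · rfl

/-! ### Twisted permutations of `X × A` -/

/-- The permutation `(x, b) ↦ (σ x, f x * b)` of `X × A`; it commutes with right
multiplication by `A` on the second factor. -/
def twist {X A : Type} [Group A] (σ : Equiv.Perm X) (f : X → A) : Equiv.Perm (X × A) where
  toFun y := (σ y.1, f y.1 * y.2)
  invFun y := (σ.symm y.1, (f (σ.symm y.1))⁻¹ * y.2)
  left_inv y := by simp
  right_inv y := by simp

theorem twist_apply {X A : Type} [Group A] (σ : Equiv.Perm X) (f : X → A) (x : X) (b : A) :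
    twist σ f (x, b) = (σ x, f x * b) := rfl

theorem twist_commute {X A : Type} [Group A] (σ : Equiv.Perm X) (f g : X → A)
    (h : ∀ x, g (σ x) * f x = f x * g x) : Commute (twist 1 g) (twist σ f) := by
  ext1 ⟨x, b⟩
  simp only [Equiv.Perm.mul_apply, twist_apply, Equiv.Perm.one_apply, ← mul_assoc, h]

section CycTwist

variable {X J A : Type} [Group A] {π : X → J} {base : J → X} (D : CycData π base)

/-- The label `z (π x)` on the step of the cycle returning to the marked point, `1` on all
other steps. -/
def CycData.ζ (z : J → A) (x : X) : A := if D.n (D.σ x) = 0 then z (π x) else 1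

/-- The permutation of `X × A` covering `D.σ`, with label `z j` around the cycle over `j`,
conjugated by `(x, b) ↦ (x, a x * b)`. -/
def CycData.cov (z : J → A) (a : X → A) : Equiv.Perm (X × A) :=
  twist D.σ (fun x => (a (D.σ x))⁻¹ * D.ζ z x * a x)

/-- The length of the cycle over `j`. -/
def CycData.len (j : J) : ℕ := D.n (D.σ.symm (base j)) + 1

theorem CycData.len_of_wrap (x : X) (h : D.n (D.σ x) = 0) :
    D.len (π x) = D.n x + 1 := by
  have h1 := D.eq_base _ h
  rw [D.π_σ] at h1
  rw [CycData.len, ← h1, Equiv.symm_apply_apply]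

/-- Walking from the marked point to `x` along the cycle meets no wrap-around label, so only the
conjugation by `a` is seen. -/
theorem CycData.cov_pow (z : J → A) (a : X → A) (ha : ∀ j, a (base j) = 1) (x : X) (b : A) :
    (D.cov z a ^ D.n x) (base (π x), b) = (x, (a x)⁻¹ * b) := by
  obtain ⟨r, hr⟩ : ∃ r, D.n x = r := ⟨_, rfl⟩
  induction r generalizing x with
  | zero =>
    have h := D.eq_base x hr
    have h2 : a x = 1 := by rw [h]; exact ha _
    rw [hr, h2, pow_zero, ← h]; simp
  | succ r ih =>
    obtain ⟨y, rfl⟩ := D.σ.surjective x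
    have hne : D.n (D.σ y) ≠ 0 := by omega
    have hy := D.n_σ y hne
    rw [hy, pow_succ', Equiv.Perm.mul_apply, D.π_σ, ih y (by omega), CycData.cov, twist_apply,
      CycData.ζ, if_neg hne]
    simp [mul_assoc]

/-- Walking once around the cycle over `j` multiplies by its label `z j`. -/
theorem CycData.cov_pow_len (hb : ∀ j, π (base j) = j) (z : J → A) (a : X → A)
    (ha : ∀ j, a (base j) = 1) (j : J) (b : A) :
    (D.cov z a ^ D.len j) (base j, b) = (base j, z j * b) := by
  obtain ⟨y, hy⟩ := D.σ.surjective (base j)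
  have hπ : π y = j := by rw [← D.π_σ, hy, hb]
  have h0 : D.n (D.σ y) = 0 := by rw [hy, D.n_base]
  have hl := D.len_of_wrap y h0
  have hp := D.cov_pow z a ha y b
  rw [hπ] at hl hp
  rw [hl, pow_succ', Equiv.Perm.mul_apply, hp, CycData.cov, twist_apply, CycData.ζ, if_pos h0, hy,
    ha, hπ]
  simp [mul_assoc]

end CycTwist

/-! ### The points, the cycles and the spanning tree -/

noncomputable section Construction

variable {l : ℕ} (k : Fin l → ℕ)

/-- The finite set on which `G(T)` acts: one point for each pivot of `S`. -/
abbrev Pt : Type := Σ i, Fin (k i)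

variable {k}

/-- The cycle of the `i`-th pivot of `T` on which a point lies. The point `(i, j)` lies on cycle
`j`, and the points `(i', j)` with `i' ≠ i` all lie on cycle `0`. -/
def cyc (hk : ∀ i, 0 < k i) (i : Fin l) (x : Pt k) : Fin (k i) :=
  if h : x.1 = i then h ▸ x.2 else ⟨0, hk i⟩

theorem cyc_self (hk : ∀ i, 0 < k i) (i : Fin l) (j : Fin (k i)) :
    cyc hk i ⟨i, j⟩ = j := by simp [cyc]

theorem cyc_ne (hk : ∀ i, 0 < k i) (i : Fin l) (x : Pt k) (h : x.1 ≠ i) :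
    cyc hk i x = ⟨0, hk i⟩ := by simp [cyc, h]

/-- The marked point of the cycle `j` of the `i`-th pivot of `T`. -/
def mark (i : Fin l) (j : Fin (k i)) : Pt k := ⟨i, j⟩

theorem mk_cyc_of_eq (hk : ∀ i, 0 < k i) (i : Fin l) (x : Pt k) (h : x.1 = i) :
    mark i (cyc hk i x) = x := by
  obtain ⟨i', j⟩ := x
  cases h
  rw [cyc_self]; rfl

/-- The incidences `(i, x)` between the point `x` and the cycle of the `i`-th pivot through `x`
that belong to the chosen spanning tree. -/
def IsTreeEdge (i₀ i₁ : Fin l) (x₀ : Pt k) (e : Fin l × Pt k) : Prop :=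
  e.2.1 = e.1 ∨ e.1 = i₀ ∨ (e.1 = i₁ ∧ e.2.1 = i₀ ∧ e.2 ≠ x₀)

/-- The incidences outside the spanning tree; these index the hairs of `S`. -/
abbrev HairIdx (i₀ i₁ : Fin l) (x₀ : Pt k) : Type :=
  {e : Fin l × Pt k // ¬ IsTreeEdge i₀ i₁ x₀ e}

variable {v : Fin l → ℕ} (hk : ∀ i, 0 < k i) (i₀ i₁ : Fin l) {q : ℕ}
  (E : HairIdx i₀ i₁ (mark i₀ ⟨0, hk i₀⟩) ≃ Fin q)
  (D : ∀ i, CycData (cyc hk i) (mark i))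

/-- The group `G(S)`. -/
local notation "𝔸" => RAAG (t4Graph l v k q)

/-- The group `G(T)`. -/
local notation "𝔾" => RAAG (t4Graph l v (fun _ => 1) 0)

/-- The base point of the action. -/
local notation "x₀" => mark i₀ (Fin.mk 0 (hk i₀))

variable (v) in
open Classical in
/-- The label of the incidence `(i, x)`: trivial on the spanning tree, a hair elsewhere. -/
def edgeLabel (i : Fin l) (x : Pt k) : 𝔸 :=
  if h : IsTreeEdge i₀ i₁ x₀ (i, x) then 1 else raagOf _ (.hair (E ⟨(i, x), h⟩))

theorem edgeLabel_tree (i : Fin l) (x : Pt k) (h : IsTreeEdge i₀ i₁ x₀ (i, x)) :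
    edgeLabel v hk i₀ i₁ E i x = 1 := by simp [edgeLabel, h]

theorem edgeLabel_mark (i : Fin l) (j : Fin (k i)) :
    edgeLabel v hk i₀ i₁ E i (mark i j) = 1 := edgeLabel_tree _ _ _ _ _ _ (Or.inl rfl)

theorem center_commute_edgeLabel (i : Fin l) (x : Pt k) :
    Commute (raagOf _ .center : 𝔸) (edgeLabel v hk i₀ i₁ E i x) := by
  unfold edgeLabel
  split_ifs
  · exact Commute.one_right _
  · exact raagOf_commute _ ((SimpleGraph.fromRel_adj _ _ _).2 ⟨by simp, Or.inl trivial⟩)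

theorem center_commute_pivot (i : Fin l) (j : Fin (k i)) :
    Commute (raagOf _ .center : 𝔸) (raagOf _ (.pivot i j)) :=
  raagOf_commute _ ((SimpleGraph.fromRel_adj _ _ _).2 ⟨by simp, Or.inl trivial⟩)

theorem pivot_commute_leaf (i : Fin l) (j : Fin (k i)) (e : Fin (v i)) :
    Commute (raagOf _ (.pivot i j) : 𝔸) (raagOf _ (.leaf i j e)) :=
  raagOf_commute _ ((SimpleGraph.fromRel_adj _ _ _).2 ⟨by simp, Or.inl rfl⟩)

/-! ### The action of `G(T)` -/

variable (v) in
/-- The permutation by which the `i`-th pivot of `T` acts. -/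
def pivotPerm (i : Fin l) : Equiv.Perm (Pt k × 𝔸) :=
  (D i).cov (fun j => raagOf _ (.pivot i j)) (edgeLabel v hk i₀ i₁ E i)

/-- The permutations by which the generators of `G(T)` act. -/
def actGen : T4V l v (fun _ => 1) 0 → Equiv.Perm (Pt k × 𝔸)
  | .center => twist 1 (fun _ => raagOf _ .center)
  | .hair h => h.elim0
  | .pivot i _ => pivotPerm v hk i₀ i₁ E D i
  | .leaf i _ e => twist 1 (fun x => (edgeLabel v hk i₀ i₁ E i x)⁻¹ *
      raagOf _ (.leaf i (cyc hk i x) e) * edgeLabel v hk i₀ i₁ E i x)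

theorem commute_ζ {X J A : Type} [Group A] {π : X → J} {base : J → X} (D : CycData π base)
    (z : J → A) (x : X) (g : A) (h : Commute g (z (π x))) : Commute g (D.ζ z x) := by
  unfold CycData.ζ
  split_ifs
  · exact h
  · exact Commute.one_right _

/-- The action of `G(T)` on `X × G(S)`. -/
def act : 𝔾 →* Equiv.Perm (Pt k × 𝔸) :=
  raagLift _ (actGen hk i₀ i₁ E D) (by
    apply t4_commute_of
    · intro h; exact h.elim0
    · intro i _
      refine twist_commute _ _ _ fun x => ?_
      change Commute _ _
      exact (((center_commute_edgeLabel hk i₀ i₁ E i _).inv_right).mul_right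
        (commute_ζ (D i) (fun j => (raagOf _ (.pivot i j) : 𝔸)) x _
          (center_commute_pivot _ _))).mul_right
          (center_commute_edgeLabel hk i₀ i₁ E i x)
    · intro i _ e
      refine (twist_commute _ _ _ fun x => ?_).symm
      have h := (commute_ζ (D i) (fun j => (raagOf _ (.pivot i j) : 𝔸)) x
        _ (pivot_commute_leaf i (cyc hk i x) e).symm).eq
      rw [(D i).π_σ]
      simp only [mul_assoc, mul_inv_cancel_left]
      congr 1
      rw [← mul_assoc, h, mul_assoc])

/-! ### Embedding `G(S)` in `G(T)` -/

variable (v) in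
/-- The `i`-th pivot of `T`, as an element of `G(T)`. -/
def pv (i : Fin l) : 𝔾 := raagOf _ (.pivot i 0)

variable (v) in
open Classical in
/-- The element of `G(T)` carrying the base point to `x` along the spanning tree. -/
def rep (x : Pt k) : 𝔾 :=
  if x.1 = i₀ ∧ x ≠ x₀ then
    pv v i₁ ^ (D i₁).n x * pv v i₀ ^ (D i₀).n (mark i₁ ⟨0, hk i₁⟩)
  else pv v i₀ ^ (D i₀).n x

theorem rep_base : rep v hk i₀ i₁ D x₀ = 1 := by
  simp [rep, (D i₀).n_base]

/-- The paths chosen in `rep` stay in the spanning tree: along a tree incidence `(i, x)` the path to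
`x` and the path to the marked point of the cycle differ by a power of the `i`-th pivot. -/
theorem rep_tree (h01 : i₁ ≠ i₀) (i : Fin l) (x : Pt k) (h : IsTreeEdge i₀ i₁ x₀ (i, x)) :
    rep v hk i₀ i₁ D x
      = pv v i ^ (D i).n x * rep v hk i₀ i₁ D (mark i (cyc hk i x)) := by
  by_cases hd : x.1 = i
  · rw [mk_cyc_of_eq _ _ _ hd]
    have : (D i).n x = 0 := by
      rw [← mk_cyc_of_eq hk i x hd, (D i).n_base]
    rw [this, pow_zero, one_mul]
  rw [cyc_ne _ _ _ hd]
  rcases h with h | h | ⟨h1, h2, h3⟩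
  · exact absurd h hd
  · dsimp only at h
    subst h
    rw [rep_base, mul_one, rep, if_neg (fun h => hd h.1)]
  · dsimp only at h1 h2 h3
    subst h1
    rw [rep, if_pos ⟨h2, h3⟩]
    congr 1
    rw [rep, if_neg (fun h => h01 h.1)]

theorem center_commute_pv (i : Fin l) : Commute (raagOf _ .center : 𝔾) (pv v i) :=
  raagOf_commute _ ((SimpleGraph.fromRel_adj _ _ _).2 ⟨by simp, Or.inl trivial⟩)

theorem pv_commute_leaf (i : Fin l) (e : Fin (v i)) :
    Commute (pv v i) (raagOf _ (.leaf i 0 e) : 𝔾) :=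
  raagOf_commute _ ((SimpleGraph.fromRel_adj _ _ _).2 ⟨by simp, Or.inl rfl⟩)

theorem center_commute_rep (x : Pt k) :
    Commute (raagOf _ .center : 𝔾) (rep v hk i₀ i₁ D x) := by
  unfold rep
  split_ifs
  · exact ((center_commute_pv _).pow_right _).mul_right ((center_commute_pv _).pow_right _)
  · exact (center_commute_pv _).pow_right _

variable (v) in
/-- The closed path through the incidence `(i, x)`: out to `x` along the tree and back to the base
point through the marked point of the cycle of the `i`-th pivot. -/
def loop (i : Fin l) (x : Pt k) : 𝔾 :=
  (rep v hk i₀ i₁ D (mark i (cyc hk i x)))⁻¹ * (pv v i ^ (D i).n x)⁻¹ * rep v hk i₀ i₁ D x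

/-- The images in `G(T)` of the generators of `G(S)`. -/
def embGen : T4V l v k q → 𝔾
  | .center => raagOf _ .center
  | .hair h => loop v hk i₀ i₁ D (E.symm h).1.1 (E.symm h).1.2
  | .pivot i j => (rep v hk i₀ i₁ D (mark i j))⁻¹ * pv v i ^ (D i).len j *
      rep v hk i₀ i₁ D (mark i j)
  | .leaf i j e => (rep v hk i₀ i₁ D (mark i j))⁻¹ * raagOf _ (.leaf i 0 e) *
      rep v hk i₀ i₁ D (mark i j)

/-- The homomorphism `G(S) → G(T)`, an isomorphism onto the subgroup of finite index. -/
def emb : 𝔸 →* 𝔾 :=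
  raagLift _ (embGen hk i₀ i₁ E D) (by
    apply t4_commute_of
    · intro h
      exact (((center_commute_rep hk i₀ i₁ D _).inv_right).mul_right
        ((center_commute_pv _).pow_right _).inv_right).mul_right (center_commute_rep hk i₀ i₁ D _)
    · intro i j
      exact (((center_commute_rep hk i₀ i₁ D _).inv_right).mul_right
        ((center_commute_pv _).pow_right _)).mul_right (center_commute_rep hk i₀ i₁ D _)
    · intro i j e
      have h := ((pv_commute_leaf i e).pow_left ((D i).len j)).eq
      simp only [embGen, Commute, SemiconjBy, mul_assoc, mul_inv_cancel_left]
      congr 1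
      rw [← mul_assoc, h, mul_assoc])

/-- On the spanning tree both sides are trivial; elsewhere this is the definition of `emb` on hairs. -/
theorem emb_edgeLabel (h01 : i₁ ≠ i₀) (i : Fin l) (x : Pt k) :
    emb hk i₀ i₁ E D (edgeLabel v hk i₀ i₁ E i x) = loop v hk i₀ i₁ D i x := by
  unfold edgeLabel
  split_ifs with h
  · rw [map_one, loop, rep_tree hk i₀ i₁ D h01 i x h]
    group
  · rw [emb, raagLift_of, embGen, Equiv.symm_apply_apply]

/-! ### The range has finite index -/

/-- The map `X × G(S) → G(T)` which turns out to be `G(T)`-equivariant. -/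
def dev (y : Pt k × 𝔸) : 𝔾 := rep v hk i₀ i₁ D y.1 * emb hk i₀ i₁ E D y.2

/-- For the pivots, the powers of `pv v i` cancel except at the wrap-around step of a cycle, where
they add up to the image of the pivot of `S`. -/
theorem dev_act (h01 : i₁ ≠ i₀) (g : 𝔾) :
    ∀ y, dev hk i₀ i₁ E D (act hk i₀ i₁ E D g y) = g * dev hk i₀ i₁ E D y := by
  induction g using raag_induction with
  | hof u =>
    rintro ⟨x, b⟩
    rw [act, raagLift_of]
    match u with
    | .center =>
      simp only [actGen, twist_apply, dev, Equiv.Perm.one_apply, map_mul]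
      rw [emb, raagLift_of, embGen, ← mul_assoc, ← mul_assoc, (center_commute_rep hk i₀ i₁ D x).eq]
    | .hair h => exact h.elim0
    | .pivot i j =>
      obtain rfl : j = 0 := Subsingleton.elim _ _
      simp only [actGen, pivotPerm, CycData.cov, twist_apply, dev, map_mul, map_inv]
      rw [emb_edgeLabel _ _ _ _ _ h01, emb_edgeLabel _ _ _ _ _ h01, loop, loop, (D i).π_σ,
        CycData.ζ]
      change _ = pv v i * _
      split_ifs with h
      · rw [h, emb, raagLift_of, embGen, (D i).len_of_wrap x h]
        group
      · rw [(D i).n_σ x h, map_one]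
        group
    | .leaf i j e =>
      obtain rfl : j = 0 := Subsingleton.elim _ _
      simp only [actGen, twist_apply, dev, Equiv.Perm.one_apply, map_mul, map_inv]
      rw [emb_edgeLabel _ _ _ _ _ h01, loop]
      have h : emb hk i₀ i₁ E D (raagOf _ (.leaf i (cyc hk i x) e) : 𝔸) = _ := raagLift_of _ _ _ _
      have hc := ((pv_commute_leaf i e).pow_left ((D i).n x)).eq
      rw [h, embGen]
      simp only [mul_inv_rev, inv_inv, mul_assoc, mul_inv_cancel_left]
      rw [← mul_assoc (pv v i ^ _), hc, mul_assoc, mul_inv_cancel_left]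
  | hone => simp
  | hmul a b ha hb => intro y; rw [map_mul, Equiv.Perm.mul_apply, ha, hb, mul_assoc]
  | hinv a ha =>
    intro y
    rw [eq_inv_mul_iff_mul_eq, ← ha, map_inv, ← Equiv.Perm.mul_apply, mul_inv_cancel,
      Equiv.Perm.one_apply]

theorem emb_finiteIndex (h01 : i₁ ≠ i₀) : (emb (v := v) hk i₀ i₁ E D).range.FiniteIndex := by
  have hs : Function.Surjective (fun x : Pt k =>
      (rep v hk i₀ i₁ D x : 𝔾 ⧸ (emb (v := v) hk i₀ i₁ E D).range)) := by
    intro g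
    induction g using QuotientGroup.induction_on with | H g =>
    have h := dev_act hk i₀ i₁ E D h01 g (x₀, 1)
    simp only [dev, rep_base, map_one, mul_one] at h
    refine ⟨(act hk i₀ i₁ E D g (x₀, 1)).1, ?_⟩
    rw [QuotientGroup.eq]
    exact ⟨(act hk i₀ i₁ E D g (x₀, 1)).2, eq_inv_mul_iff_mul_eq.2 h⟩
  have := Finite.of_surjective _ hs
  exact Subgroup.finiteIndex_of_finite_quotient

/-! ### Injectivity -/

theorem act_pv (i : Fin l) : act hk i₀ i₁ E D (pv v i) = pivotPerm v hk i₀ i₁ E D i :=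
  raagLift_of _ _ _ _

theorem act_pv_pow (i : Fin l) (x : Pt k) (b : 𝔸) :
    act hk i₀ i₁ E D (pv v i ^ (D i).n x) (mark i (cyc hk i x), b)
      = (x, (edgeLabel v hk i₀ i₁ E i x)⁻¹ * b) := by
  rw [map_pow, act_pv]
  exact (D i).cov_pow _ _ (edgeLabel_mark hk i₀ i₁ E i) x b

/-- Labels are trivial along the spanning tree, so `rep x` moves the base point to `x` without
changing the second coordinate. -/
theorem act_rep (h01 : i₁ ≠ i₀) (x : Pt k) (b : 𝔸) :
    act hk i₀ i₁ E D (rep v hk i₀ i₁ D x) (x₀, b) = (x, b) := by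
  have h0 : ∀ x : Pt k, (x.1 ≠ i₀ ∨ x = x₀) → ∀ b : 𝔸,
      act hk i₀ i₁ E D (pv v i₀ ^ (D i₀).n x) (x₀, b) = (x, b) := by
    intro x hx b
    have hc : cyc hk i₀ x = ⟨0, hk i₀⟩ := by
      rcases hx with h | rfl
      · exact cyc_ne _ _ _ h
      · exact cyc_self _ _ _
    have h := act_pv_pow hk i₀ i₁ E D i₀ x b
    rw [hc, edgeLabel_tree _ _ _ _ _ _ (Or.inr (Or.inl rfl))] at h
    simpa using h
  unfold rep
  split_ifs with h
  · rw [map_mul, Equiv.Perm.mul_apply, h0 _ (Or.inl h01)]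
    have h' := act_pv_pow hk i₀ i₁ E D i₁ x b
    rw [cyc_ne _ _ _ (by rw [h.1]; exact h01.symm),
      edgeLabel_tree _ _ _ _ _ _ (Or.inr (Or.inr ⟨rfl, h⟩))] at h'
    simpa using h'
  · refine h0 _ ?_ _
    by_cases hx : x.1 = i₀
    · exact Or.inr (by_contra fun h' => h ⟨hx, h'⟩)
    · exact Or.inl hx

theorem act_rep_inv (h01 : i₁ ≠ i₀) (x : Pt k) (b : 𝔸) :
    act hk i₀ i₁ E D (rep v hk i₀ i₁ D x)⁻¹ (x, b) = (x₀, b) := by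
  rw [map_inv, Equiv.Perm.inv_eq_iff_eq, act_rep _ _ _ _ _ h01]

/-- The subgroup `G(S)` acts over the base point by left multiplication. -/
theorem act_emb (h01 : i₁ ≠ i₀) (a : 𝔸) :
    ∀ b, act hk i₀ i₁ E D (emb hk i₀ i₁ E D a) (x₀, b) = (x₀, a * b) := by
  induction a using raag_induction with
  | hof u =>
    intro b
    rw [emb, raagLift_of]
    match u with
    | .center => rw [act, embGen, raagLift_of]; rfl
    | .hair h =>
      obtain ⟨⟨⟨i, x⟩, hx⟩, rfl⟩ := E.surjective h
      have h1 : (act hk i₀ i₁ E D (pv v i ^ (D i).n x)⁻¹) (x, b)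
          = (mark i (cyc hk i x), edgeLabel v hk i₀ i₁ E i x * b) := by
        rw [map_inv, Equiv.Perm.inv_eq_iff_eq, act_pv_pow, inv_mul_cancel_left]
      rw [embGen, Equiv.symm_apply_apply, loop, map_mul, map_mul, Equiv.Perm.mul_apply,
        Equiv.Perm.mul_apply, act_rep _ _ _ _ _ h01, h1, act_rep_inv _ _ _ _ _ h01, edgeLabel,
        dif_neg hx]
    | .pivot i j =>
      rw [embGen, map_mul, map_mul, Equiv.Perm.mul_apply, Equiv.Perm.mul_apply,
        act_rep _ _ _ _ _ h01, map_pow, act_pv, pivotPerm,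
        (D i).cov_pow_len (cyc_self hk i) _ _ (edgeLabel_mark hk i₀ i₁ E i),
        act_rep_inv _ _ _ _ _ h01]
    | .leaf i j e =>
      have h1 : act hk i₀ i₁ E D (raagOf _ (.leaf i 0 e)) (mark i j, b)
          = (mark i j, raagOf _ (.leaf i j e) * b) := by
        rw [act, raagLift_of, actGen, twist_apply, edgeLabel_mark, mark, cyc_self]
        simp
      rw [embGen, map_mul, map_mul, Equiv.Perm.mul_apply, Equiv.Perm.mul_apply,
        act_rep _ _ _ _ _ h01, h1, act_rep_inv _ _ _ _ _ h01]
  | hone => simp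
  | hmul a b ha hb => intro y; rw [map_mul, map_mul, Equiv.Perm.mul_apply, hb, ha, mul_assoc]
  | hinv a ha =>
    intro b
    rw [map_inv, map_inv, Equiv.Perm.inv_eq_iff_eq, ha, mul_inv_cancel_left]

theorem emb_injective (h01 : i₁ ≠ i₀) :
    Function.Injective (emb (v := v) hk i₀ i₁ E D) := by
  intro a a' h
  have h1 := act_emb hk i₀ i₁ E D h01 a 1
  rw [h, act_emb hk i₀ i₁ E D h01 a' 1] at h1
  simpa using (congrArg Prod.snd h1).symm

end Construction

theorem stmt7 (l : ℕ) (hl : 2 ≤ l) (v : Fin l → ℕ)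
    (hv : StrictMono v) (hvpos : ∀ i, 0 < v i)
    (k : Fin l → ℕ) (hkpos : ∀ i, 0 < k i) :
    ∃ (q : ℕ) (H : Subgroup (RAAG (t4Graph l v (fun _ => 1) 0))),
      H.FiniteIndex ∧ Nonempty (↥H ≃* RAAG (t4Graph l v k q)) ∧
      GroupsCommensurable (RAAG (t4Graph l v k q))
        (RAAG (t4Graph l v (fun _ => 1) 0)) := by
  let i₀ : Fin l := ⟨0, by omega⟩
  let i₁ : Fin l := ⟨1, by omega⟩
  have h01 : i₁ ≠ i₀ := by simp [i₀, i₁]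
  obtain ⟨q, ⟨E⟩⟩ := Finite.exists_equiv_fin (HairIdx i₀ i₁ (mark i₀ ⟨0, hkpos i₀⟩))
  have D : ∀ i, CycData (cyc hkpos i) (mark i) := fun i =>
    (exists_cycData _ _ (cyc_self hkpos i)).some
  let φ := emb (v := v) hkpos i₀ i₁ E D
  have e := MonoidHom.ofInjective (emb_injective (v := v) hkpos i₀ i₁ E D h01)
  have hfi := emb_finiteIndex (v := v) hkpos i₀ i₁ E D h01
  exact ⟨q, φ.range, hfi, ⟨e.symm⟩, ⊤, φ.range, inferInstance, hfi,
    ⟨Subgroup.topEquiv.trans e⟩⟩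
end
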